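/- Let k ≥ 4 and let G be a graph such that ρ_{k,G}(S) > k(k−3) for every nonempty S ⊆ V(G). Then G is (k−1)-colorable. -/

import Mathlib

open SimpleGraph

section Defs

variable {V : Type*}

instance instDecidableInduceAdj (G : SimpleGraph V) [DecidableRel G.Adj] (s : Set V) :
    DecidableRel (G.induce s).Adj := fun a b => ‹DecidableRel G.Adj› a.1 b.1

instance instDecidableDeleteEdgeAdj [DecidableEq V] (G : SimpleGraph V) [DecidableRel G.Adj]
    (e : Sym2 V) : DecidableRel (G.deleteEdges {e}).Adj := fun a b =>
  decidable_of_iff (G.Adj a b ∧ ¬s(a, b) = e) (by simp)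

/-- The `k`-potential of a vertex subset `R` of a graph `G`:
`ρ_{k,G}(R) = (k+1)(k-2)|R| - 2(k-1)|E(G[R])|`, where `G[R]` is the induced subgraph. -/
def potential (k : ℕ) (G : SimpleGraph V) [Fintype V] [DecidableEq V] [DecidableRel G.Adj]
    (R : Finset V) : ℤ :=
  ((k : ℤ) + 1) * ((k : ℤ) - 2) * R.card
    - 2 * ((k : ℤ) - 1) * ((G.induce (R : Set V)).edgeFinset.card)

/-- A graph is `k`-critical if its chromatic number is `k` and every proper subgraph is
`(k-1)`-colorable. -/
def IsKCritical (k : ℕ) (G : SimpleGraph V) : Prop :=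
  G.chromaticNumber = k ∧ ∀ H : SimpleGraph V, H < G → H.Colorable (k - 1)

/-- The graph underlying the DHGO-composition: delete the edge `xy` from `G₁`, split the vertex
`z` of `G₂` into two vertices, identify `x` with the half of `z` joined to the neighbors of `z`
lying in `P` and identify `y` with the half joined to the remaining neighbors of `z`. -/
def dhgoGraph {V₁ V₂ : Type*} (G₁ : SimpleGraph V₁) (G₂ : SimpleGraph V₂)
    (x y : V₁) (z : V₂) (P : Set V₂) :
    SimpleGraph (V₁ ⊕ {w : V₂ // w ≠ z}) :=
  SimpleGraph.fromRel (fun a b =>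
    match a, b with
    | Sum.inl a, Sum.inl b => G₁.Adj a b ∧ s(a, b) ≠ s(x, y)
    | Sum.inl a, Sum.inr b => (a = x ∧ (b : V₂) ∈ P) ∨ (a = y ∧ (b : V₂) ∈ G₂.neighborSet z \ P)
    | Sum.inr a, Sum.inr b => G₂.Adj a b
    | _, _ => False)

/-- `G` is a DHGO-composition of `G₁` and `G₂`: some edge `xy` of `G₁` is deleted, some vertex
`z` of `G₂` is split into two vertices of positive degree (its neighborhood is partitioned into
two nonempty parts `P` and `N(z) \ P`), and `x`, `y` are identified with the two halves of `z`. -/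
def IsDHGO {V₁ V₂ U : Type*} (G : SimpleGraph U) (G₁ : SimpleGraph V₁) (G₂ : SimpleGraph V₂) :
    Prop :=
  ∃ (x y : V₁) (z : V₂) (P : Set V₂),
    G₁.Adj x y ∧ P ⊆ G₂.neighborSet z ∧ P.Nonempty ∧ (G₂.neighborSet z \ P).Nonempty ∧
    Nonempty (G ≃g dhgoGraph G₁ G₂ x y z P)

/-- `k`-Ore graphs on the canonical finite vertex types `Fin n`: graphs obtained from copies of
`K_k` by a sequence of DHGO-compositions. -/
inductive IsOreFin (k : ℕ) : ∀ {n : ℕ}, SimpleGraph (Fin n) → Prop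
  | complete {n : ℕ} {G : SimpleGraph (Fin n)}
      (h : Nonempty (G ≃g (⊤ : SimpleGraph (Fin k)))) : IsOreFin k G
  | comp {n₁ n₂ n : ℕ} {G₁ : SimpleGraph (Fin n₁)} {G₂ : SimpleGraph (Fin n₂)}
      {G : SimpleGraph (Fin n)} (h₁ : IsOreFin k G₁) (h₂ : IsOreFin k G₂)
      (h : IsDHGO G G₁ G₂) : IsOreFin k G

/-- A graph is a `k`-Ore graph if it is obtained from copies of `K_k` by a sequence of
DHGO-compositions. -/
def IsKOre (k : ℕ) {V : Type*} (G : SimpleGraph V) : Prop :=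
  ∃ (n : ℕ) (H : SimpleGraph (Fin n)), IsOreFin k H ∧ Nonempty (G ≃g H)

/-- `y_k = max {2k - 6, k² - 5k + 2}`. -/
def yk (k : ℕ) : ℤ := max (2 * (k : ℤ) - 6) ((k : ℤ) ^ 2 - 5 * (k : ℤ) + 2)

/-- A `k`-critical graph is `k`-extremal if `2(k-1)|E(G)| = (k+1)(k-2)|V(G)| - k(k-3)`. -/
def IsKExtremal (k : ℕ) {V : Type*} [Fintype V] [DecidableEq V] (G : SimpleGraph V)
    [DecidableRel G.Adj] : Prop :=
  IsKCritical k G ∧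
    2 * ((k : ℤ) - 1) * G.edgeFinset.card =
      ((k : ℤ) + 1) * ((k : ℤ) - 2) * Fintype.card V - (k : ℤ) * ((k : ℤ) - 3)

/-- A graph is 3-connected if it has more than 3 vertices and deleting any set of at most 2
vertices leaves it connected. -/
def IsThreeConnected {V : Type*} [Fintype V] (G : SimpleGraph V) : Prop :=
  3 < Fintype.card V ∧ ∀ s : Set V, s.ncard ≤ 2 → (G.induce sᶜ).Connected

/-- `Q` is a `k`-quasi-`xy`-vertex: `G[Q]` is `(k-1)`-colorable, every proper `(k-1)`-coloring
of `G[Q]` gives `x` and `y` the same color, and for every edge `e` of `G[Q]` the graph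
`G[Q] - e` has a proper `(k-1)`-coloring giving `x` and `y` different colors. -/
def IsQuasiVertex (k : ℕ) {V : Type*} [DecidableEq V] (G : SimpleGraph V) (x y : V)
    (Q : Set V) : Prop :=
  ∃ (hx : x ∈ Q) (hy : y ∈ Q),
    (G.induce Q).Colorable (k - 1) ∧
    (∀ C : (G.induce Q).Coloring (Fin (k - 1)), C ⟨x, hx⟩ = C ⟨y, hy⟩) ∧
    (∀ a b : Q, (G.induce Q).Adj a b →
      ∃ C : ((G.induce Q).deleteEdges {s(a, b)}).Coloring (Fin (k - 1)),
        C ⟨x, hx⟩ ≠ C ⟨y, hy⟩)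

/-- A set `S` of vertices is standard if `ρ_{k,G}(S) = (k+1)(k-2)`, `G` has a separating set
`{x,y} ⊆ S` such that `S - {x,y}` induces a component of `G - {x,y}`, and `S` is a
`k`-quasi-`xy`-vertex. -/
def IsStandardSet (k : ℕ) {V : Type*} [Fintype V] [DecidableEq V] (G : SimpleGraph V)
    [DecidableRel G.Adj] (S : Finset V) : Prop :=
  potential k G S = ((k : ℤ) + 1) * ((k : ℤ) - 2) ∧
  ∃ x y : V, x ≠ y ∧ x ∈ S ∧ y ∈ S ∧
    ¬(G.induce ({x, y}ᶜ : Set V)).Connected ∧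
    (G.induce ((S : Set V) \ {x, y})).Connected ∧
    (∀ a ∈ (S : Set V) \ {x, y}, ∀ b : V, G.Adj a b → b ∈ (S : Set V) ∪ {x, y}) ∧
    IsQuasiVertex k G x y (S : Set V)

end Defs

section KYmain

open SimpleGraph

set_option linter.unusedSectionVars false
set_option linter.unusedVariables false
set_option linter.style.longLine false
namespace KY
open scoped Classical
open Finset

variable {V : Type*} [Fintype V]

/-- adjacency indicator -/
noncomputable def aI (G : SimpleGraph V) (u v : V) : ℤ := if G.Adj u v then 1 else 0

noncomputable def ee (G : SimpleGraph V) (S T : Finset V) : ℤ := ∑ u ∈ S, ∑ v ∈ T, aI G u v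

noncomputable def rho (k : ℕ) (G : SimpleGraph V) (S : Finset V) : ℤ :=
  ((k : ℤ) + 1) * ((k : ℤ) - 2) * (S.card : ℤ) - ((k : ℤ) - 1) * ee G S S

noncomputable def nb (G : SimpleGraph V) (U : Finset V) (v : V) : Finset V := U.filter (G.Adj v)

noncomputable def dg (G : SimpleGraph V) (U : Finset V) (v : V) : ℕ := (nb G U v).card

def Col (k : ℕ) (G : SimpleGraph V) (U : Finset V) : Prop :=
  ∃ c : V → Fin (k - 1), ∀ u ∈ U, ∀ v ∈ U, G.Adj u v → c u ≠ c v

def Good (k : ℕ) (G : SimpleGraph V) (U : Finset V) : Prop :=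
  ∀ S ⊆ U, S.Nonempty → (k : ℤ) * ((k : ℤ) - 3) < rho k G S

noncomputable def cl (G : SimpleGraph V) (U : Finset V) (v : V) : Finset V :=
  U.filter (fun u => insert u (nb G U u) = insert v (nb G U v))

noncomputable def tw (G : SimpleGraph V) (U : Finset V) : ℕ :=
  ∑ u ∈ U, (cl G U u).card

/-- pairwise adjacent finset -/
def Clq (G : SimpleGraph V) (S : Finset V) : Prop := ∀ u ∈ S, ∀ v ∈ S, u ≠ v → G.Adj u v

lemma aI_nonneg (G : SimpleGraph V) (u v : V) : 0 ≤ aI G u v := by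
  unfold aI; split_ifs <;> norm_num
lemma aI_le (G : SimpleGraph V) (u v : V) : aI G u v ≤ 1 := by
  unfold aI; split_ifs <;> norm_num
lemma aI_comm (G : SimpleGraph V) (u v : V) : aI G u v = aI G v u := by
  unfold aI; simp [G.adj_comm]
lemma aI_self (G : SimpleGraph V) (u : V) : aI G u u = 0 := by
  unfold aI; simp

lemma ee_comm (G : SimpleGraph V) (S T : Finset V) : ee G S T = ee G T S := by
  unfold ee; rw [Finset.sum_comm]; simp only [aI_comm]

lemma ee_nonneg (G : SimpleGraph V) (S T : Finset V) : 0 ≤ ee G S T :=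
  Finset.sum_nonneg fun _ _ => Finset.sum_nonneg fun _ _ => aI_nonneg _ _ _

lemma ee_union_left (G : SimpleGraph V) {S S' : Finset V} (T : Finset V) (h : Disjoint S S') :
    ee G (S ∪ S') T = ee G S T + ee G S' T := by
  unfold ee; rw [Finset.sum_union h]

lemma ee_union_right (G : SimpleGraph V) {S S' : Finset V} (T : Finset V) (h : Disjoint S S') :
    ee G T (S ∪ S') = ee G T S + ee G T S' := by
  rw [ee_comm, ee_union_left G T h, ee_comm G S, ee_comm G S']

lemma ee_mono (G : SimpleGraph V) {S S' T T' : Finset V} (h : S ⊆ S') (h' : T ⊆ T') :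
    ee G S T ≤ ee G S' T' := by
  unfold ee
  calc _ ≤ ∑ u ∈ S, ∑ v ∈ T', aI G u v := Finset.sum_le_sum fun u _ =>
        Finset.sum_le_sum_of_subset_of_nonneg h' fun _ _ _ => aI_nonneg _ _ _
    _ ≤ _ := Finset.sum_le_sum_of_subset_of_nonneg h fun _ _ _ =>
        Finset.sum_nonneg fun _ _ => aI_nonneg _ _ _

lemma ee_single_left (G : SimpleGraph V) (v : V) (T : Finset V) :
    ee G {v} T = ((nb G T v).card : ℤ) := by
  unfold ee nb aI; simp

lemma ee_eq_sum (G : SimpleGraph V) (S T : Finset V) :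
    ee G S T = ∑ v ∈ S, ((nb G T v).card : ℤ) := by
  unfold ee nb aI; simp

lemma ee_congr {G G' : SimpleGraph V} {S T : Finset V}
    (h : ∀ u ∈ S, ∀ v ∈ T, (G.Adj u v ↔ G'.Adj u v)) : ee G S T = ee G' S T := by
  unfold ee aI
  refine Finset.sum_congr rfl fun u hu => Finset.sum_congr rfl fun v hv => ?_
  simp [h u hu v hv]

lemma ee_le_graph {G G' : SimpleGraph V} {S T : Finset V}
    (h : ∀ u ∈ S, ∀ v ∈ T, (G.Adj u v → G'.Adj u v)) : ee G S T ≤ ee G' S T := by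
  unfold ee aI
  refine Finset.sum_le_sum fun u hu => Finset.sum_le_sum fun v hv => ?_
  by_cases h1 : G.Adj u v
  · simp [h1, h u hu v hv h1]
  · simp only [h1, if_false]; split_ifs <;> norm_num

lemma ee_empty_left (G : SimpleGraph V) (T : Finset V) : ee G ∅ T = 0 := by simp [ee]

lemma rho_union (k : ℕ) (G : SimpleGraph V) {S T : Finset V} (h : Disjoint S T) :
    rho k G (S ∪ T) = rho k G S + rho k G T - 2 * ((k : ℤ) - 1) * ee G S T := by
  unfold rho
  rw [Finset.card_union_of_disjoint h, ee_union_left G _ h, ee_union_right G _ h,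
    ee_union_right G _ h, ee_comm G T S]
  push_cast; ring

lemma rho_single (k : ℕ) (G : SimpleGraph V) (v : V) :
    rho k G {v} = ((k : ℤ) + 1) * ((k : ℤ) - 2) := by
  unfold rho ee; simp [aI_self]

lemma rho_empty (k : ℕ) (G : SimpleGraph V) : rho k G ∅ = 0 := by
  unfold rho ee; simp

lemma rho_congr (k : ℕ) {G G' : SimpleGraph V} {S : Finset V}
    (h : ∀ u ∈ S, ∀ v ∈ S, (G.Adj u v ↔ G'.Adj u v)) : rho k G S = rho k G' S := by
  unfold rho; rw [ee_congr h]

lemma rho_insert (k : ℕ) (G : SimpleGraph V) {S : Finset V} {v : V} (h : v ∉ S) :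
    rho k G (insert v S) = rho k G S + ((k : ℤ) + 1) * ((k : ℤ) - 2)
      - 2 * ((k : ℤ) - 1) * (nb G S v).card := by
  have : Disjoint {v} S := by simpa using h
  rw [Finset.insert_eq, rho_union k G this, rho_single, ee_single_left]; ring

lemma rho_submod (k : ℕ) (hk : 4 ≤ k) (G : SimpleGraph V) (S T : Finset V) :
    rho k G (S ∪ T) + rho k G (S ∩ T) ≤ rho k G S + rho k G T := by
  have h1 : S ∪ T = S ∪ (T \ S) := by simp
  have h2 : T = (S ∩ T) ∪ (T \ S) := by
    ext x; simp only [mem_union, mem_inter, mem_sdiff]; tauto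
  have d1 : Disjoint S (T \ S) := Finset.disjoint_sdiff
  have d2 : Disjoint (S ∩ T) (T \ S) := d1.mono_left Finset.inter_subset_left
  have e1 := rho_union k G d1
  have e2 := rho_union k G d2
  rw [← h1] at e1
  rw [← h2] at e2
  have := ee_mono G (Finset.inter_subset_left : S ∩ T ⊆ S) (Finset.Subset.refl (T \ S))
  have hk' : (4 : ℤ) ≤ k := by exact_mod_cast hk
  nlinarith

lemma nb_card_le_self (G : SimpleGraph V) {S : Finset V} {v : V} (hv : v ∈ S) :
    (nb G S v).card ≤ S.card - 1 := by
  rw [← Finset.card_erase_of_mem hv]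
  apply Finset.card_le_card
  intro u hu
  simp only [nb, mem_filter] at hu
  simp only [mem_erase]
  exact ⟨hu.2.ne', hu.1⟩

lemma ee_self_le (G : SimpleGraph V) (S : Finset V) :
    ee G S S ≤ (S.card : ℤ) * ((S.card : ℤ) - 1) := by
  rw [ee_eq_sum]
  calc _ ≤ ∑ v ∈ S, ((S.card : ℤ) - 1) := by
        refine Finset.sum_le_sum fun v hv => ?_
        have := nb_card_le_self G hv
        have : 0 < S.card := Finset.card_pos.2 ⟨v, hv⟩
        omega
    _ = _ := by simp; ring

lemma ee_clq {G : SimpleGraph V} {S : Finset V} (h : Clq G S) :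
    ee G S S = (S.card : ℤ) * ((S.card : ℤ) - 1) := by
  rw [ee_eq_sum]
  calc _ = ∑ v ∈ S, ((S.card : ℤ) - 1) := by
        refine Finset.sum_congr rfl fun v hv => ?_
        have : nb G S v = S.erase v := by
          ext u; simp only [nb, mem_filter, mem_erase]
          constructor
          · rintro ⟨a, b⟩; exact ⟨b.ne', a⟩
          · rintro ⟨a, b⟩; exact ⟨b, h v hv u b (Ne.symm a)⟩
        rw [this, Finset.card_erase_of_mem hv]
        have : 0 < S.card := Finset.card_pos.2 ⟨v, hv⟩
        omega
    _ = _ := by simp; ring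

lemma clq_of_ee {G : SimpleGraph V} {S : Finset V}
    (h : (S.card : ℤ) * ((S.card : ℤ) - 1) ≤ ee G S S) : Clq G S := by
  intro u hu v hv huv
  by_contra hn
  have : ee G S S < ∑ v ∈ S, ((S.card : ℤ) - 1) := by
    rw [ee_eq_sum]
    refine Finset.sum_lt_sum (fun v hv => ?_) ⟨u, hu, ?_⟩
    · have := nb_card_le_self G hv
      have : 0 < S.card := Finset.card_pos.2 ⟨v, hv⟩
      omega
    · have : nb G S u ⊆ (S.erase u).erase v := by
        intro x hx
        simp only [nb, mem_filter] at hx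
        simp only [mem_erase]
        refine ⟨?_, hx.2.ne', hx.1⟩
        rintro rfl; exact hn hx.2
      have h1 := Finset.card_le_card this
      rw [Finset.card_erase_of_mem (by simp [hv, Ne.symm huv]), Finset.card_erase_of_mem hu] at h1
      have : 1 < S.card := Finset.one_lt_card.2 ⟨u, hu, v, hv, huv⟩
      omega
  simp at this
  linarith

lemma rho_clq (k : ℕ) {G : SimpleGraph V} {S : Finset V} (h : Clq G S) :
    rho k G S = (S.card : ℤ) * (((k : ℤ) + 1) * ((k : ℤ) - 2) - ((k : ℤ) - 1) * ((S.card : ℤ) - 1)) := by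
  unfold rho; rw [ee_clq h]; ring

lemma rho_ge_card (k : ℕ) (hk : 4 ≤ k) (G : SimpleGraph V) (S : Finset V) :
    (S.card : ℤ) * (((k : ℤ) + 1) * ((k : ℤ) - 2) - ((k : ℤ) - 1) * ((S.card : ℤ) - 1)) ≤ rho k G S := by
  unfold rho
  have := ee_self_le G S
  have hk' : (4 : ℤ) ≤ k := by exact_mod_cast hk
  nlinarith

/-- small sets -/
lemma rho_small (k : ℕ) (hk : 4 ≤ k) (G : SimpleGraph V) (S : Finset V) (h2 : 2 ≤ S.card)
    (h3 : S.card ≤ k - 1) : 2 * ((k : ℤ) - 1) * ((k : ℤ) - 2) ≤ rho k G S := by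
  have h := rho_ge_card k hk G S
  have hk' : (4 : ℤ) ≤ k := by exact_mod_cast hk
  have h2' : (2 : ℤ) ≤ S.card := by exact_mod_cast h2
  have h3' : (S.card : ℤ) ≤ k - 1 := by omega
  have : 0 ≤ ((k : ℤ) - 1 - S.card) * (((k : ℤ) - 1) * S.card - 2 * ((k : ℤ) - 2)) := by
    apply mul_nonneg <;> nlinarith
  nlinarith

lemma rho_small_eq (k : ℕ) (hk : 4 ≤ k) (G : SimpleGraph V) (S : Finset V) (h2 : 2 ≤ S.card)
    (h3 : S.card ≤ k - 1) (h4 : rho k G S ≤ 2 * ((k : ℤ) - 1) * ((k : ℤ) - 2)) :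
    S.card = k - 1 ∧ Clq G S := by
  have h := rho_ge_card k hk G S
  have hk' : (4 : ℤ) ≤ k := by exact_mod_cast hk
  have h2' : (2 : ℤ) ≤ S.card := by exact_mod_cast h2
  have h3' : (S.card : ℤ) ≤ k - 1 := by omega
  have hc : S.card = k - 1 := by
    by_contra hne
    have : (S.card : ℤ) < k - 1 := by omega
    have : 0 < ((k : ℤ) - 1 - S.card) * (((k : ℤ) - 1) * S.card - 2 * ((k : ℤ) - 2)) := by
      apply mul_pos <;> nlinarith
    nlinarith
  refine ⟨hc, clq_of_ee ?_⟩
  have hc' : (S.card : ℤ) = k - 1 := by omega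
  unfold rho at h4
  rw [hc'] at h4 ⊢
  nlinarith

structure MinCE (k : ℕ) (G : SimpleGraph V) (U : Finset V) : Prop where
  hk : 4 ≤ k
  good : Good k G U
  ncol : ¬ Col k G U
  ih1 : ∀ (G' : SimpleGraph V) (U' : Finset V), U'.card < U.card → ¬ Col k G' U' →
    ∃ W ⊆ U', W.Nonempty ∧ rho k G' W ≤ (k : ℤ) * ((k : ℤ) - 3)
  ih2 : ∀ (G' : SimpleGraph V), (ee G' U U < ee G U U ∨ (ee G' U U = ee G U U ∧ tw G U < tw G' U)) →
    ¬ Col k G' U → ∃ W ⊆ U, W.Nonempty ∧ rho k G' W ≤ (k : ℤ) * ((k : ℤ) - 3)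

lemma not_good {k : ℕ} {G : SimpleGraph V} {U : Finset V} (h : ¬ Good k G U) :
    ∃ W ⊆ U, W.Nonempty ∧ rho k G W ≤ (k : ℤ) * ((k : ℤ) - 3) := by
  unfold Good at h; push Not at h; exact h

lemma tw_le (G : SimpleGraph V) (U : Finset V) : tw G U ≤ Fintype.card V * Fintype.card V := by
  unfold tw
  calc _ ≤ ∑ u ∈ U, Fintype.card V := Finset.sum_le_sum fun u _ => Finset.card_le_univ _
    _ = U.card * Fintype.card V := by simp
    _ ≤ _ := Nat.mul_le_mul_right _ (Finset.card_le_univ _)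

lemma exists_minCE (k : ℕ) (hk : 4 ≤ k) (G : SimpleGraph V) (U : Finset V) (hg : Good k G U)
    (hc : ¬ Col k G U) : ∃ (G' : SimpleGraph V) (U' : Finset V), MinCE k G' U' := by
  let μ : SimpleGraph V × Finset V → ℕ ×ₗ ℕ ×ₗ ℕ := fun p =>
    toLex (p.2.card, toLex ((ee p.1 p.2 p.2).toNat, Fintype.card V * Fintype.card V - tw p.1 p.2))
  let s : Set (SimpleGraph V × Finset V) := {p | Good k p.1 p.2 ∧ ¬ Col k p.1 p.2}
  have wf : WellFounded (fun a b : SimpleGraph V × Finset V => μ a < μ b) :=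
    InvImage.wf μ wellFounded_lt
  obtain ⟨⟨G', U'⟩, ⟨h1, h2⟩, h3⟩ := wf.has_min s ⟨(G, U), hg, hc⟩
  refine ⟨G', U', hk, h1, h2, ?_, ?_⟩
  · intro G2 U2 hlt hn
    apply not_good
    intro hgood
    refine h3 (G2, U2) ⟨hgood, hn⟩ ?_
    simp only [μ, Prod.Lex.toLex_lt_toLex]
    left; exact hlt
  · intro G2 hlt hn
    apply not_good
    intro hgood
    refine h3 (G2, U') ⟨hgood, hn⟩ ?_
    simp only [μ, Prod.Lex.toLex_lt_toLex]
    right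
    refine ⟨trivial, ?_⟩
    have a1 := ee_nonneg G2 U' U'
    have a2 := ee_nonneg G' U' U'
    have b1 := tw_le G2 U'
    rcases hlt with h | ⟨h, h'⟩
    · left; omega
    · right; constructor
      · rw [h]
      · omega

end KY


open SimpleGraph
set_option linter.unusedSectionVars false
set_option linter.unusedVariables false
set_option linter.style.longLine false
namespace KY
open scoped Classical
open Finset
variable {V : Type*} [Fintype V]

variable {k : ℕ} {G : SimpleGraph V} {U : Finset V}

lemma mem_nb {v u : V} : u ∈ nb G U v ↔ u ∈ U ∧ G.Adj v u := by simp [nb]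

lemma nb_sub (v : V) : nb G U v ⊆ U := Finset.filter_subset _ _

lemma ee_card (G : SimpleGraph V) (S T : Finset V) :
    ee G S T = (((S ×ˢ T).filter (fun p => G.Adj p.1 p.2)).card : ℤ) := by
  rw [Finset.card_filter, Finset.sum_product]
  simp [ee, aI]

lemma MinCE.kz (M : MinCE k G U) : (4 : ℤ) ≤ k := by exact_mod_cast M.hk

lemma MinCE.col (M : MinCE k G U) {R : Finset V} (h : R ⊂ U) : Col k G R := by
  by_contra hn
  obtain ⟨W, hW, hne, hr⟩ := M.ih1 G R (Finset.card_lt_card h) hn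
  exact absurd (M.good W (hW.trans h.1) hne) (not_lt.2 hr)

lemma free_color (c : V → Fin (k - 1)) (S : Finset V) (h : S.card < k - 1) :
    ∃ a, ∀ u ∈ S, c u ≠ a := by
  have : (S.image c).card < (univ : Finset (Fin (k-1))).card := by
    rw [Finset.card_univ, Fintype.card_fin]
    exact lt_of_le_of_lt Finset.card_image_le h
  obtain ⟨a, _, ha⟩ := Finset.exists_mem_notMem_of_card_lt_card this
  refine ⟨a, fun u hu e => ha ?_⟩
  rw [← e]; exact Finset.mem_image_of_mem _ hu

lemma MinCE.ne (M : MinCE k G U) : U.Nonempty := by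
  by_contra h
  rw [Finset.not_nonempty_iff_eq_empty] at h
  apply M.ncol
  have := M.hk
  exact ⟨fun _ => ⟨0, by omega⟩, by simp [h]⟩

lemma MinCE.deg (M : MinCE k G U) {v : V} (hv : v ∈ U) : k - 1 ≤ dg G U v := by
  by_contra hlt
  push Not at hlt
  obtain ⟨c, hc⟩ := M.col (Finset.erase_ssubset hv)
  obtain ⟨a, ha⟩ := free_color c (nb G U v) hlt
  apply M.ncol
  refine ⟨fun u => if u = v then a else c u, ?_⟩
  intro x hx y hy hxy
  by_cases h1 : x = v
  · subst h1
    have : y ≠ x := hxy.ne'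
    simp only [if_true, this, if_false]
    exact (ha y (mem_nb.2 ⟨hy, hxy⟩)).symm
  · by_cases h2 : y = v
    · subst h2
      simp only [if_true, h1, if_false]
      exact (ha x (mem_nb.2 ⟨hx, hxy.symm⟩))
    · simp only [h1, h2, if_false]
      exact hc x (by simp [h1, hx]) y (by simp [h2, hy]) hxy

lemma MinCE.cut (M : MinCE k G U) {R : Finset V} (h : R ⊂ U) (hne : R.Nonempty) :
    (k : ℤ) - 1 ≤ ee G R (U \ R) := by
  obtain ⟨c1, h1⟩ := M.col h
  have hs : U \ R ⊂ U := by
    refine Finset.ssubset_iff_subset_ne.2 ⟨Finset.sdiff_subset, fun e => ?_⟩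
    obtain ⟨x, hx⟩ := hne
    have : x ∈ U \ R := by rw [e]; exact h.1 hx
    exact (Finset.mem_sdiff.1 this).2 hx
  obtain ⟨c2, h2⟩ := M.col hs
  have hk := M.hk
  have : NeZero (k - 1) := ⟨by omega⟩
  have key : ∀ a : Fin (k - 1), ∃ p : V × V, (p ∈ (R ×ˢ (U \ R)).filter (fun p => G.Adj p.1 p.2)) ∧
      c1 p.1 + a = c2 p.2 := by
    intro a
    by_contra hno
    apply M.ncol
    refine ⟨fun u => if u ∈ R then c1 u + a else c2 u, ?_⟩
    intro x hx y hy hxy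
    by_cases hx' : x ∈ R <;> by_cases hy' : y ∈ R <;> simp only [hx', hy', if_true, if_false]
    · intro e; exact h1 x hx' y hy' hxy (by simpa using e)
    · intro e; exact hno ⟨(x, y), by simp [hx', hy', hy, hxy], e⟩
    · intro e; exact hno ⟨(y, x), by simp [hx', hy', hx, hxy.symm], e.symm⟩
    · exact h2 x (by simp [hx, hx']) y (by simp [hy, hy']) hxy
  choose f hf1 hf2 using key
  have hinj : Function.Injective f := by
    intro a b e
    have e1 := hf2 a
    have e2 := hf2 b
    rw [e, ← e2] at e1
    simpa using e1
  rw [ee_card]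
  have := Finset.card_le_card_of_injOn f (s := univ) (fun a _ => hf1 a) hinj.injOn
  rw [Finset.card_univ, Fintype.card_fin] at this
  omega

/-- ownership enumeration -/
lemma own [Nonempty V] (R : Finset V) (w : V → ℕ) : ∃ o : ℕ → V, (∀ t < ∑ u ∈ R, w u, o t ∈ R) ∧
    (∀ v, ((range (∑ u ∈ R, w u)).filter (fun t => o t = v)).card ≤ w v) ∧
    ∀ t t', t ≤ t' → t' < ∑ u ∈ R, w u → o t = o t' → t' - t < w (o t) := by
  induction R using Finset.induction_on with
  | empty => exact ⟨fun _ => Classical.arbitrary V, by simp⟩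
  | insert u R hu ih =>
    obtain ⟨o, h1, h3, h2⟩ := ih
    rw [Finset.sum_insert hu]
    refine ⟨fun t => if t < ∑ u ∈ R, w u then o t else u, ?_, ?_, ?_⟩
    · intro t ht
      by_cases h : t < ∑ u ∈ R, w u
      · simp [h, h1 t h]
      · simp [h]
    · intro v
      by_cases hv : v = u
      · subst hv
        have : (range (w v + ∑ u ∈ R, w u)).filter
            (fun t => (if t < ∑ u ∈ R, w u then o t else v) = v) ⊆
            Ico (∑ u ∈ R, w u) (w v + ∑ u ∈ R, w u) := by
          intro t ht
          simp only [mem_filter, mem_range] at ht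
          simp only [mem_Ico]
          refine ⟨?_, ht.1⟩
          by_contra hlt
          push Not at hlt
          rw [if_pos hlt] at ht
          exact hu (ht.2 ▸ h1 t hlt)
        refine (card_le_card this).trans ?_
        simp
      · refine le_trans (card_le_card ?_) (h3 v)
        intro t ht
        simp only [mem_filter, mem_range] at ht ⊢
        by_cases h : t < ∑ u ∈ R, w u
        · rw [if_pos h] at ht; exact ⟨h, ht.2⟩
        · rw [if_neg h] at ht; exact absurd ht.2.symm hv
    · intro t t' htt ht' e
      by_cases h : t' < ∑ u ∈ R, w u
      · have h' : t < ∑ u ∈ R, w u := by omega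
        simp only [h, h', if_true] at e ⊢
        exact h2 t t' htt h e
      · by_cases h' : t < ∑ u ∈ R, w u
        · simp only [h, h', if_true, if_false] at e
          exact absurd (e ▸ h1 t h') hu
        · simp only [h', if_false]
          omega

lemma lemH [Nonempty V] (R : Finset V) (w : V → ℕ) (i : ℕ) (h : 2 * i ≤ ∑ u ∈ R, w u) :
    ∃ E : Finset (V × V), E.card ≤ i ∧ (∀ p ∈ E, p.1 ∈ R ∧ p.2 ∈ R ∧ p.1 ≠ p.2) ∧
      ∀ M ⊆ R, (∀ p ∈ E, ¬ (p.1 ∈ M ∧ p.2 ∈ M)) → i ≤ ∑ u ∈ R \ M, w u ∨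
        ∀ a ∈ M, ∀ b ∈ M, 0 < w a → 0 < w b → a = b := by
  by_cases hb : ∃ u0 ∈ R, i ≤ w u0
  · obtain ⟨u0, hu0, hw⟩ := hb
    set P := (R.erase u0).filter (fun u => 0 < w u) with hP
    obtain ⟨P', hP', hc⟩ := Finset.exists_subset_card_eq (s := P) (n := min i P.card) (min_le_right _ _)
    have hmem : ∀ u ∈ P', u ≠ u0 ∧ u ∈ R ∧ 0 < w u := by
      intro u hu
      have := hP' hu
      simp only [hP, mem_filter, mem_erase] at this
      tauto
    refine ⟨P'.image (fun u => (u0, u)), ?_, ?_, ?_⟩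
    · exact card_image_le.trans (by omega)
    · intro p hp
      obtain ⟨u, hu, rfl⟩ := mem_image.1 hp
      have := hmem u hu
      exact ⟨hu0, this.2.1, this.1.symm⟩
    · intro M hM hE
      by_cases h0 : u0 ∈ M
      · have hd : ∀ u ∈ P', u ∉ M := fun u hu hm => hE (u0, u) (mem_image_of_mem _ hu) ⟨h0, hm⟩
        by_cases hle : P.card ≤ i
        · right
          have hPP : P' = P := Finset.eq_of_subset_of_card_le hP' (by omega)
          have : ∀ a ∈ M, 0 < w a → a = u0 := by
            intro a ha hwa
            by_contra hne
            refine hd a ?_ ha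
            rw [hPP]; simp [hP, hne, hM ha, hwa]
          intro a ha b hb' h1 h2
          rw [this a ha h1, this b hb' h2]
        · left
          calc i = ∑ u ∈ P', 1 := by simp [hc]; omega
            _ ≤ ∑ u ∈ P', w u := Finset.sum_le_sum fun u hu => (hmem u hu).2.2
            _ ≤ _ := Finset.sum_le_sum_of_subset fun u hu => by
              simp [hd u hu, (hmem u hu).2.1]
      · left
        exact hw.trans (Finset.single_le_sum (f := w) (fun _ _ => Nat.zero_le _) (by simp [hu0, h0]))
  · push Not at hb
    obtain ⟨o, h1, h3, h2⟩ := own R w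
    refine ⟨(range i).image (fun t => (o t, o (t + i))), ?_, ?_, ?_⟩
    · exact card_image_le.trans (by simp)
    · intro p hp
      obtain ⟨t, ht, rfl⟩ := mem_image.1 hp
      rw [mem_range] at ht
      refine ⟨h1 _ (by omega), h1 _ (by omega), fun e => ?_⟩
      have := h2 t (t + i) (by omega) (by omega) e
      have := hb _ (h1 t (by omega))
      omega
    · intro M hM hE
      left
      have hE' : ∀ t < i, o t ∉ M ∨ o (t + i) ∉ M := by
        intro t ht
        have := hE (o t, o (t + i)) (mem_image.2 ⟨t, by simpa using ht, rfl⟩)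
        tauto
      calc i = (range i).card := by simp
        _ ≤ ((range (∑ u ∈ R, w u)).filter (fun t => o t ∈ R \ M)).card := by
          refine Finset.card_le_card_of_injOn (fun t => if o t ∉ M then t else t + i) ?_ ?_
          · intro t ht
            have ht : t < i := by simpa using ht
            simp only [coe_filter, mem_range, mem_sdiff, Set.mem_ofPred_eq]
            split_ifs with hm
            · exact ⟨by omega, h1 _ (by omega), (hE' t ht).resolve_left (not_not.2 hm)⟩
            · exact ⟨by omega, h1 _ (by omega), hm⟩
          · intro t ht t' ht' e
            have ht : t < i := by simpa using ht
            have ht' : t' < i := by simpa using ht'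
            dsimp only at e
            split_ifs at e <;> omega
        _ = ∑ v ∈ R \ M, ((range (∑ u ∈ R, w u)).filter (fun t => o t = v)).card := by
          rw [Finset.card_eq_sum_card_fiberwise (f := o) (t := R \ M)
            (fun t ht => mem_coe.2 (mem_filter.1 (mem_coe.1 ht)).2)]
          refine Finset.sum_congr rfl fun v hv => ?_
          congr 1
          ext t
          simp only [mem_filter]
          constructor
          · rintro ⟨⟨a, b⟩, c⟩; exact ⟨a, c⟩
          · rintro ⟨a, c⟩; exact ⟨⟨a, c ▸ hv⟩, c⟩
        _ ≤ _ := Finset.sum_le_sum fun v _ => h3 v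

end KY


open SimpleGraph
set_option linter.unusedSectionVars false
set_option linter.unusedVariables false
set_option linter.style.longLine false
namespace KY
open scoped Classical
open Finset
variable {V : Type*} [Fintype V]

variable {k : ℕ} {G : SimpleGraph V} {U : Finset V}

/-- the graph with extra edges -/
def addE (G : SimpleGraph V) (E : Finset (V × V)) : SimpleGraph V :=
  G ⊔ SimpleGraph.fromRel (fun a b => (a, b) ∈ E)

lemma addE_adj {E : Finset (V × V)} {a b : V} :
    (addE G E).Adj a b ↔ G.Adj a b ∨ (a ≠ b ∧ ((a, b) ∈ E ∨ (b, a) ∈ E)) := by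
  simp [addE]

lemma addE_of {E : Finset (V × V)} {a b : V} (h : G.Adj a b) : (addE G E).Adj a b :=
  addE_adj.2 (Or.inl h)

lemma rho_addE (hk : 4 ≤ k) (E : Finset (V × V)) (W : Finset V) :
    rho k G W ≤ rho k (addE G E) W +
      2 * ((k : ℤ) - 1) * (E.filter (fun p => p.1 ∈ W ∧ p.2 ∈ W)).card := by
  have hk' : (4 : ℤ) ≤ k := by exact_mod_cast hk
  set E' := E.filter (fun p => p.1 ∈ W ∧ p.2 ∈ W) with hE'
  have : ee (addE G E) W W ≤ ee G W W + 2 * E'.card := by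
    rw [ee_card, ee_card]
    have h1 : (W ×ˢ W).filter (fun p => (addE G E).Adj p.1 p.2) ⊆
        (W ×ˢ W).filter (fun p => G.Adj p.1 p.2) ∪ (E' ∪ E'.image Prod.swap) := by
      rintro ⟨a, b⟩ h
      simp only [mem_filter, mem_product, addE_adj] at h
      simp only [mem_union, mem_filter, mem_product, mem_image, hE']
      obtain ⟨⟨ha, hb⟩, h | ⟨_, h | h⟩⟩ := h
      · left; exact ⟨⟨ha, hb⟩, h⟩
      · right; left; exact ⟨h, ha, hb⟩
      · right; right; exact ⟨(b, a), ⟨h, hb, ha⟩, rfl⟩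
    have h2 := card_le_card h1
    have h3 := card_union_le ((W ×ˢ W).filter (fun p => G.Adj p.1 p.2)) (E' ∪ E'.image Prod.swap)
    have h4 := card_union_le E' (E'.image Prod.swap)
    have h5 : (E'.image Prod.swap).card ≤ E'.card := card_image_le
    omega
  unfold rho
  nlinarith

lemma ee_sub_right {S T : Finset V} (h : S ⊆ T) (A : Finset V) :
    ee G A T = ee G A S + ee G A (T \ S) := by
  rw [← ee_union_right G A Finset.disjoint_sdiff, Finset.union_sdiff_of_subset h]

lemma ex_step (hk : 4 ≤ k) {r : ℤ} (h1 : (k : ℤ) * (k - 3) < r)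
    (h2 : r ≤ 2 * ((k : ℤ) - 1) * (k - 2)) :
    ∃ i : ℕ, 2 * i ≤ k - 2 ∧ (k : ℤ) * (k - 3) + 2 * (k - 1) * i < r ∧
      r ≤ (k : ℤ) * (k - 3) + 2 * (k - 1) * (i + 1) := by
  have hk' : (4 : ℤ) ≤ k := by exact_mod_cast hk
  have hpos : (0 : ℤ) < 2 * (k - 1) := by linarith
  set q := (r - (k : ℤ) * (k - 3) - 1) / (2 * (k - 1)) with hq
  have e1 := Int.mul_ediv_add_emod (r - (k : ℤ) * (k - 3) - 1) (2 * (k - 1))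
  have e2 := Int.emod_nonneg (r - (k : ℤ) * (k - 3) - 1) hpos.ne'
  have e3 := Int.emod_lt_of_pos (r - (k : ℤ) * (k - 3) - 1) hpos
  have q0 : 0 ≤ q := Int.ediv_nonneg (by linarith) hpos.le
  rw [← hq] at e1
  refine ⟨q.toNat, ?_, ?_, ?_⟩
  · by_contra hc
    have : (k : ℤ) - 1 ≤ 2 * q := by omega
    nlinarith
  · rw [Int.toNat_of_nonneg q0]; linarith
  · rw [Int.toNat_of_nonneg q0]; linarith

lemma MinCE.good' (M : MinCE k G U) {S : Finset V} (h : S ⊆ U) (hne : S.Nonempty)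
    (hr : rho k G S ≤ (k : ℤ) * ((k : ℤ) - 3)) : False :=
  absurd (M.good S h hne) (not_lt.2 hr)

set_option maxHeartbeats 1000000 in
/-- Lemma 2 -/
lemma MinCE.lem2 (M : MinCE k G U) {R0 : Finset V} (hR0 : R0 ⊂ U) (hR0k : k ≤ R0.card) :
    2 * ((k : ℤ) - 1) * ((k : ℤ) - 2) < rho k G R0 := by
  by_contra hcon
  push Not at hcon
  have hk := M.hk
  have hk' := M.kz
  obtain ⟨R, hRm, hRmin⟩ := Finset.exists_min_image
    (U.powerset.filter (fun R => R ⊂ U ∧ k ≤ R.card)) (rho k G)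
    ⟨R0, by simp [hR0, hR0k, hR0.1]⟩
  simp only [mem_filter, mem_powerset] at hRm hRmin
  obtain ⟨-, hRU, hRk⟩ := hRm
  have hRle : rho k G R ≤ 2 * ((k : ℤ) - 1) * ((k : ℤ) - 2) :=
    (hRmin R0 ⟨hR0.1, hR0, hR0k⟩).trans hcon
  have hmin : ∀ S ⊂ U, k ≤ S.card → rho k G R ≤ rho k G S := fun S h1 h2 => hRmin S ⟨h1.1, h1, h2⟩
  have hRne : R.Nonempty := card_pos.1 (by omega)
  have : Nonempty V := ⟨hRne.choose⟩
  obtain ⟨i, hi1, hi2, hi3⟩ := ex_step hk (M.good R hRU.1 hRne) hRle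
  set w : V → ℕ := fun u => (nb G (U \ R) u).card with hw
  have hsum : ∀ S : Finset V, ((∑ u ∈ S, w u : ℕ) : ℤ) = ee G S (U \ R) := by
    intro S; rw [ee_eq_sum]; push_cast; rfl
  have hcut := M.cut hRU hRne
  rw [← hsum] at hcut
  obtain ⟨E, hE1, hE2, hE3⟩ := lemH R w i (by omega)
  have hcol : Col k (addE G E) R := by
    by_contra hn
    obtain ⟨W, hW, hWne, hWr⟩ := M.ih1 _ R (card_lt_card hRU) hn
    have h1 := rho_addE (G := G) hk E W
    have hc : (E.filter (fun p => p.1 ∈ W ∧ p.2 ∈ W)).card ≤ i := (card_filter_le _ _).trans hE1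
    have hc' : ((E.filter (fun p => p.1 ∈ W ∧ p.2 ∈ W)).card : ℤ) ≤ i := by exact_mod_cast hc
    have h2 : rho k G W < rho k G R := by nlinarith
    rcases lt_or_ge W.card k with hlt | hge
    · rcases Nat.lt_or_ge W.card 2 with h3 | h3
      · have h4 : W.card = 1 := by have := card_pos.2 hWne; omega
        obtain ⟨v, rfl⟩ := card_eq_one.1 h4
        rw [rho_single] at hWr
        nlinarith
      · have := rho_small k hk G W h3 (by omega)
        linarith
    · have := hmin W (Finset.ssubset_of_subset_of_ssubset hW hRU) hge
      linarith
  obtain ⟨φ, hφ⟩ := hcol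
  have hφG : ∀ u ∈ R, ∀ v ∈ R, G.Adj u v → φ u ≠ φ v := fun u hu v hv h => hφ u hu v hv (addE_of h)
  -- representatives
  have hrep : ∃ r : Fin (k - 1) → V, ∀ u ∈ R, r (φ u) ∈ R ∧ φ (r (φ u)) = φ u := by
    have : ∀ a : Fin (k - 1), ∃ x : V, (∃ u ∈ R, φ u = a) → x ∈ R ∧ φ x = a := by
      intro a
      by_cases h : ∃ u ∈ R, φ u = a
      · obtain ⟨u, hu, e⟩ := h; exact ⟨u, fun _ => ⟨hu, e⟩⟩
      · exact ⟨hRne.choose, fun h' => absurd h' h⟩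
    choose r hr using this
    exact ⟨r, fun u hu => hr _ ⟨u, hu, rfl⟩⟩
  obtain ⟨r, hr⟩ := hrep
  set π : V → V := fun u => if u ∈ R then r (φ u) else u with hπ
  have hπR : ∀ u ∈ R, π u ∈ R ∧ φ (π u) = φ u := fun u hu => by
    simp only [hπ, if_pos hu]; exact hr u hu
  have hπN : ∀ u, u ∉ R → π u = u := fun u hu => by simp [hπ, hu]
  set Y : SimpleGraph V := SimpleGraph.mk (fun a b => a ≠ b ∧
    ((∃ u ∈ U, ∃ v ∈ U, G.Adj u v ∧ π u = a ∧ π v = b) ∨ (a ∈ R ∧ b ∈ R)))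
    (by
      constructor
      rintro a b ⟨h1, h2⟩
      refine ⟨h1.symm, ?_⟩
      rcases h2 with ⟨u, hu, v, hv, h, e1, e2⟩ | ⟨h, h'⟩
      · exact Or.inl ⟨v, hv, u, hu, h.symm, e2, e1⟩
      · exact Or.inr ⟨h', h⟩)
    (by constructor; rintro a ⟨h, _⟩; exact h rfl) with hY
  have hYadj : ∀ a b, Y.Adj a b ↔ a ≠ b ∧
    ((∃ u ∈ U, ∃ v ∈ U, G.Adj u v ∧ π u = a ∧ π v = b) ∨ (a ∈ R ∧ b ∈ R)) := fun a b => Iff.rfl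
  have hπcard : (R.image π).card ≤ k - 1 := by
    have : R.image π ⊆ (univ : Finset (Fin (k - 1))).image r := by
      intro x hx
      obtain ⟨u, hu, rfl⟩ := mem_image.1 hx
      simp only [hπ, if_pos hu]
      exact mem_image_of_mem _ (mem_univ _)
    refine (card_le_card this).trans (card_image_le.trans (by simp))
  have hYc : ¬ Col k Y ((U \ R) ∪ R.image π) := by
    rintro ⟨ψ, hψ⟩
    apply M.ncol
    have hin : ∀ u ∈ U, π u ∈ (U \ R) ∪ R.image π := by
      intro u hu
      by_cases h : u ∈ R
      · exact mem_union_right _ (mem_image_of_mem _ h)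
      · rw [hπN u h]; exact mem_union_left _ (by simp [hu, h])
    refine ⟨fun u => ψ (π u), fun u hu v hv huv => hψ _ (hin u hu) _ (hin v hv) ?_⟩
    refine ⟨?_, Or.inl ⟨u, hu, v, hv, huv, rfl, rfl⟩⟩
    by_cases h1 : u ∈ R <;> by_cases h2 : v ∈ R
    · intro e
      apply hφG u h1 v h2 huv
      rw [← (hπR u h1).2, ← (hπR v h2).2, e]
    · rw [hπN v h2]; intro e; exact h2 (e ▸ (hπR u h1).1)
    · rw [hπN u h1]; intro e; exact h1 (e ▸ (hπR v h2).1)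
    · rw [hπN u h1, hπN v h2]; exact huv.ne
  obtain ⟨W, hWU, hWne, hWr⟩ := M.ih1 Y _ (by
    have h1 := card_union_le (U \ R) (R.image π)
    have h2 := card_sdiff_of_subset hRU.1
    have h3 := card_lt_card hRU
    omega) hYc
  set T := W ∩ R with hT
  set A := W \ R with hA
  have hAU : A ⊆ U \ R := by
    intro x hx
    simp only [hA, mem_sdiff] at hx
    have := hWU hx.1
    rcases mem_union.1 this with h | h
    · exact h
    · obtain ⟨u, hu, rfl⟩ := mem_image.1 h
      exact absurd (hπR u hu).1 hx.2
  have hTπ : T ⊆ R.image π := by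
    intro x hx
    simp only [hT, mem_inter] at hx
    rcases mem_union.1 (hWU hx.1) with h | h
    · exact absurd hx.2 (mem_sdiff.1 h).2
    · exact h
  have hTR : T ⊆ R := inter_subset_right
  have hAR : Disjoint A R := sdiff_disjoint
  have hAT : Disjoint A T := hAR.mono_right hTR
  have hWAT : W = A ∪ T := by
    ext x; simp only [hA, hT, mem_union, mem_sdiff, mem_inter]; tauto
  have eA : rho k Y A = rho k G A := by
    refine (rho_congr k ?_).symm
    intro u hu v hv
    have hu' := mem_sdiff.1 (hAU hu)
    have hv' := mem_sdiff.1 (hAU hv)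
    rw [hYadj]
    constructor
    · intro h
      exact ⟨h.ne, Or.inl ⟨u, hu'.1, v, hv'.1, h, hπN u hu'.2, hπN v hv'.2⟩⟩
    · rintro ⟨_, ⟨a, ha, b, hb, hab, e1, e2⟩ | ⟨h, _⟩⟩
      · have : a ∉ R := fun h => hu'.2 (e1 ▸ (hπR a h).1)
        rw [hπN a this] at e1
        have : b ∉ R := fun h => hv'.2 (e2 ▸ (hπR b h).1)
        rw [hπN b this] at e2
        rw [← e1, ← e2]; exact hab
      · exact absurd h hu'.2
  have hTclq : Clq Y T := fun u hu v hv huv => ⟨huv, Or.inr ⟨hTR hu, hTR hv⟩⟩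
  have eW := rho_union k Y hAT
  rw [← hWAT, eA] at eW
  have eAT : ee Y A T ≤ ee G A (R.filter (fun u => π u ∈ T)) := by
    rw [ee_eq_sum, ee_eq_sum]
    refine sum_le_sum fun a ha => ?_
    have ha' := mem_sdiff.1 (hAU ha)
    have : nb Y T a ⊆ (nb G (R.filter (fun u => π u ∈ T)) a).image π := by
      intro t ht
      obtain ⟨ht, hat⟩ := mem_nb.1 ht
      rcases hat with ⟨_, ⟨u, hu, v, hv, huv, e1, e2⟩ | ⟨h, _⟩⟩
      · have : u ∉ R := fun h => ha'.2 (e1 ▸ (hπR u h).1)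
        rw [hπN u this] at e1
        have hvR : v ∈ R := by
          by_contra hvn
          rw [hπN v hvn] at e2
          exact hvn (e2 ▸ hTR ht)
        refine mem_image.2 ⟨v, mem_nb.2 ⟨?_, e1 ▸ huv⟩, e2⟩
        simp [hvR, e2, ht]
      · exact absurd h ha'.2
    exact_mod_cast (card_le_card this).trans card_image_le
  have eAR : ee G A (R.filter (fun u => π u ∈ T)) ≤ ee G A R :=
    ee_mono G (Finset.Subset.refl _) (filter_subset _ _)
  have eW2 := rho_union k G hAR
  have hW2U : A ∪ R ⊆ U := union_subset (hAU.trans sdiff_subset) hRU.1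
  have hW2ne : (A ∪ R).Nonempty := hRne.mono subset_union_right
  have h2k : (0 : ℤ) ≤ 2 * ((k : ℤ) - 1) := by linarith
  have hTc : T.card ≤ k - 1 := (card_le_card hTπ).trans hπcard
  rcases Nat.lt_or_ge T.card 2 with hT2 | hT2
  · rcases Nat.lt_or_ge T.card 1 with hT1 | hT1
    · have hT0 : T = ∅ := card_eq_zero.1 (by omega)
      have hWA : W = A := by rw [hWAT, hT0, union_empty]
      refine M.good' (S := A) (hAU.trans sdiff_subset) (hWA ▸ hWne) ?_
      rw [← eA, ← hWA]; exact hWr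
    · obtain ⟨t, ht⟩ := card_eq_one.1 (show T.card = 1 by omega)
      rw [ht, rho_single] at eW
      have htR : t ∈ R := hTR (by simp [ht])
      have htt : π t = t := by
        obtain ⟨u, hu, e⟩ := mem_image.1 (hTπ (show t ∈ T by simp [ht]))
        simp only [hπ, if_pos htR]
        have h1 := (hπR u hu).2
        rw [e] at h1
        rw [h1, ← e]; simp only [hπ, if_pos hu]
      set N := R.filter (fun u => π u ∈ T) with hN
      have hNR : N ⊆ R := filter_subset _ _
      have hNφ : ∀ u ∈ N, φ u = φ t := by
        intro u hu
        simp only [hN, mem_filter, ht, mem_singleton] at hu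
        rw [← (hπR u hu.1).2, hu.2]
      have htN : t ∈ N := by simp [hN, htR, htt, ht]
      rw [ht] at eAT
      have hlt : rho k G (A ∪ R) ≤ rho k G R - 2 * (k - 1) - 2 * (k - 1) * ee G A (R \ N) := by
        have h3 := ee_sub_right (G := G) hNR A
        have h4 := mul_le_mul_of_nonneg_left eAT h2k
        rw [eW2, h3]
        linarith
      have hnn := ee_nonneg G A (R \ N)
      by_cases hU : A ∪ R = U
      · have hAeq : A = U \ R := by
          rw [← hU, union_sdiff_cancel_right hAR]
        rcases hE3 N hNR (fun p hp hpp => by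
          have h2 := hE2 p hp
          refine hφ p.1 h2.1 p.2 h2.2.1 (addE_adj.2 (Or.inr ⟨h2.2.2, Or.inl hp⟩)) ?_
          rw [hNφ _ hpp.1, hNφ _ hpp.2]) with h | h
        · have h' : (i : ℤ) ≤ ee G A (R \ N) := by
            rw [ee_comm, hAeq, ← hsum]; exact_mod_cast h
          refine M.good' hW2U hW2ne ?_
          have h4 := mul_le_mul_of_nonneg_left h' h2k
          linarith
        · obtain ⟨u, huN, hu0⟩ : ∃ u ∈ N, ∀ v ∈ N, v ≠ u → w v = 0 := by
            by_cases hex : ∃ u ∈ N, 0 < w u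
            · obtain ⟨u, hu, hwu⟩ := hex
              refine ⟨u, hu, fun v hv hvu => ?_⟩
              by_contra hne
              exact hvu (h v hv u hu (Nat.pos_of_ne_zero hne) hwu)
            · push Not at hex
              exact ⟨t, htN, fun v hv _ => by have := hex v hv; omega⟩
          have e3 : ee G A N = ee G {u} A := by
            rw [ee_comm, hAeq, ← hsum, ← hsum, sum_singleton]
            congr 1
            exact Finset.sum_eq_single_of_mem u huN hu0
          have huA : u ∉ A := fun h => (mem_sdiff.1 (hAU h)).2 (hNR huN)
          refine M.good' (S := insert u A) ?_ ⟨u, by simp⟩ ?_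
          · exact insert_subset (hRU.1 (hNR huN)) (hAU.trans sdiff_subset)
          · rw [rho_insert k G huA, ← ee_single_left, ← e3]
            have h4 := mul_le_mul_of_nonneg_left eAT h2k
            linarith
      · have := hmin (A ∪ R) (Finset.ssubset_iff_subset_ne.2 ⟨hW2U, hU⟩)
          (hRk.trans (card_le_card subset_union_right))
        have h4 := mul_nonneg h2k hnn
        linarith
  · have h1 := rho_small k hk Y T hT2 hTc
    refine M.good' hW2U hW2ne ?_
    have h3 := mul_le_mul_of_nonneg_left (eAT.trans eAR) h2k
    rw [eW2]
    linarith

lemma MinCE.cor2 (M : MinCE k G U) {R : Finset V} (hR : R ⊂ U) (h2 : 2 ≤ R.card)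
    (hr : rho k G R ≤ 2 * ((k : ℤ) - 1) * ((k : ℤ) - 2)) : R.card = k - 1 ∧ Clq G R := by
  rcases Nat.lt_or_ge R.card k with h | h
  · exact rho_small_eq k M.hk G R h2 (by omega) hr
  · exact absurd (M.lem2 hR h) (not_lt.2 hr)

/-- Lemma F -/
lemma MinCE.lemF (M : MinCE k G U) {U' : Finset V} (hU : U' ⊂ U) (E : Finset (V × V))
    (hc : ¬ Col k (addE G E) U') : ∃ W ⊆ U', W.Nonempty ∧
      rho k G W ≤ (k : ℤ) * (k - 3) + 2 * (k - 1) * (E.filter (fun p => p.1 ∈ W ∧ p.2 ∈ W)).card ∧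
      (W.card ≠ 1 → k - 1 ≤ 2 * (E.filter (fun p => p.1 ∈ W ∧ p.2 ∈ W)).card) := by
  obtain ⟨W, h1, h2, h3⟩ := M.ih1 _ _ (card_lt_card hU) hc
  have h4 := rho_addE (G := G) M.hk E W
  refine ⟨W, h1, h2, by linarith, fun hne => ?_⟩
  by_contra hlt
  have h5 : 2 ≤ W.card := by have := card_pos.2 h2; omega
  have hk := M.kz
  have hlt' : 2 * ((E.filter (fun p => p.1 ∈ W ∧ p.2 ∈ W)).card : ℤ) ≤ k - 2 := by omega
  have h6 : rho k G W < 2 * ((k : ℤ) - 1) * ((k : ℤ) - 2) := by nlinarith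
  have h7 := M.cor2 (Finset.ssubset_of_subset_of_ssubset h1 hU) h5 h6.le
  have h8 := rho_small k M.hk G W h5 (by omega)
  linarith

end KY


open SimpleGraph
set_option linter.unusedSectionVars false
set_option linter.unusedVariables false
set_option linter.style.longLine false
namespace KY
open scoped Classical
open Finset
variable {V : Type*} [Fintype V]

variable {k : ℕ} {G : SimpleGraph V} {U : Finset V}

lemma hall_on {α β : Type*} [Nonempty β] [DecidableEq β] (S : Finset α) (t : α → Finset β)
    (h : ∀ s ⊆ S, s.card ≤ (s.biUnion t).card) :
    ∃ f : α → β, Set.InjOn f S ∧ ∀ x ∈ S, f x ∈ t x := by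
  obtain ⟨f, hf, hf2⟩ := (Finset.all_card_le_biUnion_card_iff_exists_injective
    (fun x : S => t x.1)).1 (by
      intro s
      have h1 := h (s.image Subtype.val) (by
        intro x hx
        obtain ⟨y, _, rfl⟩ := mem_image.1 hx
        exact y.2)
      rw [card_image_of_injective _ Subtype.val_injective, image_biUnion] at h1
      exact h1)
  refine ⟨fun x => if hx : x ∈ S then f ⟨x, hx⟩ else Classical.arbitrary β, ?_, ?_⟩
  · intro x hx y hy e
    rw [mem_coe] at hx hy
    simp only [hx, hy, dif_pos] at e
    simpa using hf e
  · intro x hx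
    simp only [hx, dif_pos]
    exact hf2 ⟨x, hx⟩

lemma inj_col (hk : 4 ≤ k) (S : Finset V) (h : S.card ≤ k - 1) :
    ∃ c : V → Fin (k - 1), Set.InjOn c S := by
  have : NeZero (k - 1) := ⟨by omega⟩
  obtain ⟨f, hf, -⟩ := hall_on S (fun _ => (univ : Finset (Fin (k - 1)))) (by
    intro s hs
    rcases s.eq_empty_or_nonempty with rfl | hne
    · simp
    · have : s.biUnion (fun _ => (univ : Finset (Fin (k - 1)))) = univ := by
        ext a; simp [hne.exists_mem]
      rw [this, card_univ, Fintype.card_fin]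
      exact (card_le_card hs).trans h)
  exact ⟨f, hf⟩

lemma MinCE.noKk (M : MinCE k G U) {S : Finset V} (hS : S ⊆ U) (hc : Clq G S) (hk : k ≤ S.card) :
    False := by
  obtain ⟨S', h1, h2⟩ := exists_subset_card_eq hk
  have hc' : Clq G S' := fun u hu v hv => hc u (h1 hu) v (h1 hv)
  have hk4 := M.hk
  refine M.good' (h1.trans hS) (card_pos.1 (by omega)) ?_
  rw [rho_clq k hc', h2]
  nlinarith

lemma rho_clq' (hk : 4 ≤ k) {S : Finset V} (h : Clq G S) (hc : S.card = k - 1) :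
    rho k G S = 2 * ((k : ℤ) - 1) * ((k : ℤ) - 2) := by
  have : (S.card : ℤ) = k - 1 := by omega
  rw [rho_clq k h, this]; ring

lemma Clq.sub {S T : Finset V} (h : Clq G T) (hs : S ⊆ T) : Clq G S :=
  fun u hu v hv => h u (hs hu) v (hs hv)

/-- intersection lemma -/
lemma MinCE.il (M : MinCE k G U) {K1 K2 : Finset V} (h1 : K1 ⊆ U) (h2 : K2 ⊆ U) (c1 : Clq G K1)
    (c2 : Clq G K2) (n1 : K1.card = k - 1) (n2 : K2.card = k - 1) (hne : K1 ≠ K2)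
    (hi : 2 ≤ (K1 ∩ K2).card) : False := by
  have hk := M.hk
  have s1 := rho_submod k hk G K1 K2
  have s2 := rho_small k hk G (K1 ∩ K2) hi ((card_le_card inter_subset_left).trans n1.le)
  rw [rho_clq' hk c1 n1, rho_clq' hk c2 n2] at s1
  have hcard : k ≤ (K1 ∪ K2).card := by
    by_contra hlt
    have e1 : K1 = K1 ∪ K2 := eq_of_subset_of_card_le subset_union_left (by omega)
    have e2 : K2 = K1 ∪ K2 := eq_of_subset_of_card_le subset_union_right (by omega)
    exact hne (e1.trans e2.symm)
  have hU : K1 ∪ K2 = U := by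
    by_contra hn
    have := M.lem2 (Finset.ssubset_iff_subset_ne.2 ⟨union_subset h1 h2, hn⟩) hcard
    linarith
  have hV : Nonempty V := ⟨M.ne.choose⟩
  obtain ⟨f, hf1, hf2⟩ := hall_on (K2 \ K1) (fun u => (K1 \ K2).filter (fun v => ¬ G.Adj u v)) (by
    intro T hT
    by_contra hlt
    push Not at hlt
    set B := T.biUnion (fun u => (K1 \ K2).filter (fun v => ¬ G.Adj u v)) with hB
    have hBK : B ⊆ K1 := by
      intro x hx
      simp only [hB, mem_biUnion, mem_filter, mem_sdiff] at hx
      obtain ⟨a, _, hx, _⟩ := hx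
      exact hx.1
    have hd : Disjoint T (K1 \ B) := by
      rw [Finset.disjoint_left]
      intro x hx hx'
      exact (mem_sdiff.1 (hT hx)).2 (mem_sdiff.1 hx').1
    have key : ∀ u ∈ T, ∀ v ∈ K1 \ B, G.Adj u v := by
      intro u hu v hv
      have hu' := mem_sdiff.1 (hT hu)
      have hv' := mem_sdiff.1 hv
      by_cases hv2 : v ∈ K2
      · exact c2 u hu'.1 v hv2 (fun e => hu'.2 (e ▸ hv'.1))
      · by_contra hn
        apply hv'.2
        simp only [hB, mem_biUnion, mem_filter, mem_sdiff]
        exact ⟨u, hu, ⟨hv'.1, hv2⟩, hn⟩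
    refine M.noKk (S := T ∪ (K1 \ B)) ?_ ?_ ?_
    · exact union_subset ((hT.trans sdiff_subset).trans h2) (sdiff_subset.trans h1)
    · intro u hu v hv huv
      rcases mem_union.1 hu with hu | hu <;> rcases mem_union.1 hv with hv | hv
      · exact c2 u (mem_sdiff.1 (hT hu)).1 v (mem_sdiff.1 (hT hv)).1 huv
      · exact key u hu v hv
      · exact (key v hv u hu).symm
      · exact c1 u (mem_sdiff.1 hu).1 v (mem_sdiff.1 hv).1 huv
    · rw [card_union_of_disjoint hd, card_sdiff_of_subset hBK]
      have := card_le_card hBK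
      omega)
  obtain ⟨c, hc⟩ := inj_col hk K1 n1.le
  have hf3 : ∀ u ∈ K2 \ K1, f u ∈ K1 ∧ ¬ G.Adj u (f u) := by
    intro u hu
    have := hf2 u hu
    simp only [mem_filter, mem_sdiff] at this
    exact ⟨this.1.1, this.2⟩
  apply M.ncol
  refine ⟨fun u => if u ∈ K1 then c u else c (f u), ?_⟩
  have hm : ∀ u ∈ U, u ∉ K1 → u ∈ K2 \ K1 := by
    intro u hu hn
    rw [← hU] at hu
    simp only [mem_union] at hu
    simp only [mem_sdiff]; tauto
  intro u hu v hv huv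
  by_cases hu1 : u ∈ K1 <;> by_cases hv1 : v ∈ K1 <;> simp only [hu1, hv1, if_true, if_false]
  · intro e; exact huv.ne (hc hu1 hv1 e)
  · intro e
    have h3 := hf3 v (hm v hv hv1)
    have := hc hu1 h3.1 e
    exact h3.2 (this ▸ huv.symm)
  · intro e
    have h3 := hf3 u (hm u hu hu1)
    have := hc h3.1 hv1 e
    exact h3.2 (this ▸ huv)
  · intro e
    have h3 := hf3 u (hm u hu hu1)
    have h4 := hf3 v (hm v hv hv1)
    exact huv.ne (hf1 (mem_coe.2 (hm u hu hu1)) (mem_coe.2 (hm v hv hv1)) (hc h3.1 h4.1 e))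

lemma mem_cl {u v : V} : u ∈ cl G U v ↔ u ∈ U ∧ insert u (nb G U u) = insert v (nb G U v) := by
  simp [cl]

lemma self_mem_cl {v : V} (hv : v ∈ U) : v ∈ cl G U v := mem_cl.2 ⟨hv, rfl⟩

lemma cl_symm {u v : V} (hv : v ∈ U) (h : u ∈ cl G U v) : v ∈ cl G U u :=
  mem_cl.2 ⟨hv, (mem_cl.1 h).2.symm⟩

lemma cl_eq {u v : V} (h : u ∈ cl G U v) : cl G U u = cl G U v := by
  have := (mem_cl.1 h).2
  ext x; rw [mem_cl, mem_cl, this]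

lemma cl_adj {u v : V} (h : u ∈ cl G U v) (hne : u ≠ v) : G.Adj v u := by
  have h1 := mem_cl.1 h
  have : u ∈ insert v (nb G U v) := by rw [← h1.2]; simp
  rcases mem_insert.1 this with h2 | h2
  · exact absurd h2 hne
  · exact (mem_nb.1 h2).2

lemma cl_sub_closed {v : V} : cl G U v ⊆ insert v (nb G U v) := by
  intro u hu
  rw [← (mem_cl.1 hu).2]; simp

lemma self_notMem_nb {v : V} : v ∉ nb G U v := fun h => G.irrefl (mem_nb.1 h).2

lemma card_closed {v : V} : (insert v (nb G U v)).card = dg G U v + 1 :=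
  card_insert_of_notMem self_notMem_nb

lemma cl_dg {u v : V} (h : u ∈ cl G U v) : dg G U u = dg G U v := by
  have h1 := congrArg card (mem_cl.1 h).2
  rw [card_closed, card_closed] at h1; omega

lemma ee_erase {v : V} (hv : v ∈ U) :
    ee G U U = ee G (U.erase v) (U.erase v) + 2 * dg G U v := by
  have hd : Disjoint {v} (U.erase v) := by simp
  have hU : U = {v} ∪ U.erase v := by rw [← insert_eq, insert_erase hv]
  have hn : nb G (U.erase v) v = nb G U v := by
    ext x; simp only [mem_nb, mem_erase]
    constructor
    · rintro ⟨⟨_, a⟩, b⟩; exact ⟨a, b⟩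
    · rintro ⟨a, b⟩; exact ⟨⟨b.ne', a⟩, b⟩
  have h0 : ee G {v} {v} = 0 := by simp [ee, aI_self]
  have h1 : ee G U U = ee G ({v} ∪ U.erase v) ({v} ∪ U.erase v) := by rw [← hU]
  rw [h1, ee_union_left G _ hd, ee_union_right G _ hd, ee_union_right G _ hd,
    ee_comm G (U.erase v) {v}, ee_single_left G v (U.erase v), hn, h0]
  unfold dg; ring

lemma tw_split {v : V} (hv : v ∈ U) : tw G U + 1 =
    ∑ a ∈ U.erase v, ((cl G U a).erase v).card + 2 * (cl G U v).card := by
  have h1 : tw G U = ∑ a ∈ U.erase v, (cl G U a).card + (cl G U v).card := by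
    unfold tw; rw [sum_erase_add _ _ hv]
  have h2 : ∀ a ∈ U.erase v, (cl G U a).card =
      ((cl G U a).erase v).card + (if a ∈ cl G U v then 1 else 0) := by
    intro a ha
    have ha' := mem_erase.1 ha
    by_cases h : a ∈ cl G U v
    · rw [if_pos h, card_erase_add_one (cl_symm hv h)]
    · rw [if_neg h, erase_eq_of_notMem (fun h' => h (cl_symm ha'.2 h'))]
      rfl
  rw [h1, sum_congr rfl h2, sum_add_distrib]
  have h3 : ∑ a ∈ U.erase v, (if a ∈ cl G U v then 1 else 0) + 1 = (cl G U v).card := by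
    rw [← card_filter]
    have : (U.erase v).filter (fun a => a ∈ cl G U v) = (cl G U v).erase v := by
      ext a; simp only [mem_filter, mem_erase, mem_cl]; tauto
    rw [this, card_erase_add_one (self_mem_cl hv)]
  omega

end KY


open SimpleGraph
set_option linter.unusedSectionVars false
set_option linter.unusedVariables false
set_option linter.style.longLine false
namespace KY
open scoped Classical
open Finset
variable {V : Type*} [Fintype V]

variable {k : ℕ} {G : SimpleGraph V} {U : Finset V}

/-- rewire v so that its neighbourhood is D -/
def rew (G : SimpleGraph V) (v : V) (D : Finset V) : SimpleGraph V where
  Adj a b := a ≠ b ∧ ((a ≠ v ∧ b ≠ v ∧ G.Adj a b) ∨ (a = v ∧ b ∈ D) ∨ (b = v ∧ a ∈ D))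
  symm := by
    constructor
    rintro a b ⟨h, h'⟩
    refine ⟨h.symm, ?_⟩
    rcases h' with ⟨h1, h2, h3⟩ | h1 | h1
    · exact Or.inl ⟨h2, h1, h3.symm⟩
    · exact Or.inr (Or.inr h1)
    · exact Or.inr (Or.inl h1)
  loopless := by constructor; rintro a ⟨h, _⟩; exact h rfl

lemma rew_adj {v : V} {D : Finset V} {a b : V} : (rew G v D).Adj a b ↔
  a ≠ b ∧ ((a ≠ v ∧ b ≠ v ∧ G.Adj a b) ∨ (a = v ∧ b ∈ D) ∨ (b = v ∧ a ∈ D)) := Iff.rfl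

lemma rew_adj_ne {v : V} {D : Finset V} {a b : V} (ha : a ≠ v) (hb : b ≠ v) :
    (rew G v D).Adj a b ↔ G.Adj a b := by
  rw [rew_adj]
  constructor
  · rintro ⟨_, h | h | h⟩
    · exact h.2.2
    · exact absurd h.1 ha
    · exact absurd h.1 hb
  · intro h; exact ⟨h.ne, Or.inl ⟨ha, hb, h⟩⟩

lemma rew_adj_v {v : V} {D : Finset V} {b : V} (hv : v ∉ D) :
    (rew G v D).Adj v b ↔ b ∈ D := by
  rw [rew_adj]
  constructor
  · rintro ⟨_, h | h | h⟩
    · exact absurd rfl h.1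
    · exact h.2
    · exact absurd h.2 hv
  · intro h; exact ⟨fun e => hv (e ▸ h), Or.inr (Or.inl ⟨rfl, h⟩)⟩

lemma closed_adj {a b : V} : b ∈ insert a (nb G U a) ↔ b = a ∨ (b ∈ U ∧ G.Adj a b) := by
  rw [mem_insert, mem_nb]

set_option maxHeartbeats 1000000 in
lemma MinCE.lemA (M : MinCE k G U) {x v : V} (hx : x ∈ U) (hdx : dg G U x = k - 1)
    (hv : v ∈ nb G U x) (hvC : v ∉ cl G U x) (hdv : dg G U v + 1 ≤ k - 1 + (cl G U x).card)
    (ht : dg G U v = k - 1 → (cl G U v).card ≤ (cl G U x).card) :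
    Clq G ((insert x (nb G U x)).erase v) := by
  have hk := M.hk
  have hk' := M.kz
  have hvU := (mem_nb.1 hv).1
  have hxv := (mem_nb.1 hv).2
  set D := (insert x (nb G U x)).erase v with hD
  have hvD : v ∉ D := by simp [hD]
  have hxD : x ∈ D := by simp [hD, hxv.ne]
  have hDc : D.card = k - 1 := by
    rw [hD, card_erase_of_mem (by simp [hv]), card_closed]; omega
  have hDU : D ⊆ U := (erase_subset _ _).trans (insert_subset hx (nb_sub x))
  set G' := rew G v D with hG'
  set C := cl G U x with hC
  have hCD : C ⊆ D := by
    intro c hc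
    exact mem_erase.2 ⟨fun e => hvC (e ▸ hc), cl_sub_closed hc⟩
  have hCN : ∀ c ∈ C, ∀ w, w ∈ insert c (nb G U c) ↔ w ∈ insert x (nb G U x) := by
    intro c hc w; rw [(mem_cl.1 hc).2]
  have hCv : ∀ c ∈ C, G.Adj v c := by
    intro c hc
    have h1 := (hCN c hc v).2 (by simp [hv])
    rcases closed_adj.1 h1 with h | h
    · exact absurd (h ▸ hc) hvC
    · exact h.2.symm
  -- not colorable
  have hnc : ¬ Col k G' U := by
    rintro ⟨ψ, hψ⟩
    have hsub : C ⊆ nb G U v := fun c hc => mem_nb.2 ⟨(mem_cl.1 hc).1, hCv c hc⟩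
    obtain ⟨c0, hc0⟩ := free_color ψ (nb G U v \ C) (by
      rw [card_sdiff_of_subset hsub]
      have h1 := card_le_card hsub
      have h2 : (nb G U v).card = dg G U v := rfl
      have h3 : 0 < C.card := card_pos.2 ⟨x, self_mem_cl hx⟩
      omega)
    apply M.ncol
    set χ : V → Fin (k - 1) := fun u => if u = v then c0 else if u ∈ C ∧ ψ u = c0 then ψ v else ψ u with hχ
    have χv : χ v = c0 := by simp [hχ]
    have χ1 : ∀ u, u ≠ v → u ∈ C ∧ ψ u = c0 → χ u = ψ v := by
      intro u h1 h2; simp only [hχ, if_neg h1, if_pos h2]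
    have χ2 : ∀ u, u ≠ v → ¬ (u ∈ C ∧ ψ u = c0) → χ u = ψ u := by
      intro u h1 h2; simp only [hχ, if_neg h1, if_neg h2]
    have key1 : ∀ w ∈ U, G.Adj v w → χ w ≠ c0 := by
      intro w hw hvw
      by_cases hwC : w ∈ C ∧ ψ w = c0
      · rw [χ1 w hvw.ne' hwC, ← hwC.2]
        exact hψ v hvU w hw ((rew_adj_v hvD).2 (hCD hwC.1))
      · rw [χ2 w hvw.ne' hwC]
        by_cases h : w ∈ C
        · exact fun e => hwC ⟨h, e⟩
        · exact hc0 w (by simp [mem_nb, hw, hvw, h])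
    have key2 : ∀ u ∈ U, ∀ w ∈ U, u ≠ v → w ≠ v → G.Adj u w → u ∈ C → ψ u = c0 → χ u ≠ χ w := by
      intro u hu w hw huv hwv huw huC hu0
      have hψn := hψ u hu w hw ((rew_adj_ne huv hwv).2 huw)
      rw [χ1 u huv ⟨huC, hu0⟩, χ2 w hwv (fun h => hψn (hu0.trans h.2.symm))]
      refine hψ v hvU w hw ((rew_adj_v hvD).2 (mem_erase.2 ⟨hwv, ?_⟩))
      exact (hCN u huC w).1 (closed_adj.2 (Or.inr ⟨hw, huw⟩))
    refine ⟨χ, fun u hu w hw huw => ?_⟩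
    by_cases huv : u = v
    · subst huv; rw [χv]; exact (key1 w hw huw).symm
    by_cases hwv : w = v
    · subst hwv; rw [χv]; exact key1 u hu huw.symm
    by_cases h1 : u ∈ C ∧ ψ u = c0
    · exact key2 u hu w hw huv hwv huw h1.1 h1.2
    by_cases h2 : w ∈ C ∧ ψ w = c0
    · exact (key2 w hw u hu hwv huv huw.symm h2.1 h2.2).symm
    rw [χ2 u huv h1, χ2 w hwv h2]
    exact hψ u hu w hw ((rew_adj_ne huv hwv).2 huw)
  -- measure decreases
  have hdgv : dg G' U v = k - 1 := by
    rw [← hDc]; unfold dg; congr 1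
    ext b; rw [mem_nb, rew_adj_v hvD]
    exact ⟨fun h => h.2, fun h => ⟨hDU h, h⟩⟩
  have hee0 : ee G' (U.erase v) (U.erase v) = ee G (U.erase v) (U.erase v) := by
    refine ee_congr fun a ha b hb => rew_adj_ne (mem_erase.1 ha).1 (mem_erase.1 hb).1
  have hee := ee_erase (G := G) hvU
  have hee' := ee_erase (G := G') hvU
  have hclosed : ∀ a ∈ U, a ≠ v → ∀ b, b ∈ insert a (nb G' U a) ↔
      (b ≠ v ∧ b ∈ insert a (nb G U a)) ∨ (b = v ∧ x ∈ insert a (nb G U a)) := by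
    intro a ha hav b
    rw [closed_adj, closed_adj, closed_adj]
    by_cases hb : b = v
    · subst hb
      rw [G'.adj_comm, rew_adj_v hvD, hD, mem_erase, closed_adj, G.adj_comm a x]
      constructor
      · rintro (h | ⟨h1, h2, h3 | h3⟩)
        · exact absurd h.symm hav
        · right; exact ⟨rfl, Or.inl h3.symm⟩
        · right; exact ⟨rfl, Or.inr ⟨hx, h3.2⟩⟩
      · rintro (h | ⟨h, h1 | h1⟩)
        · exact absurd rfl h.1
        · right; exact ⟨hvU, hav, Or.inl h1.symm⟩
        · right; exact ⟨hvU, hav, Or.inr ⟨ha, h1.2⟩⟩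
    · rw [rew_adj_ne hav hb]
      tauto
  have hmeas : ee G' U U < ee G U U ∨ (ee G' U U = ee G U U ∧ tw G U < tw G' U) := by
    have hge := M.deg hvU
    rcases Nat.lt_or_ge (k - 1) (dg G U v) with h | h
    · left
      rw [hee, hee', hee0, hdgv]
      have : ((k - 1 : ℕ) : ℤ) < dg G U v := by exact_mod_cast h
      linarith
    · right
      have hdeq : dg G U v = k - 1 := by omega
      refine ⟨by rw [hee, hee', hee0, hdgv, hdeq], ?_⟩
      have t1 := tw_split (G := G) hvU
      have t2 := tw_split (G := G') hvU
      have t3 : (cl G U v).card < (cl G' U v).card := by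
        refine lt_of_le_of_lt (ht hdeq) ?_
        have hsub : insert v C ⊆ cl G' U v := by
          have hv' : ∀ b, b ∈ insert v (nb G' U v) ↔ b ∈ insert x (nb G U x) := by
            intro b
            rw [closed_adj, rew_adj_v hvD, hD, mem_erase]
            constructor
            · rintro (h | h)
              · subst h; simp [hv]
              · exact h.2.2
            · intro h
              by_cases hb : b = v
              · exact Or.inl hb
              · right; refine ⟨?_, hb, h⟩
                exact (insert_subset hx (nb_sub x)) h
          intro c hc
          rcases mem_insert.1 hc with rfl | hc
          · exact self_mem_cl hvU
          · refine mem_cl.2 ⟨(mem_cl.1 hc).1, ?_⟩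
            have hcv : c ≠ v := fun e => hvC (e ▸ hc)
            ext b
            rw [hv' b, hclosed c (mem_cl.1 hc).1 hcv b, hCN c hc, hCN c hc]
            by_cases hb : b = v
            · subst hb; simp [hv]
            · simp [hb]
        have := card_le_card hsub
        rw [card_insert_of_notMem hvC] at this
        omega
      have t4 : ∑ a ∈ U.erase v, ((cl G U a).erase v).card ≤
          ∑ a ∈ U.erase v, ((cl G' U a).erase v).card := by
        refine sum_le_sum fun a ha => card_le_card fun b hb => ?_
        have ha' := mem_erase.1 ha
        have hb' := mem_erase.1 hb
        have hb2 := mem_cl.1 hb'.2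
        refine mem_erase.2 ⟨hb'.1, mem_cl.2 ⟨hb2.1, ?_⟩⟩
        ext c
        rw [hclosed a ha'.2 ha'.1, hclosed b hb2.1 hb'.1, hb2.2]
      omega
  obtain ⟨W, hWU, hWne, hWr⟩ := M.ih2 G' hmeas hnc
  have hsame : ∀ S : Finset V, v ∉ S → rho k G S = rho k G' S := by
    intro S hS
    refine rho_congr k fun a ha b hb => (rew_adj_ne ?_ ?_).symm
    · rintro rfl; exact hS ha
    · rintro rfl; exact hS hb
  have hvW : v ∈ W := by
    by_contra h
    exact M.good' hWU hWne (by rw [hsame W h]; exact hWr)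
  set R := W.erase v with hR
  have hvR : v ∉ R := by simp [hR]
  have hRU : R ⊆ U := (erase_subset _ _).trans hWU
  have hWins : W = insert v R := by rw [hR, insert_erase hvW]
  have hr1 := rho_insert k G' hvR
  rw [← hWins, ← hsame R hvR] at hr1
  have hxW : x ∈ W := by
    by_contra h
    have hxR : x ∉ R := fun h' => h (mem_of_mem_erase h')
    refine M.good' (S := insert x R) (insert_subset hx hRU) ⟨x, by simp⟩ ?_
    rw [rho_insert k G hxR]
    have : nb G R x = nb G' R v := by
      ext b
      have hbD : b ∈ D ↔ b ≠ v ∧ (b = x ∨ (b ∈ U ∧ G.Adj x b)) := by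
        rw [hD, mem_erase, closed_adj]
      rw [mem_nb, mem_nb, rew_adj_v hvD, hbD]
      constructor
      · rintro ⟨h1, h2⟩
        exact ⟨h1, fun e => hvR (e ▸ h1), Or.inr ⟨hRU h1, h2⟩⟩
      · rintro ⟨h1, h2, h3 | h3⟩
        · exact absurd (h3 ▸ h1) hxR
        · exact ⟨h1, h3.2⟩
    rw [this]; linarith
  have hxR : x ∈ R := mem_erase.2 ⟨hxv.ne, hxW⟩
  have hnbD : nb G' R v ⊆ D := fun b hb => (rew_adj_v hvD).1 (mem_nb.1 hb).2
  have hnbc : ((nb G' R v).card : ℤ) ≤ k - 1 := by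
    have := card_le_card hnbD; omega
  have h2k : (0 : ℤ) ≤ 2 * ((k : ℤ) - 1) := by linarith
  have hRr : rho k G R ≤ 2 * ((k : ℤ) - 1) * ((k : ℤ) - 2) := by
    have := mul_le_mul_of_nonneg_left hnbc h2k
    nlinarith
  have hR2 : 2 ≤ R.card := by
    by_contra hlt
    have h1 : R.card = 1 := by have := card_pos.2 ⟨x, hxR⟩; omega
    obtain ⟨y, hy⟩ := card_eq_one.1 h1
    have h2 : ((nb G' R v).card : ℤ) ≤ 1 := by
      have := card_le_card (nb_sub (G := G') (U := R) v); omega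
    have h3 := mul_le_mul_of_nonneg_left h2 h2k
    rw [hy, rho_single, ← hy] at hr1
    nlinarith
  have hRss : R ⊂ U := Finset.ssubset_iff_subset_ne.2 ⟨hRU, fun e => hvR (e ▸ hvU)⟩
  obtain ⟨c1, c2⟩ := M.cor2 hRss hR2 hRr
  have hRD : R ⊆ D := by
    intro b hb
    rw [hD, mem_erase, closed_adj]
    refine ⟨fun e => hvR (e ▸ hb), ?_⟩
    by_cases h : b = x
    · exact Or.inl h
    · exact Or.inr ⟨hRU hb, c2 x hxR b hb (Ne.symm h)⟩
  rw [← eq_of_subset_of_card_le hRD (by omega)]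
  exact c2

end KY


open SimpleGraph
set_option linter.unusedSectionVars false
set_option linter.unusedVariables false
set_option linter.style.longLine false
namespace KY
open scoped Classical
open Finset
variable {V : Type*} [Fintype V]

variable {k : ℕ} {G : SimpleGraph V} {U : Finset V}

lemma closed_sub {x : V} (hx : x ∈ U) : insert x (nb G U x) ⊆ U := insert_subset hx (nb_sub x)

lemma card_closed_erase {x v : V} (hv : v ∈ nb G U x) :
    ((insert x (nb G U x)).erase v).card = dg G U x := by
  rw [card_erase_of_mem (by simp [hv]), card_closed]; omega

lemma cl_all {x c w : V} (hc : c ∈ cl G U x) (hw : w ∈ insert x (nb G U x)) (hne : w ≠ c) :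
    G.Adj c w := by
  rw [← (mem_cl.1 hc).2] at hw
  exact (mem_nb.1 ((mem_insert.1 hw).resolve_left hne)).2

lemma MinCE.uniq (M : MinCE k G U) {x v v2 : V} (hx : x ∈ U) (hdx : dg G U x = k - 1)
    (hv : v ∈ nb G U x) (hv2 : v2 ∈ nb G U x) (hne : v ≠ v2)
    (c1 : Clq G ((insert x (nb G U x)).erase v)) (c2 : Clq G ((insert x (nb G U x)).erase v2)) :
    False := by
  have hk := M.hk
  refine M.il ((erase_subset _ _).trans (closed_sub hx)) ((erase_subset _ _).trans (closed_sub hx))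
    c1 c2 (by rw [card_closed_erase hv, hdx]) (by rw [card_closed_erase hv2, hdx]) ?_ ?_
  · intro e
    have : v2 ∈ (insert x (nb G U x)).erase v := by simp [hv2, hne.symm]
    rw [e] at this; simp at this
  · have : ((insert x (nb G U x)).erase v).erase v2 ⊆
        (insert x (nb G U x)).erase v ∩ (insert x (nb G U x)).erase v2 := by
      intro u hu; simp only [mem_erase, mem_inter] at hu ⊢; tauto
    have h1 := card_le_card this
    rw [card_erase_of_mem (by simp [hv2, hne.symm]), card_closed_erase hv, hdx] at h1
    omega

lemma MinCE.sle (M : MinCE k G U) {x : V} (hx : x ∈ U) (hdx : dg G U x = k - 1) :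
    (cl G U x).card ≤ k - 3 := by
  have hk := M.hk
  by_contra hlt
  set Z := insert x (nb G U x) \ cl G U x with hZ
  have hZn : Z ⊆ nb G U x := by
    intro w hw
    have := mem_sdiff.1 hw
    refine (mem_insert.1 this.1).resolve_left ?_
    rintro rfl; exact this.2 (self_mem_cl hx)
  have hZc : Z.card ≤ 2 := by
    rw [hZ, card_sdiff_of_subset cl_sub_closed, card_closed, hdx]; omega
  obtain ⟨P, hP1, hP2, hP3⟩ := exists_subsuperset_card_eq hZn hZc (by
    have : (nb G U x).card = dg G U x := rfl
    omega)
  obtain ⟨a, b, hab, rfl⟩ := card_eq_two.1 hP3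
  have key : ∀ a b : V, Z ⊆ {a, b} → Clq G ((insert x (nb G U x)).erase a) := by
    intro a b hs u hu w hw huw
    have hu' := mem_erase.1 hu
    have hw' := mem_erase.1 hw
    by_cases h1 : u ∈ cl G U x
    · exact cl_all h1 hw'.2 huw.symm
    by_cases h2 : w ∈ cl G U x
    · exact (cl_all h2 hu'.2 huw).symm
    exfalso
    have e1 := hs (mem_sdiff.2 ⟨hu'.2, h1⟩)
    have e2 := hs (mem_sdiff.2 ⟨hw'.2, h2⟩)
    simp only [mem_insert, mem_singleton] at e1 e2
    have e1 := e1.resolve_left hu'.1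
    have e2 := e2.resolve_left hw'.1
    exact huw (e1.trans e2.symm)
  exact M.uniq hx hdx (hP2 (by simp)) (hP2 (by simp)) hab (key a b hP1)
    (key b a (by rw [pair_comm]; exact hP1))

lemma MinCE.lemC (M : MinCE k G U) {x z w : V} (hx : x ∈ U) (hdx : dg G U x = k - 1)
    (hz : z ∈ nb G U x) (hc : Clq G ((insert x (nb G U x)).erase z))
    (hw : w ∈ (insert x (nb G U x)).erase z) (hwC : w ∉ cl G U x) :
    k - 1 + (cl G U x).card ≤ dg G U w := by
  have hk := M.hk
  by_contra hlt
  have hwx : w ≠ x := by rintro rfl; exact hwC (self_mem_cl hx)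
  have hwn : w ∈ nb G U x := (mem_insert.1 (mem_of_mem_erase hw)).resolve_left hwx
  have hwU := (mem_nb.1 hwn).1
  have hwz : w ≠ z := (mem_erase.1 hw).1
  by_cases ht : dg G U w = k - 1 → (cl G U w).card ≤ (cl G U x).card
  · have := M.lemA hx hdx hwn hwC (by omega) ht
    exact M.uniq hx hdx hwn hz hwz this hc
  · rw [Classical.not_imp] at ht
    obtain ⟨hdw, ht⟩ := ht
    have hxn : x ∈ nb G U w := mem_nb.2 ⟨hx, (mem_nb.1 hwn).2.symm⟩
    have h2 := M.lemA hwU hdw hxn (fun h => hwC (cl_symm hwU h)) (by omega) (by omega)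
    refine M.il ((erase_subset _ _).trans (closed_sub hx)) ((erase_subset _ _).trans (closed_sub hwU))
      hc h2 (by rw [card_closed_erase hz, hdx]) (by rw [card_closed_erase hxn, hdw]) ?_ ?_
    · intro e
      have : x ∈ (insert x (nb G U x)).erase z := by simp [(mem_nb.1 hz).2.ne]
      rw [e] at this; simp at this
    · have hsub : ((insert x (nb G U x)).erase z).erase x ⊆
        (insert x (nb G U x)).erase z ∩ (insert w (nb G U w)).erase x := by
        intro u hu
        have hu' := mem_erase.1 hu
        refine mem_inter.2 ⟨hu'.2, mem_erase.2 ⟨hu'.1, closed_adj.2 ?_⟩⟩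
        by_cases h : u = w
        · exact Or.inl h
        · exact Or.inr ⟨closed_sub hx (mem_of_mem_erase hu'.2), hc w hw u hu'.2 (Ne.symm h)⟩
      have h3 := card_le_card hsub
      rw [card_erase_of_mem (by simp [(mem_nb.1 hz).2.ne]), card_closed_erase hz, hdx] at h3
      omega

set_option maxHeartbeats 1000000 in
/-- kill lemma -/
lemma MinCE.kill (M : MinCE k G U) {v x : V} (hv : v ∈ U) (hdv : dg G U v = k - 1)
    (hx : x ∈ nb G U v) (hxC : x ∉ cl G U v) (hc : Clq G ((insert v (nb G U v)).erase x))
    (hs : 2 ≤ (cl G U v).card) (hdx : dg G U x = k - 1) : False := by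
  have hk := M.hk
  have hkz := M.kz
  have hs2 := M.sle hv hdv
  have hxU := (mem_nb.1 hx).1
  have : NeZero (k - 1) := ⟨by omega⟩
  set K := (insert v (nb G U v)).erase x with hK
  set C := cl G U v with hC
  have hKU : K ⊆ U := (erase_subset _ _).trans (closed_sub hv)
  have hKc : K.card = k - 1 := by rw [hK, card_closed_erase hx, hdv]
  have hxK : x ∉ K := by simp [hK]
  have hCK : C ⊆ K := fun c hc => mem_erase.2 ⟨fun e => hxC (e ▸ hc), cl_sub_closed hc⟩
  have hKx : insert v (nb G U v) = insert x K := by rw [hK, insert_erase (by simp [hx])]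
  have hCx : ∀ c ∈ C, G.Adj x c := by
    intro c hc'
    exact (cl_all (w := x) hc' (by simp [hx]) (fun e => hxC (e ▸ hc'))).symm
  have hCN : ∀ c ∈ C, ∀ w ∈ U, G.Adj c w → w = x ∨ w ∈ K := by
    intro c hc' w hw hcw
    have : w ∈ insert c (nb G U c) := closed_adj.2 (Or.inr ⟨hw, hcw⟩)
    rw [(mem_cl.1 hc').2, hKx] at this
    exact mem_insert.1 this
  obtain ⟨u, hu, huK⟩ : ∃ u ∈ nb G U x, u ∉ K := by
    by_contra hno
    push Not at hno
    have e : nb G U x = K := eq_of_subset_of_card_le hno (by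
      have : (nb G U x).card = dg G U x := rfl
      omega)
    exact hxC (mem_cl.2 ⟨hxU, by rw [e, hKx]⟩)
  obtain ⟨huU, hxu⟩ := mem_nb.1 hu
  have huC : u ∉ C := fun h => huK (hCK h)
  set E : Finset (V × V) := (K \ C).image (fun w => (u, w)) with hE
  set U' := U \ insert x C with hU'
  have hCU : C ⊆ U := hCK.trans hKU
  have hU'U : U' ⊂ U := Finset.ssubset_iff_subset_ne.2 ⟨sdiff_subset, fun e => by
    have : x ∈ U' := by rw [e]; exact hxU
    simp [hU'] at this⟩
  have hKU' : K \ C ⊆ U' := by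
    intro w hw
    have hw' := mem_sdiff.1 hw
    simp only [hU', mem_sdiff, mem_insert, not_or]
    exact ⟨hKU hw'.1, fun e => hxK (e ▸ hw'.1), hw'.2⟩
  have huU' : u ∈ U' := by
    simp only [hU', mem_sdiff, mem_insert, not_or]
    exact ⟨huU, hxu.ne', huC⟩
  have hKCc : (K \ C).card = k - 1 - C.card := by rw [card_sdiff_of_subset hCK, hKc]
  have hnc : ¬ Col k (addE G E) U' := by
    rintro ⟨ψ, hψ⟩
    have hψG : ∀ a ∈ U', ∀ b ∈ U', G.Adj a b → ψ a ≠ ψ b := fun a ha b hb h =>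
      hψ a ha b hb (addE_of h)
    have hinj : Set.InjOn ψ (K \ C : Finset V) := by
      intro a ha b hb e
      by_contra hne
      exact hψG a (hKU' ha) b (hKU' hb) (hc a (mem_sdiff.1 ha).1 b (mem_sdiff.1 hb).1 hne) e
    have hic : ((K \ C).image ψ).card = k - 1 - C.card := by
      rw [card_image_of_injOn hinj, hKCc]
    have hun : ψ u ∉ (K \ C).image ψ := by
      intro h
      obtain ⟨w, hw, e⟩ := mem_image.1 h
      refine hψ u huU' w (hKU' hw) (addE_adj.2 (Or.inr ⟨?_, Or.inl ?_⟩)) e.symm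
      · rintro rfl; exact huK (mem_sdiff.1 hw).1
      · exact mem_image_of_mem _ hw
    have hsub : C ⊆ nb G U x := fun c hc' => mem_nb.2 ⟨hCU hc', hCx c hc'⟩
    obtain ⟨a, ha1, ha2⟩ : ∃ a ∈ (K \ C).image ψ, a ∉ (nb G U x \ C).image ψ := by
      by_contra hno
      push Not at hno
      have h1 : (K \ C).image ψ ⊆ ((nb G U x \ C).erase u).image ψ := by
        intro a ha
        obtain ⟨w, hw, rfl⟩ := mem_image.1 (hno a ha)
        refine mem_image_of_mem _ (mem_erase.2 ⟨?_, hw⟩)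
        rintro rfl; exact hun ha
      have h2 := (card_le_card h1).trans card_image_le
      rw [hic, card_erase_of_mem (mem_sdiff.2 ⟨hu, huC⟩), card_sdiff_of_subset hsub] at h2
      have : (nb G U x).card = dg G U x := rfl
      omega
    obtain ⟨f, hf1, hf2⟩ := hall_on C (fun _ => univ \ (K \ C).image ψ) (by
      intro s hsC
      rcases s.eq_empty_or_nonempty with rfl | hne
      · simp
      · have : s.biUnion (fun _ => univ \ (K \ C).image ψ) = univ \ (K \ C).image ψ := by
          ext b; simp only [mem_biUnion]; exact ⟨fun ⟨_, _, h⟩ => h, fun h => ⟨_, hne.choose_spec, h⟩⟩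
        rw [this, card_sdiff_of_subset (subset_univ _), hic, card_univ, Fintype.card_fin]
        have := card_le_card hsC
        omega)
    have hf3 : ∀ c ∈ C, ∀ w ∈ K \ C, f c ≠ ψ w := by
      intro c hc' w hw e
      exact (mem_sdiff.1 (hf2 c hc')).2 (e ▸ mem_image_of_mem _ hw)
    have hf4 : ∀ c ∈ C, f c ≠ a := by
      intro c hc' e
      exact (mem_sdiff.1 (hf2 c hc')).2 (e ▸ ha1)
    apply M.ncol
    set χ : V → Fin (k - 1) := fun w => if w ∈ C then f w else if w = x then a else ψ w with hχ
    have χC : ∀ c ∈ C, χ c = f c := fun c h => by simp only [hχ, if_pos h]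
    have χx : χ x = a := by simp only [hχ, if_neg hxC, if_true]
    have χo : ∀ w, w ∉ C → w ≠ x → χ w = ψ w := fun w h1 h2 => by
      simp only [hχ, if_neg h1, if_neg h2]
    have k1 : ∀ c ∈ C, ∀ w ∈ U, G.Adj c w → χ c ≠ χ w := by
      intro c hc' w hw hcw
      rw [χC c hc']
      by_cases h1 : w ∈ C
      · rw [χC w h1]; exact fun e => hcw.ne (hf1 hc' h1 e)
      rcases hCN c hc' w hw hcw with rfl | h2
      · rw [χx]; exact hf4 c hc'
      · rw [χo w h1 (fun e => hxK (e ▸ h2))]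
        exact hf3 c hc' w (mem_sdiff.2 ⟨h2, h1⟩)
    have k2 : ∀ w ∈ U, w ∉ C → G.Adj x w → χ x ≠ χ w := by
      intro w hw hwC hxw e
      rw [χx, χo w hwC hxw.ne'] at e
      exact ha2 (e ▸ mem_image_of_mem _ (mem_sdiff.2 ⟨mem_nb.2 ⟨hw, hxw⟩, hwC⟩))
    refine ⟨χ, fun p hp q hq hpq => ?_⟩
    by_cases h1 : p ∈ C
    · exact k1 p h1 q hq hpq
    by_cases h2 : q ∈ C
    · exact (k1 q h2 p hp hpq.symm).symm
    by_cases h3 : p = x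
    · subst h3; exact k2 q hq h2 hpq
    by_cases h4 : q = x
    · subst h4; exact (k2 p hp h1 hpq.symm).symm
    rw [χo p h1 h3, χo q h2 h4]
    exact hψG p (by simp [hU', hp, h1, h3]) q (by simp [hU', hq, h2, h4]) hpq
  obtain ⟨W, hWU', hWne, hWr, -⟩ := M.lemF hU'U E hnc
  have hWU := hWU'.trans hU'U.1
  set i := (E.filter (fun p => p.1 ∈ W ∧ p.2 ∈ W)).card with hi
  have hi0 : i ≠ 0 := by
    intro h
    rw [h] at hWr
    exact M.good' hWU hWne (by simpa using hWr)
  have huW : u ∈ W := by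
    obtain ⟨p, hp⟩ := card_ne_zero.1 hi0
    have hp' := mem_filter.1 hp
    obtain ⟨w, hw, rfl⟩ := mem_image.1 hp'.1
    exact hp'.2.1
  set J := W ∩ K with hJ
  have hiJ : i ≤ J.card := by
    have : E.filter (fun p => p.1 ∈ W ∧ p.2 ∈ W) ⊆ J.image (fun w => (u, w)) := by
      intro p hp
      have hp' := mem_filter.1 hp
      obtain ⟨w, hw, rfl⟩ := mem_image.1 hp'.1
      exact mem_image_of_mem _ (mem_inter.2 ⟨hp'.2.2, (mem_sdiff.1 hw).1⟩)
    exact (card_le_card this).trans card_image_le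
  have hJs : J ⊆ K \ C := by
    intro w hw
    have hw' := mem_inter.1 hw
    have := hWU' hw'.1
    simp only [hU', mem_sdiff, mem_insert, not_or] at this
    exact mem_sdiff.2 ⟨hw'.2, this.2.2⟩
  have hJc := card_le_card hJs
  have hsm := rho_submod k hk G W K
  rw [rho_clq' hk hc hKc, ← hJ, rho_clq k (hc.sub (inter_subset_right : J ⊆ K))] at hsm
  have hss : W ∪ K ⊂ U := Finset.ssubset_iff_subset_ne.2 ⟨union_subset hWU hKU, fun e => by
    have h1 : x ∈ W ∪ K := by rw [e]; exact hxU
    rcases mem_union.1 h1 with h | h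
    · have := hWU' h; simp [hU'] at this
    · exact hxK h⟩
  have h2 := M.lem2 hss (by
    have h1 : insert u K ⊆ W ∪ K := insert_subset (mem_union_left _ huW) subset_union_right
    have h3 := card_le_card h1
    rw [card_insert_of_notMem huK] at h3
    omega)
  have hiJz : (i : ℤ) ≤ J.card := by exact_mod_cast hiJ
  have hj1 : (1 : ℤ) ≤ J.card := by omega
  have hj2 : (J.card : ℤ) ≤ k - 3 := by omega
  have h5 := mul_le_mul_of_nonneg_left hiJz (show (0 : ℤ) ≤ 2 * ((k : ℤ) - 1) by linarith)
  have h6 : 0 ≤ ((J.card : ℤ) - 1) * ((k : ℤ) * (k - 3) - (k - 1) * J.card) := by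
    apply mul_nonneg (by linarith); nlinarith
  nlinarith

lemma MinCE.lemD (M : MinCE k G U) {x v : V} (hx : x ∈ U) (hdx : dg G U x = k - 1)
    (hno : ∀ z ∈ nb G U x, ¬ Clq G ((insert x (nb G U x)).erase z))
    (hv : v ∈ nb G U x) (hvC : v ∉ cl G U x) : k - 1 + (cl G U x).card ≤ dg G U v := by
  by_contra hlt
  by_cases ht : dg G U v = k - 1 → (cl G U v).card ≤ (cl G U x).card
  · exact hno v hv (M.lemA hx hdx hv hvC (by omega) ht)
  · rw [Classical.not_imp] at ht
    obtain ⟨hdv, ht⟩ := ht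
    have hvU := (mem_nb.1 hv).1
    have hxn : x ∈ nb G U v := mem_nb.2 ⟨hx, (mem_nb.1 hv).2.symm⟩
    have hxC : x ∉ cl G U v := fun h => hvC (cl_symm hvU h)
    have h1 : 0 < (cl G U x).card := card_pos.2 ⟨x, self_mem_cl hx⟩
    exact M.kill hvU hdv hxn hxC (M.lemA hvU hdv hxn hxC (by omega) (by omega)) (by omega) hdx

end KY


open SimpleGraph
set_option linter.unusedSectionVars false
set_option linter.unusedVariables false
set_option linter.style.longLine false
namespace KY
open scoped Classical
open Finset
variable {V : Type*} [Fintype V]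

variable {k : ℕ} {G : SimpleGraph V} {U : Finset V}

lemma list_color {n : ℕ} (D : V → V → Prop) (hn : 0 < n) : ∀ (m : ℕ) (S : Finset V)
    (L : V → Finset (Fin n)), S.card ≤ m →
    (∀ S' ⊆ S, ∃ I ⊆ S', (∀ u ∈ I, ∀ v ∈ I, ¬ G.Adj u v) ∧ ∀ u ∈ S', u ∉ I → ∃ v ∈ I, D u v) →
    (∀ u ∈ S, (S.filter (D u)).card < (L u).card) →
    ∃ c : V → Fin n, (∀ u ∈ S, c u ∈ L u) ∧ ∀ u ∈ S, ∀ v ∈ S, G.Adj u v → c u ≠ c v := by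
  intro m
  induction m with
  | zero =>
    intro S L hS _ _
    have : S = ∅ := card_eq_zero.1 (by omega)
    subst this
    exact ⟨fun _ => ⟨0, hn⟩, by simp, by simp⟩
  | succ m ih =>
    intro S L hS hker hL
    rcases S.eq_empty_or_nonempty with rfl | ⟨u0, hu0⟩
    · exact ⟨fun _ => ⟨0, hn⟩, by simp, by simp⟩
    obtain ⟨α, hα⟩ := card_pos.1 (lt_of_le_of_lt (Nat.zero_le _) (hL u0 hu0))
    obtain ⟨I, hI1, hI2, hI3⟩ := hker (S.filter (fun v => α ∈ L v)) (filter_subset _ _)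
    have hIS : I ⊆ S := hI1.trans (filter_subset _ _)
    have hIne : I.Nonempty := by
      by_cases h : u0 ∈ I
      · exact ⟨u0, h⟩
      · obtain ⟨v, hv, _⟩ := hI3 u0 (by simp [hu0, hα]) h
        exact ⟨v, hv⟩
    obtain ⟨c, hc1, hc2⟩ := ih (S \ I) (fun v => (L v).erase α) (by
      rw [card_sdiff_of_subset hIS]
      have := card_pos.2 hIne
      omega) (fun S' hS' => hker S' (hS'.trans sdiff_subset)) (by
      intro u hu
      have hu' := mem_sdiff.1 hu
      have h1 := hL u hu'.1
      by_cases hαu : α ∈ L u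
      · obtain ⟨v, hv, hD⟩ := hI3 u (by simp [hu'.1, hαu]) hu'.2
        rw [card_erase_of_mem hαu]
        have h2 : (S \ I).filter (D u) ⊆ (S.filter (D u)).erase v := by
          intro w hw
          simp only [mem_filter, mem_sdiff] at hw
          simp only [mem_erase, mem_filter]
          exact ⟨fun e => hw.1.2 (e ▸ hv), hw.1.1, hw.2⟩
        have h3 := card_le_card h2
        have hvm : v ∈ S.filter (D u) := by simp [hIS hv, hD]
        rw [card_erase_of_mem hvm] at h3
        have := card_pos.2 ⟨v, hvm⟩
        omega
      · rw [erase_eq_of_notMem hαu]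
        exact lt_of_le_of_lt (card_le_card (filter_subset_filter _ sdiff_subset)) h1)
    refine ⟨fun v => if v ∈ I then α else c v, ?_, ?_⟩
    · intro u hu
      by_cases h : u ∈ I
      · simp only [h, if_true]; exact (mem_filter.1 (hI1 h)).2
      · simp only [h, if_false]; exact mem_of_mem_erase (hc1 u (by simp [hu, h]))
    · intro u hu v hv huv
      by_cases h : u ∈ I <;> by_cases h' : v ∈ I <;> simp only [h, h', if_true, if_false]
      · exact absurd huv (hI2 u h v h')
      · exact (ne_of_mem_erase (hc1 v (by simp [hv, h']))).symm
      · exact (ne_of_mem_erase (hc1 u (by simp [hu, h])))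
      · exact hc2 u (by simp [hu, h]) v (by simp [hv, h']) huv

lemma kernel_exists (D : V → V → Prop) (A B : Finset V) (hA : ∀ u ∈ A, ∀ v ∈ A, ¬ G.Adj u v)
    (S : Finset V) (hAB : ∀ a ∈ S, ∀ b ∈ S, a ∈ A → b ∈ B → G.Adj a b → D a b ∨ D b a)
    (hBB : ∀ a ∈ S, ∀ b ∈ S, a ∈ B → b ∈ B → G.Adj a b → D a b) : ∀ (m : ℕ) (S' : Finset V),
    S' ⊆ S → S' ⊆ A ∪ B → S'.card ≤ m →
    ∃ I ⊆ S', (∀ u ∈ I, ∀ v ∈ I, ¬ G.Adj u v) ∧ ∀ u ∈ S', u ∉ I → ∃ v ∈ I, D u v := by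
  intro m
  induction m with
  | zero =>
    intro S' _ _ h
    have : S' = ∅ := card_eq_zero.1 (by omega)
    subst this
    exact ⟨∅, by simp, by simp, by simp⟩
  | succ m ih =>
    intro S' hS hSAB hc
    by_cases hall : ∀ b ∈ S', b ∉ A → ∃ a ∈ S', a ∈ A ∧ D b a
    · refine ⟨S'.filter (fun a => a ∈ A), filter_subset _ _, ?_, ?_⟩
      · intro u hu v hv
        exact hA u (mem_filter.1 hu).2 v (mem_filter.1 hv).2
      · intro u hu hn
        obtain ⟨a, h1, h2, h3⟩ := hall u hu (fun h => hn (by simp [hu, h]))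
        exact ⟨a, by simp [h1, h2], h3⟩
    · push Not at hall
      obtain ⟨b, hb, hbA, hno⟩ := hall
      have hbB : b ∈ B := (mem_union.1 (hSAB hb)).resolve_left hbA
      obtain ⟨I, h1, h2, h3⟩ := ih ((S'.erase b).filter (fun w => ¬ G.Adj b w))
        ((filter_subset _ _).trans ((erase_subset _ _).trans hS))
        ((filter_subset _ _).trans ((erase_subset _ _).trans hSAB)) (by
          have h1 := card_filter_le (S'.erase b) (fun w => ¬ G.Adj b w)
          rw [card_erase_of_mem hb] at h1
          omega)
      have hIb : ∀ w ∈ I, ¬ G.Adj b w := fun w hw => (mem_filter.1 (h1 hw)).2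
      refine ⟨insert b I, insert_subset hb
        (h1.trans ((filter_subset _ _).trans (erase_subset _ _))), ?_, ?_⟩
      · intro u hu v hv
        rcases mem_insert.1 hu with e1 | hu2 <;> rcases mem_insert.1 hv with e2 | hv2
        · rw [e1, e2]; exact G.irrefl
        · rw [e1]; exact hIb v hv2
        · rw [e2]; exact fun h => hIb u hu2 h.symm
        · exact h2 u hu2 v hv2
      · intro u hu hn
        simp only [mem_insert, not_or] at hn
        by_cases hbu : G.Adj b u
        · refine ⟨b, by simp, ?_⟩
          rcases mem_union.1 (hSAB hu) with h | h
          · exact (hAB u (hS hu) b (hS hb) h hbB hbu.symm).resolve_right (hno u hu h)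
          · exact hBB u (hS hu) b (hS hb) h hbB hbu.symm
        · obtain ⟨v, hv, hD⟩ := h3 u (by simp [hu, hn.1, hbu]) hn.2
          exact ⟨v, by simp [hv], hD⟩

set_option maxHeartbeats 1000000 in
lemma MinCE.kernel (M : MinCE k G U) {A B : Finset V} (hAU : A ⊆ U) (hBU : B ⊆ U)
    (hd : Disjoint A B)
    (hA : ∀ u ∈ A, ∀ v ∈ A, ¬ G.Adj u v) (hAd : ∀ a ∈ A, dg G U a = k - 1)
    (hBd : ∀ b ∈ B, dg G U b = k) : ee G A B ≤ A.card + 2 * B.card := by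
  by_contra hlt
  push Not at hlt
  have hk := M.hk
  have hV : Nonempty V := ⟨M.ne.choose⟩
  set g : Finset V → ℤ := fun S => ee G (S ∩ A) (S ∩ B) - (S ∩ A).card - 2 * (S ∩ B).card with hg
  obtain ⟨S, hSm, hSmax⟩ := exists_max_image (A ∪ B).powerset g ⟨∅, by simp⟩
  rw [mem_powerset] at hSm
  have hgpos : 0 < g S := by
    have h1 := hSmax (A ∪ B) (mem_powerset.2 (Finset.Subset.refl _))
    have e1 : (A ∪ B) ∩ A = A := by ext; simp only [mem_inter, mem_union]; tauto
    have e2 : (A ∪ B) ∩ B = B := by ext; simp only [mem_inter, mem_union]; tauto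
    simp only [hg] at h1 ⊢
    rw [e1, e2] at h1
    linarith
  have hSne : S.Nonempty := by
    rw [nonempty_iff_ne_empty]
    rintro rfl
    simp [hg, ee] at hgpos
  set SA := S ∩ A with hSA
  set SB := S ∩ B with hSB
  have hSU : S ⊆ U := hSm.trans (union_subset hAU hBU)
  set T : Finset (V × V) := (SA ×ˢ SB).filter (fun p => G.Adj p.1 p.2) with hT
  have hAB : ∀ v, v ∈ A → v ∉ B := fun v hv => Finset.disjoint_left.1 hd hv
  -- Hall
  set slots : Finset (V × Bool) := (SA ×ˢ {false}) ∪ (SB ×ˢ univ) with hslots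
  obtain ⟨f, hf1, hf2⟩ := hall_on slots
    (fun s => T.filter (fun p => p.1 = s.1 ∨ p.2 = s.1)) (by
    intro X hX
    set Z := X.image Prod.fst with hZ
    have hXc : X.card ≤ (SA ∩ Z).card + 2 * (SB ∩ Z).card := by
      have : X ⊆ ((SA ∩ Z) ×ˢ {false}) ∪ ((SB ∩ Z) ×ˢ univ) := by
        intro s hs
        have h1 := hX hs
        have h2 : s.1 ∈ Z := mem_image_of_mem _ hs
        simp only [hslots, mem_union, mem_product, mem_inter] at h1 ⊢
        tauto
      have h3 := card_le_card this
      have h4 := card_union_le ((SA ∩ Z) ×ˢ ({false} : Finset Bool)) ((SB ∩ Z) ×ˢ univ)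
      rw [card_product, card_product, card_singleton, card_univ, Fintype.card_bool] at h4
      omega
    have hbi : X.biUnion (fun s => T.filter (fun p => p.1 = s.1 ∨ p.2 = s.1)) =
        T.filter (fun p => p.1 ∈ Z ∨ p.2 ∈ Z) := by
      ext p
      simp only [mem_biUnion, mem_filter, hZ, mem_image]
      constructor
      · rintro ⟨s, hs, hp, h | h⟩
        · exact ⟨hp, Or.inl ⟨s, hs, h.symm⟩⟩
        · exact ⟨hp, Or.inr ⟨s, hs, h.symm⟩⟩
      · rintro ⟨hp, ⟨s, hs, h⟩ | ⟨s, hs, h⟩⟩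
        · exact ⟨s, hs, hp, Or.inl h.symm⟩
        · exact ⟨s, hs, hp, Or.inr h.symm⟩
    rw [hbi]
    have hmax := hSmax (S \ Z) (mem_powerset.2 (sdiff_subset.trans hSm))
    simp only [hg] at hmax
    have eA : S \ Z ∩ A = SA \ Z := by ext; simp only [hSA, mem_inter, mem_sdiff]; tauto
    have eB : S \ Z ∩ B = SB \ Z := by ext; simp only [hSB, mem_inter, mem_sdiff]; tauto
    rw [eA, eB, ee_card, ee_card, ← hSA, ← hSB, ← hT] at hmax
    have e3 : ((SA \ Z) ×ˢ (SB \ Z)).filter (fun p => G.Adj p.1 p.2) =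
        T.filter (fun p => ¬ (p.1 ∈ Z ∨ p.2 ∈ Z)) := by
      ext p; simp only [hT, mem_filter, mem_product, mem_sdiff]; tauto
    rw [e3] at hmax
    have e4 := card_filter_add_card_filter_not (s := T) (fun p => p.1 ∈ Z ∨ p.2 ∈ Z)
    have e5 := card_sdiff_add_card_inter SA Z
    have e6 := card_sdiff_add_card_inter SB Z
    omega)
  have hfT : ∀ s ∈ slots, f s ∈ T ∧ ((f s).1 = s.1 ∨ (f s).2 = s.1) := fun s hs =>
    mem_filter.1 (hf2 s hs)
  have slA : ∀ a ∈ SA, (a, false) ∈ slots := by intro a ha; simp [hslots, ha]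
  have slB : ∀ b ∈ SB, ∀ i, (b, i) ∈ slots := by intro b hb i; simp [hslots, hb]
  have memSA : ∀ {v}, v ∈ SA ↔ v ∈ S ∧ v ∈ A := by intro v; exact mem_inter
  have memSB : ∀ {v}, v ∈ SB ↔ v ∈ S ∧ v ∈ B := by intro v; exact mem_inter
  -- target neighbor of each slot
  have fA : ∀ a ∈ SA, (f (a, false)).1 = a ∧ (f (a, false)).2 ∈ SB ∧ G.Adj a (f (a, false)).2 := by
    intro a ha
    obtain ⟨h1, h2⟩ := hfT _ (slA a ha)
    simp only [hT, mem_filter, mem_product] at h1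
    have : (f (a, false)).1 = a := h2.resolve_right (fun e => by
      have := h1.1.2; rw [e] at this
      exact hAB a (memSA.1 ha).2 (memSB.1 this).2)
    refine ⟨this, h1.1.2, ?_⟩
    have h3 := h1.2
    rw [this] at h3; exact h3
  have fB : ∀ b ∈ SB, ∀ i, (f (b, i)).2 = b ∧ (f (b, i)).1 ∈ SA ∧ G.Adj (f (b, i)).1 b := by
    intro b hb i
    obtain ⟨h1, h2⟩ := hfT _ (slB b hb i)
    simp only [hT, mem_filter, mem_product] at h1
    have : (f (b, i)).2 = b := h2.resolve_left (fun e => by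
      have := h1.1.1; rw [e] at this
      exact hAB b (memSA.1 this).2 (memSB.1 hb).2)
    refine ⟨this, h1.1.1, ?_⟩
    have h3 := h1.2
    rw [this] at h3; exact h3
  set D : V → V → Prop := fun u v => G.Adj u v ∧ (u ∈ A → v ≠ (f (u, false)).2) ∧
    (u ∈ B → v ≠ (f (u, false)).1 ∧ v ≠ (f (u, true)).1) with hD
  have hss : U \ S ⊂ U := Finset.ssubset_iff_subset_ne.2 ⟨sdiff_subset, fun e => by
    obtain ⟨x, hx⟩ := hSne
    have : x ∈ U \ S := by rw [e]; exact hSU hx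
    exact (mem_sdiff.1 this).2 hx⟩
  obtain ⟨c, hc⟩ := M.col hss
  set L : V → Finset (Fin (k - 1)) := fun u => univ \ (nb G (U \ S) u).image c with hL
  have hLc : ∀ u, k - 1 ≤ (L u).card + (nb G (U \ S) u).card := by
    intro u
    have h1 := card_sdiff_add_card_inter (univ : Finset (Fin (k - 1))) ((nb G (U \ S) u).image c)
    rw [card_univ, Fintype.card_fin, univ_inter] at h1
    have h2 : ((nb G (U \ S) u).image c).card ≤ (nb G (U \ S) u).card := card_image_le
    simp only [hL]
    omega
  have hsplit : ∀ u, dg G U u = (nb G (U \ S) u).card + (nb G S u).card := by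
    intro u
    have : nb G U u = nb G (U \ S) u ∪ nb G S u := by
      ext w; simp only [mem_union, mem_nb, mem_sdiff]
      constructor
      · rintro ⟨h1, h2⟩; by_cases h : w ∈ S
        · exact Or.inr ⟨h, h2⟩
        · exact Or.inl ⟨⟨h1, h⟩, h2⟩
      · rintro (h | h)
        · exact ⟨h.1.1, h.2⟩
        · exact ⟨hSU h.1, h.2⟩
    unfold dg
    rw [this, card_union_of_disjoint]
    rw [Finset.disjoint_left]
    intro w h1 h2
    exact (mem_sdiff.1 (mem_nb.1 h1).1).2 (mem_nb.1 h2).1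
  obtain ⟨χ, hχ1, hχ2⟩ := list_color (G := G) D (show 0 < k - 1 by omega) S.card S L le_rfl (by
    intro S' hS'
    refine kernel_exists D A B hA S ?_ ?_ S'.card S' hS' (hS'.trans hSm) le_rfl
    · intro a ha b hb haA hbB hab
      by_contra hno
      rw [not_or] at hno
      have haS : a ∈ SA := memSA.2 ⟨ha, haA⟩
      have hbS : b ∈ SB := memSB.2 ⟨hb, hbB⟩
      have h1 : b = (f (a, false)).2 := by
        by_contra hne
        exact hno.1 ⟨hab, fun _ => hne, fun h => absurd h (hAB a haA)⟩
      have h2 : ∃ i, a = (f (b, i)).1 := by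
        by_contra hne
        push Not at hne
        exact hno.2 ⟨hab.symm, fun h => absurd hbB (hAB b h), fun _ => ⟨hne false, hne true⟩⟩
      obtain ⟨i, h2⟩ := h2
      have h3 : f (a, false) = f (b, i) := by
        apply Prod.ext
        · rw [(fA a haS).1, ← h2]
        · rw [(fB b hbS i).1, ← h1]
      have h4 := hf1 (slA a haS) (slB b hbS i) h3
      exact hab.ne (congrArg Prod.fst h4)
    · intro a ha b hb haB hbB hab
      refine ⟨hab, fun h => absurd haB (hAB a h), fun _ => ⟨?_, ?_⟩⟩
      · rintro rfl
        exact hAB _ (memSA.1 (fB a (memSB.2 ⟨ha, haB⟩) false).2.1).2 hbB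
      · rintro rfl
        exact hAB _ (memSA.1 (fB a (memSB.2 ⟨ha, haB⟩) true).2.1).2 hbB) (by
    intro u hu
    have h1 := hLc u
    have h2 := hsplit u
    rcases mem_union.1 (hSm hu) with h | h
    · have h3 := fA u (memSA.2 ⟨hu, h⟩)
      have h4 : S.filter (D u) ⊆ (nb G S u).erase (f (u, false)).2 := by
        intro w hw
        obtain ⟨hw1, hw2⟩ := mem_filter.1 hw
        exact mem_erase.2 ⟨hw2.2.1 h, mem_nb.2 ⟨hw1, hw2.1⟩⟩
      have h5 : (f (u, false)).2 ∈ nb G S u := mem_nb.2 ⟨(memSB.1 h3.2.1).1, h3.2.2⟩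
      have h6 := card_le_card h4
      rw [card_erase_of_mem h5] at h6
      have := card_pos.2 ⟨_, h5⟩
      have := hAd u h
      have h7 : (S.filter (D u)).card < (L u).card := by omega
      convert h7
    · have h3 := fB u (memSB.2 ⟨hu, h⟩)
      have h4 : S.filter (D u) ⊆ ((nb G S u).erase (f (u, false)).1).erase (f (u, true)).1 := by
        intro w hw
        obtain ⟨hw1, hw2⟩ := mem_filter.1 hw
        exact mem_erase.2 ⟨(hw2.2.2 h).2, mem_erase.2 ⟨(hw2.2.2 h).1, mem_nb.2 ⟨hw1, hw2.1⟩⟩⟩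
      have h5 : ∀ i, (f (u, i)).1 ∈ nb G S u := fun i =>
        mem_nb.2 ⟨(memSA.1 (h3 i).2.1).1, (h3 i).2.2.symm⟩
      have hne : (f (u, true)).1 ≠ (f (u, false)).1 := by
        intro e
        have h7 : f (u, true) = f (u, false) :=
          Prod.ext e (by rw [(h3 true).1, (h3 false).1])
        have h8 := hf1 (slB u (memSB.2 ⟨hu, h⟩) true) (slB u (memSB.2 ⟨hu, h⟩) false) h7
        have := congrArg Prod.snd h8; simp at this
      have h6 := card_le_card h4
      have h9 : (f (u, true)).1 ∈ (nb G S u).erase (f (u, false)).1 := mem_erase.2 ⟨hne, h5 true⟩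
      have h10 := card_pos.2 ⟨_, h9⟩
      rw [card_erase_of_mem h9, card_erase_of_mem (h5 false)] at h6
      rw [card_erase_of_mem (h5 false)] at h10
      have := hBd u h
      have h7 : (S.filter (D u)).card < (L u).card := by omega
      convert h7)
  apply M.ncol
  have key : ∀ u ∈ S, ∀ w ∈ U, w ∉ S → G.Adj u w → χ u ≠ c w := by
    intro u hu w hw hwS huw e
    exact (mem_sdiff.1 (hχ1 u hu)).2 (e ▸ mem_image_of_mem c (mem_nb.2 ⟨mem_sdiff.2 ⟨hw, hwS⟩, huw⟩))
  refine ⟨fun u => if u ∈ S then χ u else c u, fun u hu w hw huw => ?_⟩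
  by_cases h1 : u ∈ S <;> by_cases h2 : w ∈ S <;> simp only [h1, h2, if_true, if_false]
  · exact hχ2 u h1 w h2 huw
  · exact key u h1 w hw h2 huw
  · exact (key w h2 u hu h1 huw.symm).symm
  · exact hc u (mem_sdiff.2 ⟨hu, h1⟩) w (mem_sdiff.2 ⟨hw, h2⟩) huw

end KY


open SimpleGraph
set_option linter.unusedSectionVars false
set_option linter.unusedVariables false
set_option linter.style.longLine false
namespace KY
open scoped Classical
open Finset
variable {V : Type*} [Fintype V]

variable {k : ℕ} {G : SimpleGraph V} {U : Finset V}

/-- setup for the bad clique lemma -/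
structure BS (k : ℕ) (G : SimpleGraph V) (U K : Finset V) (x z : V) : Prop where
  M : MinCE k G U
  hKU : K ⊆ U
  hc : Clq G K
  hn : K.card = k - 1
  hx : x ∈ K
  hox : nb G (U \ K) x = {z}
  ho : ∀ w ∈ K, w ≠ x → (nb G (U \ K) w).card = 2

variable {K : Finset V} {x z : V}

lemma BS.zmem (B : BS k G U K x z) : z ∈ U ∧ z ∉ K ∧ G.Adj x z := by
  have : z ∈ nb G (U \ K) x := by rw [B.hox]; simp
  have := mem_nb.1 this
  exact ⟨(mem_sdiff.1 this.1).1, (mem_sdiff.1 this.1).2, this.2⟩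

lemma BS.ss (B : BS k G U K x z) : U \ K ⊂ U :=
  Finset.ssubset_iff_subset_ne.2 ⟨sdiff_subset, fun e => by
    have : x ∈ U \ K := by rw [e]; exact B.hKU B.hx
    exact (mem_sdiff.1 this).2 B.hx⟩

/-- extension -/
lemma BS.ext (B : BS k G U K x z) {ψ : V → Fin (k - 1)}
    (hψ : ∀ u ∈ U \ K, ∀ v ∈ U \ K, G.Adj u v → ψ u ≠ ψ v) {w1 w2 w3 : V}
    (hw1 : w1 ∈ K) (hw1z : ψ z ∉ (nb G (U \ K) w1).image ψ)
    (hw2 : w2 ∈ K) (hw3 : w3 ∈ K) (h2x : w2 ≠ x) (h3x : w3 ≠ x)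
    (h23 : (nb G (U \ K) w2).image ψ ≠ (nb G (U \ K) w3).image ψ) : False := by
  have hk := B.M.hk
  have : NeZero (k - 1) := ⟨by omega⟩
  set I : V → Finset (Fin (k - 1)) := fun w => (nb G (U \ K) w).image ψ with hI
  have hIx : I x = {ψ z} := by simp only [hI]; rw [B.hox, image_singleton]
  have hIc : ∀ w ∈ K, (I w).card ≤ 2 := by
    intro w hw
    by_cases h : w = x
    · subst h; rw [hIx]; simp
    · exact card_image_le.trans (B.ho w hw h).le
  obtain ⟨f, hf1, hf2⟩ := hall_on K (fun w => univ \ I w) (by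
    intro s hs
    rcases s.eq_empty_or_nonempty with rfl | ⟨w0, hw0⟩
    · simp
    -- complement of the union
    have key : ∀ J : Finset (Fin (k - 1)), (∀ c, (∀ w ∈ s, c ∈ I w) → c ∈ J) →
        k - 1 ≤ (s.biUnion (fun w => univ \ I w)).card + J.card := by
      intro J hJ
      have h1 : (univ : Finset (Fin (k - 1))) ⊆ (s.biUnion (fun w => univ \ I w)) ∪ J := by
        intro c _
        by_cases h : ∀ w ∈ s, c ∈ I w
        · exact mem_union_right _ (hJ c h)
        · push Not at h
          obtain ⟨w, hw, hcw⟩ := h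
          exact mem_union_left _ (mem_biUnion.2 ⟨w, hw, by simp [hcw]⟩)
      have h2 := (card_le_card h1).trans (card_union_le _ _)
      rwa [card_univ, Fintype.card_fin] at h2
    have hsc := card_le_card hs
    rw [B.hn] at hsc
    by_cases hsK : s = K
    · have := key ∅ (by
        intro c h
        exfalso
        have h1 := h x (hsK ▸ B.hx)
        rw [hIx, mem_singleton] at h1
        subst h1
        exact hw1z (h w1 (hsK ▸ hw1)))
      rw [card_empty] at this
      omega
    have hlt : s.card < K.card := card_lt_card (Finset.ssubset_iff_subset_ne.2 ⟨hs, hsK⟩)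
    rw [B.hn] at hlt
    by_cases hxs : x ∈ s
    · have := key {ψ z} (by
        intro c h
        have := h x hxs
        rwa [hIx] at this)
      rw [card_singleton] at this
      omega
    by_cases hsm : s.card + 2 ≤ k - 1
    · have := key (I w0) (fun c h => h w0 hw0)
      have := hIc w0 (hs hw0)
      omega
    have hse : s = K.erase x := by
      refine eq_of_subset_of_card_le (fun w hw => mem_erase.2 ⟨fun e => hxs (e ▸ hw), hs hw⟩) ?_
      rw [card_erase_of_mem B.hx, B.hn]; omega
    have h2s : w2 ∈ s := by rw [hse]; simp [hw2, h2x]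
    have h3s : w3 ∈ s := by rw [hse]; simp [hw3, h3x]
    have h4 := key (I w2 ∩ I w3) (fun c h => mem_inter.2 ⟨h w2 h2s, h w3 h3s⟩)
    by_cases h5 : (I w2 ∩ I w3).card ≤ 1
    · omega
    exfalso
    have e2 : I w2 ∩ I w3 = I w2 := eq_of_subset_of_card_le inter_subset_left (by
      have := hIc w2 hw2; omega)
    have e3 : I w2 ∩ I w3 = I w3 := eq_of_subset_of_card_le inter_subset_right (by
      have := hIc w3 hw3; omega)
    exact h23 (e2.symm.trans e3))
  apply B.M.ncol
  have kk : ∀ w ∈ K, ∀ u ∈ U, u ∉ K → G.Adj w u → f w ≠ ψ u := by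
    intro w hw u hu huK hwu e
    exact (mem_sdiff.1 (hf2 w hw)).2
      (e ▸ mem_image_of_mem ψ (mem_nb.2 ⟨mem_sdiff.2 ⟨hu, huK⟩, hwu⟩))
  refine ⟨fun w => if w ∈ K then f w else ψ w, fun u hu v hv huv => ?_⟩
  by_cases h1 : u ∈ K <;> by_cases h2 : v ∈ K <;> simp only [h1, h2, if_true, if_false]
  · exact fun e => huv.ne (hf1 h1 h2 e)
  · exact kk u h1 v hv h2 huv
  · exact (kk v h2 u hu h1 huv.symm).symm
  · exact hψ u (mem_sdiff.2 ⟨hu, h1⟩) v (mem_sdiff.2 ⟨hv, h2⟩) huv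

/-- closing lemma -/
lemma BS.cl (B : BS k G U K x z) {X : Finset V} (hX : X ⊆ U \ K) (hne : X.Nonempty)
    (h1 : rho k G X ≤ 2 * ((k : ℤ) - 1) * ee G K X)
    (h2 : rho k G X ≤ (k : ℤ) * (k - 3) + 2 * ((k : ℤ) - 1) ^ 2) : False := by
  have hk := B.M.hk
  have hd : Disjoint K X := by
    rw [Finset.disjoint_left]; intro a ha hb; exact (mem_sdiff.1 (hX hb)).2 ha
  have e := rho_union k G hd
  rw [rho_clq' hk B.hc B.hn] at e
  have hsub : K ∪ X ⊆ U := union_subset B.hKU (hX.trans sdiff_subset)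
  by_cases hU : K ∪ X = U
  · have hXe : X = U \ K := by
      refine Finset.Subset.antisymm hX fun u hu => ?_
      have hu' := mem_sdiff.1 hu
      rw [← hU] at hu'
      exact (mem_union.1 hu'.1).resolve_left hu'.2
    have hee : ee G K X = 2 * (k : ℤ) - 3 := by
      rw [hXe, ee_eq_sum, ← add_sum_erase K _ B.hx, B.hox,
        sum_congr rfl (g := fun _ => (2 : ℤ)) (fun w hw => by
          rw [B.ho w (mem_of_mem_erase hw) (ne_of_mem_erase hw)]; rfl)]
      rw [sum_const, card_erase_of_mem B.hx, B.hn, card_singleton]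
      have : ((k - 1 - 1 : ℕ) : ℤ) = k - 2 := by omega
      rw [nsmul_eq_mul, this]; push_cast; ring
    rw [hee] at e
    refine B.M.good' (Finset.Subset.refl U) B.M.ne ?_
    rw [← hU, e]
    linarith
  · have := B.M.lem2 (Finset.ssubset_iff_subset_ne.2 ⟨hsub, hU⟩) (by
      rw [card_union_of_disjoint hd, B.hn]
      have := card_pos.2 hne
      omega)
    linarith

lemma filt_le {X : Finset V} (hX : X ⊆ U \ K) (w : V) :
    nb G X w = nb G (U \ K) w ∩ X := by
  ext u; simp only [mem_inter, mem_nb]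
  exact ⟨fun h => ⟨⟨hX h.1, h.2⟩, h.1⟩, fun h => ⟨h.2, h.1.2⟩⟩

/-- edge counting from distinct clique vertices -/
lemma BS.cnt (B : BS k G U K x z) {X : Finset V} (hX : X ⊆ U \ K) {P : Finset V} (hP : P ⊆ K) :
    ∑ w ∈ P, ((nb G (U \ K) w ∩ X).card : ℤ) ≤ ee G K X := by
  rw [ee_eq_sum]
  calc _ = ∑ w ∈ P, ((nb G X w).card : ℤ) := sum_congr rfl fun w _ => by rw [filt_le hX]
    _ ≤ _ := sum_le_sum_of_subset_of_nonneg hP fun _ _ _ => by positivity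

end KY


open SimpleGraph
set_option linter.unusedSectionVars false
set_option linter.unusedVariables false
set_option linter.style.longLine false
namespace KY
open scoped Classical
open Finset
variable {V : Type*} [Fintype V]

variable {k : ℕ} {G : SimpleGraph V} {U : Finset V} {K : Finset V} {x z : V}

lemma BS.new (B : BS k G U K x z) {w1 w2 a b : V} (hw1 : w1 ∈ K) (hw2 : w2 ∈ K) (h1x : w1 ≠ x)
    (h2x : w2 ≠ x) (hO1 : nb G (U \ K) w1 = {a, b}) (hab : a ≠ b) (hz1 : z ∉ nb G (U \ K) w1)
    (ha2 : a ∉ nb G (U \ K) w2) :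
    ∃ W ⊆ U \ K, W.Nonempty ∧ ∃ i : ℕ, k - 1 ≤ 2 * i ∧
      rho k G W ≤ (k : ℤ) * (k - 3) + 2 * (k - 1) * i ∧
      i ≤ (if z ∈ W ∧ b ∈ W then 1 else 0) +
        (if a ∈ W then ((nb G (U \ K) w2).erase b ∩ W).card else 0) := by
  have hk := B.M.hk
  set O2 := nb G (U \ K) w2 with hO2
  have hO2c : O2.card = 2 := B.ho w2 hw2 h2x
  set E : Finset (V × V) := insert (z, b) ((O2.erase b).image (fun t => (a, t))) with hE
  have haU : a ∈ U \ K := nb_sub w1 (by rw [hO1]; simp)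
  have hbU : b ∈ U \ K := nb_sub w1 (by rw [hO1]; simp)
  have hzU : z ∈ U \ K := mem_sdiff.2 ⟨B.zmem.1, B.zmem.2.1⟩
  rw [hO1, mem_insert, mem_singleton, not_or] at hz1
  obtain ⟨W, hW, hWne, hWr, hWc⟩ := B.M.lemF B.ss E (by
    rintro ⟨ψ, hψ⟩
    have hψG : ∀ u ∈ U \ K, ∀ v ∈ U \ K, G.Adj u v → ψ u ≠ ψ v := fun u hu v hv h =>
      hψ u hu v hv (addE_of h)
    have hzb : ψ z ≠ ψ b := hψ z hzU b hbU (addE_adj.2 (Or.inr ⟨hz1.2, Or.inl (by simp [hE])⟩))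
    have hat : ∀ t ∈ O2, t ≠ b → ψ a ≠ ψ t := by
      intro t ht htb
      refine hψ a haU t (nb_sub w2 ht) (addE_adj.2 (Or.inr ⟨fun e => ha2 (e ▸ ht), Or.inl ?_⟩))
      rw [hE]
      exact mem_insert_of_mem (mem_image_of_mem _ (mem_erase.2 ⟨htb, ht⟩))
    have hne : (nb G (U \ K) w1).image ψ ≠ (nb G (U \ K) w2).image ψ := by
      intro e
      have h1 : ψ a ∈ (nb G (U \ K) w2).image ψ := by rw [← e, hO1]; simp
      obtain ⟨t, ht, het⟩ := mem_image.1 h1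
      have htb : t = b := by
        by_contra hn
        exact hat t ht hn het.symm
      subst htb
      obtain ⟨t', ht', htt⟩ := exists_mem_ne (by omega : 1 < O2.card) t
      have h2 : ψ t' ∈ (nb G (U \ K) w1).image ψ := by rw [e]; exact mem_image_of_mem _ ht'
      rw [hO1, image_insert, image_singleton, ← het, mem_insert, mem_singleton] at h2
      exact hat t' ht' htt (by rw [← het]; exact (h2.elim id id).symm)
    by_cases h1 : ψ z ∉ (nb G (U \ K) w1).image ψ
    · exact B.ext hψG hw1 h1 hw1 hw2 h1x h2x hne
    · refine B.ext hψG hw2 ?_ hw1 hw2 h1x h2x hne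
      intro h2
      push Not at h1
      rw [hO1, image_insert, image_singleton, mem_insert, mem_singleton] at h1
      have h3 := h1.resolve_right hzb
      obtain ⟨t, ht, het⟩ := mem_image.1 h2
      by_cases htb : t = b
      · subst htb; exact hzb het.symm
      · exact hat t ht htb (by rw [het, h3]))
  set i := (E.filter (fun p => p.1 ∈ W ∧ p.2 ∈ W)).card with hi
  have hib : i ≤ (if z ∈ W ∧ b ∈ W then 1 else 0) +
        (if a ∈ W then (O2.erase b ∩ W).card else 0) := by
    rw [hi, hE, filter_insert]
    have h1 : (((O2.erase b).image (fun t => (a, t))).filter (fun p => p.1 ∈ W ∧ p.2 ∈ W)).card ≤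
        (if a ∈ W then (O2.erase b ∩ W).card else 0) := by
      split_ifs with h
      · have : ((O2.erase b).image (fun t => (a, t))).filter (fun p => p.1 ∈ W ∧ p.2 ∈ W) ⊆
            (O2.erase b ∩ W).image (fun t => (a, t)) := by
          intro p hp
          obtain ⟨h1, h2⟩ := mem_filter.1 hp
          obtain ⟨t, ht, rfl⟩ := mem_image.1 h1
          exact mem_image_of_mem _ (mem_inter.2 ⟨ht, h2.2⟩)
        exact (card_le_card this).trans card_image_le
      · rw [Nat.le_zero, card_eq_zero, filter_eq_empty_iff]
        intro p hp hp2
        obtain ⟨t, ht, rfl⟩ := mem_image.1 hp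
        exact h hp2.1
    by_cases h : z ∈ W ∧ b ∈ W
    · rw [if_pos h, if_pos h]
      have := card_insert_le (z, b) (((O2.erase b).image (fun t => (a, t))).filter (fun p => p.1 ∈ W ∧ p.2 ∈ W))
      omega
    · rw [if_neg h, if_neg h]; omega
  refine ⟨W, hW, hWne, i, ?_, hWr, hib⟩
  refine hWc fun h1 => ?_
  obtain ⟨y, hy⟩ := card_eq_one.1 h1
  have hi0 : i = 0 := by
    by_contra hne
    have h2 : ¬ (z ∈ W ∧ b ∈ W) := by
      rw [hy, mem_singleton, mem_singleton]
      rintro ⟨e1, e2⟩; exact hz1.2 (e1.trans e2.symm)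
    rw [if_neg h2] at hib
    by_cases h3 : a ∈ W
    · rw [if_pos h3] at hib
      obtain ⟨t, ht⟩ := card_pos.1 (show 0 < (O2.erase b ∩ W).card by omega)
      rw [hy, mem_singleton] at h3
      rw [hy, mem_inter, mem_singleton, mem_erase] at ht
      exact ha2 (by rw [h3, ← ht.2]; exact ht.1.2)
    · rw [if_neg h3] at hib; omega
  rw [hi0] at hWr
  exact B.M.good' (hW.trans sdiff_subset) hWne (by simpa using hWr)

/-- the numbers -/
lemma BS.two (B : BS k G U K x z) {w1 w2 : V} (hw1 : w1 ∈ K) (hw2 : w2 ∈ K) (h1x : w1 ≠ x)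
    (h2x : w2 ≠ x) (h12 : w1 ≠ w2) {X : Finset V} (hX : X ⊆ U \ K) :
    (if z ∈ X then 1 else 0) + ((nb G (U \ K) w1 ∩ X).card : ℤ) + ((nb G (U \ K) w2 ∩ X).card : ℤ)
      ≤ ee G K X := by
  have h := B.cnt hX (P := {x, w1, w2}) (by
    intro u hu; simp only [mem_insert, mem_singleton] at hu
    rcases hu with rfl | rfl | rfl
    exacts [B.hx, hw1, hw2])
  rw [sum_insert (by simp [h1x.symm, h2x.symm]), sum_insert (by simp [h12]), sum_singleton,
    B.hox] at h
  have : ((({z} : Finset V) ∩ X).card : ℤ) = if z ∈ X then 1 else 0 := by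
    split_ifs with hz
    · rw [inter_eq_left.2 (by simpa using hz)]; simp
    · rw [singleton_inter_of_notMem hz]; simp
  rw [this] at h
  linarith

lemma BS.three (B : BS k G U K x z) {w1 w2 w3 : V} (hw1 : w1 ∈ K) (hw2 : w2 ∈ K) (hw3 : w3 ∈ K)
    (h1x : w1 ≠ x) (h2x : w2 ≠ x) (h3x : w3 ≠ x) (h12 : w1 ≠ w2) (h13 : w1 ≠ w3) (h23 : w2 ≠ w3)
    {X : Finset V} (hX : X ⊆ U \ K) :
    (if z ∈ X then 1 else 0) + ((nb G (U \ K) w1 ∩ X).card : ℤ) + ((nb G (U \ K) w2 ∩ X).card : ℤ)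
      + ((nb G (U \ K) w3 ∩ X).card : ℤ) ≤ ee G K X := by
  have h := B.cnt hX (P := {x, w1, w2, w3}) (by
    intro u hu; simp only [mem_insert, mem_singleton] at hu
    rcases hu with rfl | rfl | rfl | rfl
    exacts [B.hx, hw1, hw2, hw3])
  rw [sum_insert (by simp [h1x.symm, h2x.symm, h3x.symm]), sum_insert (by simp [h12, h13]),
    sum_insert (by simp [h23]), sum_singleton, B.hox] at h
  have : ((({z} : Finset V) ∩ X).card : ℤ) = if z ∈ X then 1 else 0 := by
    split_ifs with hz
    · rw [inter_eq_left.2 (by simpa using hz)]; simp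
    · rw [singleton_inter_of_notMem hz]; simp
  rw [this] at h
  linarith

lemma pair_inter {a b : V} (hab : a ≠ b) (X : Finset V) :
    (({a, b} : Finset V) ∩ X).card = (if a ∈ X then 1 else 0) + (if b ∈ X then 1 else 0) := by
  by_cases ha : a ∈ X <;> by_cases hb : b ∈ X <;> simp [insert_inter_of_mem, insert_inter_of_notMem, ha, hb, hab]

/-- step: either done or exceptional -/
lemma BS.step (B : BS k G U K x z) {w1 w2 a b : V} (hw1 : w1 ∈ K) (hw2 : w2 ∈ K) (h1x : w1 ≠ x)
    (h2x : w2 ≠ x) (h12 : w1 ≠ w2) (hO1 : nb G (U \ K) w1 = {a, b}) (hab : a ≠ b)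
    (hz1 : z ∉ nb G (U \ K) w1) (ha2 : a ∉ nb G (U \ K) w2) :
    ∃ W ⊆ U \ K, (k = 5 ∧ a ∈ W ∧ b ∉ nb G (U \ K) w2 ∧ nb G (U \ K) w2 ⊆ W ∧ rho k G W ≤ 26) ∨
      (k = 7 ∧ a ∈ W ∧ b ∈ W ∧ z ∈ W ∧ nb G (U \ K) w2 ⊆ W ∧ rho k G W ≤ 64 ∧ ee G K W ≤ 5) := by
  have hk := B.M.hk
  obtain ⟨W, hW, hWne, i, hi, hr, hib⟩ := B.new hw1 hw2 h1x h2x hO1 hab hz1 ha2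
  have h2 := B.two hw1 hw2 h1x h2x h12 hW
  rw [hO1, pair_inter hab] at h2
  have hO2c := B.ho w2 hw2 h2x
  set O2 := nb G (U \ K) w2 with hO2
  have hm1 : (O2.erase b ∩ W).card ≤ (O2 ∩ W).card :=
    card_le_card (inter_subset_inter_right (erase_subset _ _))
  have hm2 : (O2 ∩ W).card ≤ 2 := (card_le_card inter_subset_left).trans hO2c.le
  have hm3 : (O2.erase b ∩ W).card ≤ (O2.erase b).card := card_le_card inter_subset_left
  have hm4 : b ∈ O2 → (O2.erase b).card = 1 := fun h => by rw [card_erase_of_mem h, hO2c]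
  have hfull : (O2 ∩ W).card = 2 → O2 ⊆ W := fun h => by
    have : O2 ∩ W = O2 := eq_of_subset_of_card_le inter_subset_left (by omega)
    exact inter_eq_left.1 this
  set m := (O2.erase b ∩ W).card with hm
  set n := (O2 ∩ W).card with hnn
  have hi3 : i ≤ 3 := by
    refine hib.trans ?_
    split_ifs <;> omega
  have hk7 : k ≤ 7 := by omega
  have haW : a ∈ W := by
    by_contra h
    rw [if_neg h] at hib
    have : i ≤ 1 := by refine hib.trans ?_; split_ifs <;> omega
    omega
  rw [if_pos haW] at hib
  rw [if_pos haW] at h2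
  have hcl : ∀ e : ℤ, e ≤ ee G K W →
    (k : ℤ) * (k - 3) + 2 * (k - 1) * i ≤ 2 * ((k : ℤ) - 1) * e → False := by
    intro e he h
    have hkz := B.M.kz
    have hi3' : (i : ℤ) ≤ 3 := by exact_mod_cast hi3
    refine B.cl hW hWne ?_ ?_
    · have := mul_le_mul_of_nonneg_left he (show (0 : ℤ) ≤ 2 * ((k : ℤ) - 1) by linarith)
      linarith
    · nlinarith
  refine ⟨W, hW, ?_⟩
  by_cases hzb : z ∈ W ∧ b ∈ W
  · rw [if_pos hzb] at hib
    rw [if_pos hzb.1, if_pos hzb.2] at h2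
    push_cast at h2
    by_cases h7 : k = 7
    · right
      subst h7
      have hi3 : i = 3 := by omega
      subst hi3
      refine ⟨rfl, haW, hzb.2, hzb.1, hfull (by omega), by norm_num at hr ⊢; linarith, ?_⟩
      by_contra h5
      push Not at h5
      refine hcl 6 h5 ?_
      norm_num
    · exfalso
      refine hcl (i + 2) (by omega) ?_
      have : k = 4 ∨ k = 5 ∨ k = 6 := by omega
      rcases this with rfl | rfl | rfl <;> push_cast <;> linarith
  · rw [if_neg hzb] at hib
    have hi2 : i = 2 := by omega
    subst hi2
    have hn2 : n = 2 := by omega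
    have : k = 4 ∨ k = 5 := by omega
    rcases this with rfl | rfl
    · exfalso
      refine hcl 3 ?_ (by norm_num)
      have h3 : (0 : ℤ) ≤ if z ∈ W then 1 else 0 := by split_ifs <;> norm_num
      push_cast at h2
      have h4 : (0 : ℤ) ≤ if b ∈ W then 1 else 0 := by split_ifs <;> norm_num
      omega
    · left
      refine ⟨rfl, haW, fun h => ?_, hfull hn2, by norm_num at hr ⊢; linarith⟩
      have := hm4 h
      omega

end KY


open SimpleGraph
set_option linter.unusedSectionVars false
set_option linter.unusedVariables false
set_option linter.style.longLine false
namespace KY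
open scoped Classical
open Finset
variable {V : Type*} [Fintype V]

variable {k : ℕ} {G : SimpleGraph V} {U : Finset V} {K : Finset V} {x z : V}

lemma MinCE.rho2 (M : MinCE k G U) {R : Finset V} (hR : R ⊂ U) (h2 : 2 ≤ R.card) :
    2 * ((k : ℤ) - 1) * ((k : ℤ) - 2) ≤ rho k G R := by
  rcases Nat.lt_or_ge R.card k with h | h
  · exact rho_small k M.hk G R h2 (by omega)
  · exact (M.lem2 hR h).le

lemma BS.ne (B : BS k G U K x z) {w1 w2 : V} (hw1 : w1 ∈ K) (hw2 : w2 ∈ K) (h1x : w1 ≠ x)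
    (h2x : w2 ≠ x) (hz1 : z ∉ nb G (U \ K) w1)
    (hne : nb G (U \ K) w1 ≠ nb G (U \ K) w2) : False := by
  have hk := B.M.hk
  have h12 : w1 ≠ w2 := by rintro rfl; exact hne rfl
  have c1 := B.ho w1 hw1 h1x
  have c2 := B.ho w2 hw2 h2x
  obtain ⟨a, ha1, ha2⟩ : ∃ a ∈ nb G (U \ K) w1, a ∉ nb G (U \ K) w2 := by
    by_contra h
    push Not at h
    exact hne (eq_of_subset_of_card_le h (by omega))
  obtain ⟨b, hb⟩ := card_eq_one.1 (show ((nb G (U \ K) w1).erase a).card = 1 by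
    rw [card_erase_of_mem ha1, c1])
  have hab : a ≠ b := by
    have : b ∈ (nb G (U \ K) w1).erase a := by rw [hb]; simp
    exact (ne_of_mem_erase this).symm
  have hO1 : nb G (U \ K) w1 = {a, b} := by
    rw [← insert_erase ha1, hb]
  obtain ⟨W, hW, h⟩ := B.step hw1 hw2 h1x h2x h12 hO1 hab hz1 ha2
  rcases h with ⟨rfl, haW, hb2, hOW, hr⟩ | ⟨rfl, haW, hbW, hzW, hOW, hr, he⟩
  · obtain ⟨W', hW', h⟩ := B.step hw1 hw2 h1x h2x h12 (by rw [hO1, pair_comm]) hab.symm hz1 hb2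
    rcases h with ⟨-, hbW', -, hOW', hr'⟩ | ⟨h, -⟩
    · have hs := rho_submod 5 hk G W W'
      have h1 := B.M.rho2 (R := W ∩ W') (Finset.ssubset_of_subset_of_ssubset
        (inter_subset_left.trans hW) B.ss) (by
          rw [← c2]; exact card_le_card (subset_inter hOW hOW'))
      norm_num at h1
      have hX : W ∪ W' ⊆ U \ K := union_subset hW hW'
      have h2 := B.two hw1 hw2 h1x h2x h12 hX
      rw [hO1, inter_eq_left.2 (show ({a, b} : Finset V) ⊆ W ∪ W' by
        intro u hu
        simp only [mem_insert, mem_singleton] at hu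
        rcases hu with rfl | rfl
        · exact mem_union_left _ haW
        · exact mem_union_right _ hbW'), inter_eq_left.2 (hOW.trans subset_union_left), c2,
        card_pair hab] at h2
      have h3 : (0 : ℤ) ≤ if z ∈ W ∪ W' then 1 else 0 := by split_ifs <;> norm_num
      refine B.cl hX ⟨a, mem_union_left _ haW⟩ ?_ ?_
      · push_cast at h2 ⊢; linarith
      · norm_num; linarith
    · omega
  · -- k = 7
    obtain ⟨w3, hw3⟩ : (((K.erase x).erase w1).erase w2).Nonempty := by
      rw [← card_pos, card_erase_of_mem (by simp [hw2, h12.symm, h2x]),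
        card_erase_of_mem (by simp [hw1, h1x]), card_erase_of_mem B.hx, B.hn]
      norm_num
    simp only [mem_erase] at hw3
    obtain ⟨h32, h31, h3x, hw3⟩ := hw3
    have c3 := B.ho w3 hw3 h3x
    have hO1W : ({a, b} : Finset V) ⊆ W := by
      intro u hu
      simp only [mem_insert, mem_singleton] at hu
      rcases hu with rfl | rfl
      exacts [haW, hbW]
    have h3 := B.three hw1 hw2 hw3 h1x h2x h3x h12 h31.symm h32.symm hW
    rw [hO1, inter_eq_left.2 hO1W, inter_eq_left.2 hOW, c2, card_pair hab, if_pos hzW] at h3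
    have h0 : (nb G (U \ K) w3 ∩ W).card = 0 := by push_cast at h3; omega
    have hdis : ∀ u ∈ W, u ∉ nb G (U \ K) w3 := by
      intro u hu h
      have := card_eq_zero.1 h0
      have h' := mem_inter.2 ⟨h, hu⟩
      rw [this] at h'; simp at h'
    obtain ⟨W', hW', h⟩ := B.step hw1 hw3 h1x h3x h31.symm hO1 hab hz1 (hdis a haW)
    rcases h with ⟨h, -⟩ | ⟨-, haW', hbW', hzW', hOW', hr', he'⟩
    · omega
    · have hs := rho_submod 7 hk G W W'
      have h1 := B.M.rho2 (R := W ∩ W') (Finset.ssubset_of_subset_of_ssubset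
        (inter_subset_left.trans hW) B.ss) (by
          rw [← card_pair hab]
          refine card_le_card ?_
          intro u hu
          simp only [mem_insert, mem_singleton] at hu
          rcases hu with rfl | rfl
          · exact mem_inter.2 ⟨haW, haW'⟩
          · exact mem_inter.2 ⟨hbW, hbW'⟩)
      norm_num at h1
      have hX : W ∪ W' ⊆ U \ K := union_subset hW hW'
      have h2 := B.three hw1 hw2 hw3 h1x h2x h3x h12 h31.symm h32.symm hX
      rw [hO1, inter_eq_left.2 (hO1W.trans subset_union_left),
        inter_eq_left.2 (hOW.trans subset_union_left),
        inter_eq_left.2 (hOW'.trans subset_union_right), c2, c3,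
        card_pair hab, if_pos (mem_union_left _ hzW)] at h2
      refine B.cl hX ⟨a, mem_union_left _ haW⟩ ?_ ?_
      · push_cast at h2 ⊢; linarith
      · norm_num; linarith

set_option maxHeartbeats 1000000 in
lemma BS.eq (B : BS k G U K x z) {p q : V} (hpq : p ≠ q) (hzp : z ≠ p) (hzq : z ≠ q)
    (hO : ∀ w ∈ K, w ≠ x → nb G (U \ K) w = {p, q}) : False := by
  have hk := B.M.hk
  have hkz := B.M.kz
  have : NeZero (k - 1) := ⟨by omega⟩
  have hKxc : (K.erase x).card = k - 2 := by rw [card_erase_of_mem B.hx, B.hn]; omega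
  obtain ⟨w0, hw0⟩ : (K.erase x).Nonempty := card_pos.1 (by omega)
  have hm0 : ∀ y ∈ ({p, q} : Finset V), y ∈ U \ K := by
    intro y hy
    rw [← hO w0 (mem_of_mem_erase hw0) (ne_of_mem_erase hw0)] at hy
    exact nb_sub _ hy
  have hpU := mem_sdiff.1 (hm0 p (by simp))
  have hqU := mem_sdiff.1 (hm0 q (by simp))
  obtain ⟨hzU, hzK, hxz⟩ := B.zmem
  have hadj : ∀ w ∈ K.erase x, G.Adj w p ∧ G.Adj w q := by
    intro w hw
    have h := hO w (mem_of_mem_erase hw) (ne_of_mem_erase hw)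
    exact ⟨(mem_nb.1 (h ▸ by simp : p ∈ nb G (U \ K) w)).2,
      (mem_nb.1 (h ▸ by simp : q ∈ nb G (U \ K) w)).2⟩
  have hwN : ∀ w ∈ K, w ≠ x → ∀ u ∈ U, u ∉ K → G.Adj w u → u = p ∨ u = q := by
    intro w hw hwx u hu huK hwu
    have : u ∈ nb G (U \ K) w := mem_nb.2 ⟨mem_sdiff.2 ⟨hu, huK⟩, hwu⟩
    rw [hO w hw hwx] at this
    simpa using this
  have hxN : ∀ u ∈ U, u ∉ K → G.Adj x u → u = z := by
    intro u hu huK hwu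
    have : u ∈ nb G (U \ K) x := mem_nb.2 ⟨mem_sdiff.2 ⟨hu, huK⟩, hwu⟩
    rw [B.hox] at this
    simpa using this
  set K' := K.erase x with hK'
  have hK'c : Clq G K' := B.hc.sub (erase_subset _ _)
  have hqK' : q ∉ K' := fun h => hqU.2 (mem_of_mem_erase h)
  have hpK' : p ∉ insert q K' := by
    rw [mem_insert, not_or]; exact ⟨hpq, fun h => hpU.2 (mem_of_mem_erase h)⟩
  set T := insert p (insert q K') with hT
  have hTU : T ⊆ U := insert_subset hpU.1 (insert_subset hqU.1 ((erase_subset _ _).trans B.hKU))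
  have hTc : T.card = k := by
    rw [hT, card_insert_of_notMem hpK', card_insert_of_notMem hqK', hKxc]; omega
  have hnpq : ¬ G.Adj p q := by
    intro h
    refine B.M.noKk hTU ?_ hTc.ge
    intro u hu v hv huv
    simp only [hT, mem_insert] at hu hv
    rcases hu with rfl | rfl | hu <;> rcases hv with rfl | rfl | hv
    · exact absurd rfl huv
    · exact h
    · exact (hadj v hv).1.symm
    · exact h.symm
    · exact absurd rfl huv
    · exact (hadj v hv).2.symm
    · exact (hadj u hu).1
    · exact (hadj u hu).2
    · exact hK'c u hu v hv huv
  set U' := (U \ K).erase q with hU'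
  have hU'm : ∀ u, u ∈ U' ↔ u ≠ q ∧ u ∈ U ∧ u ∉ K := by
    intro u; rw [hU', mem_erase, mem_sdiff]
  set D := insert z (nb G U' p ∪ nb G U' q) with hD
  have hpD : p ∉ D := by
    simp only [hD, mem_insert, mem_union, not_or]
    exact ⟨hzp.symm, self_notMem_nb, fun h => hnpq (mem_nb.1 h).2.symm⟩
  have hpU' : p ∈ U' := (hU'm p).2 ⟨hpq, hpU⟩
  have hzU' : z ∈ U' := (hU'm z).2 ⟨hzq, hzU, hzK⟩
  have hU's : U' ⊆ U := (erase_subset _ _).trans sdiff_subset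
  set G' := rew G p D with hG'
  have hlt : U'.card < U.card := by
    refine card_lt_card (Finset.ssubset_iff_subset_ne.2 ⟨hU's, fun e => ?_⟩)
    have : q ∈ U' := by rw [e]; exact hqU.1
    exact ((hU'm q).1 this).1 rfl
  obtain ⟨W, hWU', hWne, hWr⟩ := B.M.ih1 G' U' hlt (by
    rintro ⟨ψ, hψ⟩
    obtain ⟨f, hf1, hf2⟩ := hall_on K' (fun _ => univ.erase (ψ p)) (by
      intro s hs
      rcases s.eq_empty_or_nonempty with rfl | hne
      · simp
      · have : s.biUnion (fun _ => univ.erase (ψ p)) = univ.erase (ψ p) := by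
          ext b; simp only [mem_biUnion]; exact ⟨fun ⟨_, _, h⟩ => h, fun h => ⟨_, hne.choose_spec, h⟩⟩
        rw [this, card_erase_of_mem (mem_univ _), card_univ, Fintype.card_fin]
        have := card_le_card hs
        omega)
    have hfp : ∀ w ∈ K', f w ≠ ψ p := fun w hw => ne_of_mem_erase (hf2 w hw)
    have hψD : ∀ u ∈ D, u ∈ U' → ψ p ≠ ψ u := fun u hu huU =>
      hψ p hpU' u huU ((rew_adj_v hpD).2 hu)
    have hψo : ∀ u ∈ U', ∀ v ∈ U', G.Adj u v → ψ u ≠ ψ v := by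
      intro u hu v hv huv
      by_cases h1 : u = p
      · subst h1
        exact hψD v (by simp [hD, mem_nb, hv, huv]) hv
      by_cases h2 : v = p
      · subst h2
        exact (hψD u (by simp [hD, mem_nb, hu, huv.symm]) hu).symm
      exact hψ u hu v hv ((rew_adj_ne h1 h2).2 huv)
    apply B.M.ncol
    set χ : V → Fin (k - 1) := fun w => if w ∈ K' then f w else if w = x ∨ w = q then ψ p else ψ w
      with hχ
    have χK : ∀ w ∈ K', χ w = f w := fun w h => by simp only [hχ, if_pos h]
    have hxK' : x ∉ K' := by simp [hK']
    have χx : χ x = ψ p := by simp [hχ, hxK']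
    have χq : χ q = ψ p := by simp [hχ, hqK']
    have χo : ∀ w ∈ U', χ w = ψ w := by
      intro w hw
      have h := (hU'm w).1 hw
      have h1 : w ∉ K' := fun e => h.2.2 (mem_of_mem_erase e)
      have h2 : ¬ (w = x ∨ w = q) := by
        rintro (rfl | rfl)
        · exact h.2.2 B.hx
        · exact h.1 rfl
      simp only [hχ, if_neg h1, if_neg h2]
    have cases4 : ∀ u ∈ U, u ∈ K' ∨ u = x ∨ u = q ∨ u ∈ U' := by
      intro u hu
      by_cases h1 : u = x
      · tauto
      by_cases h2 : u = q
      · tauto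
      by_cases h3 : u ∈ K
      · exact Or.inl (mem_erase.2 ⟨h1, h3⟩)
      · exact Or.inr (Or.inr (Or.inr ((hU'm u).2 ⟨h2, hu, h3⟩)))
    have k1 : ∀ u ∈ K', ∀ v ∈ U, G.Adj u v → χ u ≠ χ v := by
      intro u hu v hv huv
      rw [χK u hu]
      rcases cases4 v hv with h | rfl | rfl | h
      · rw [χK v h]; exact fun e => huv.ne (hf1 hu h e)
      · rw [χx]; exact hfp u hu
      · rw [χq]; exact hfp u hu
      · have h' := (hU'm v).1 h
        have := (hwN u (mem_of_mem_erase hu) (ne_of_mem_erase hu) v hv h'.2.2 huv).resolve_right h'.1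
        rw [χo v h, this]; exact hfp u hu
    have k2 : ∀ v ∈ U', G.Adj x v → χ x ≠ χ v := by
      intro v hv hxv
      have h' := (hU'm v).1 hv
      have := hxN v h'.2.1 h'.2.2 hxv
      subst this
      rw [χx, χo v hv]
      exact hψD v (by simp [hD]) hv
    have hxq : ¬ G.Adj x q := fun h => hzq (hxN q hqU.1 hqU.2 h).symm
    have k3 : ∀ v ∈ U', G.Adj q v → χ q ≠ χ v := by
      intro v hv hqv
      rw [χq, χo v hv]
      exact hψD v (by simp [hD, mem_nb, hv, hqv]) hv
    refine ⟨χ, fun u hu v hv huv => ?_⟩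
    rcases cases4 u hu with h1 | h1 | h1 | h1
    · exact k1 u h1 v hv huv
    all_goals
      by_cases hv1 : v ∈ K'
      · exact (k1 v hv1 u hu huv.symm).symm
      rcases (cases4 v hv).resolve_left hv1 with h2 | h2 | h2
    · rw [h1, h2] at huv; exact absurd huv G.irrefl
    · rw [h1, h2] at huv; exact absurd huv hxq
    · rw [h1] at huv ⊢; exact k2 v h2 huv
    · rw [h1, h2] at huv; exact absurd huv.symm hxq
    · rw [h1, h2] at huv; exact absurd huv G.irrefl
    · rw [h1] at huv ⊢; exact k3 v h2 huv
    · rw [h2] at huv ⊢; exact (k2 u h1 huv.symm).symm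
    · rw [h2] at huv ⊢; exact (k3 u h1 huv.symm).symm
    · rw [χo u h1, χo v h2]; exact hψo u h1 v h2 huv)
  have hWU := hWU'.trans hU's
  have hpW : p ∈ W := by
    by_contra hp
    refine B.M.good' hWU hWne (le_trans (le_of_eq ?_) hWr)
    refine rho_congr k fun u hu v hv => (rew_adj_ne ?_ ?_).symm
    · rintro rfl; exact hp hu
    · rintro rfl; exact hp hv
  set W0 := W.erase p with hW0
  have e1 := rho_insert k G' (notMem_erase p W)
  rw [insert_erase hpW, ← hW0] at e1
  have e2 : rho k G' W0 = rho k G W0 :=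
    rho_congr k fun u hu v hv => rew_adj_ne (ne_of_mem_erase hu) (ne_of_mem_erase hv)
  have hdis : Disjoint W0 T := by
    rw [Finset.disjoint_left]
    intro u hu hT'
    have h1 := mem_erase.1 hu
    have h2 := (hU'm u).1 (hWU' h1.2)
    simp only [hT, mem_insert] at hT'
    rcases hT' with h | h | h
    · exact h1.1 h
    · exact h2.1 h
    · exact h2.2.2 (mem_of_mem_erase h)
  have e3 := rho_union k G hdis
  have hrT : rho k G T = ((k : ℤ) + 1) * (k - 2) := by
    rw [hT, rho_insert k G hpK', rho_insert k G hqK', rho_clq k hK'c]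
    have n1 : nb G K' q = K' := by
      ext u; rw [mem_nb]; exact ⟨fun h => h.1, fun h => ⟨h, (hadj u h).2.symm⟩⟩
    have n2 : nb G (insert q K') p = K' := by
      ext u; rw [mem_nb, mem_insert]
      constructor
      · rintro ⟨rfl | h, h2⟩
        · exact absurd h2 hnpq
        · exact h
      · exact fun h => ⟨Or.inr h, (hadj u h).1.symm⟩
    rw [n1, n2, hKxc]
    have : ((k - 2 : ℕ) : ℤ) = k - 2 := by omega
    rw [this]; ring
  have hee : ((nb G' W0 p).card : ℤ) - 1 ≤ ee G W0 T := by
    have h1 : nb G' W0 p ⊆ insert z (nb G W0 p ∪ nb G W0 q) := by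
      intro u hu
      obtain ⟨h1, h2⟩ := mem_nb.1 hu
      have h3 := (rew_adj_v hpD).1 h2
      simp only [hD, mem_insert, mem_union, mem_nb] at h3 ⊢
      tauto
    have h2 := (card_le_card h1).trans ((card_insert_le _ _).trans
      (Nat.add_le_add_right (card_union_le _ _) 1))
    have h3 : ee G W0 {p, q} ≤ ee G W0 T := ee_mono G (Finset.Subset.refl _) (by
      intro u hu; simp only [mem_insert, mem_singleton] at hu
      simp only [hT, mem_insert]; tauto)
    rw [ee_comm, ee_eq_sum, sum_pair hpq] at h3
    have h2' : ((nb G' W0 p).card : ℤ) ≤ (nb G W0 p).card + (nb G W0 q).card + 1 := by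
      exact_mod_cast h2
    linarith
  have hSU : W0 ∪ T ⊂ U := by
    refine Finset.ssubset_iff_subset_ne.2 ⟨union_subset ((erase_subset _ _).trans hWU) hTU, fun e => ?_⟩
    have hx : x ∈ W0 ∪ T := by rw [e]; exact B.hKU B.hx
    rcases mem_union.1 hx with h | h
    · exact ((hU'm x).1 (hWU' (mem_of_mem_erase h))).2.2 B.hx
    · simp only [hT, mem_insert] at h
      rcases h with rfl | rfl | h
      · exact hpU.2 B.hx
      · exact hqU.2 B.hx
      · simp [hK'] at h
  have hl := B.M.lem2 hSU (by rw [← hTc]; exact card_le_card subset_union_right)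
  have h5 := mul_le_mul_of_nonneg_left hee (show (0 : ℤ) ≤ 2 * ((k : ℤ) - 1) by linarith)
  rw [e1, e2] at hWr
  rw [e3, hrT] at hl
  nlinarith

/-- bad clique lemma -/
lemma MinCE.bk (M : MinCE k G U) {x z : V} (hx : x ∈ U) (hdx : dg G U x = k - 1)
    (hz : z ∈ nb G U x) (hc : Clq G ((insert x (nb G U x)).erase z))
    (hall : ∀ w ∈ (insert x (nb G U x)).erase z, w ≠ x → dg G U w = k) : False := by
  have hk := M.hk
  set K := (insert x (nb G U x)).erase z with hK
  have hxz := (mem_nb.1 hz).2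
  have hxK : x ∈ K := by simp [hK, hxz.ne]
  have hKU : K ⊆ U := (erase_subset _ _).trans (closed_sub hx)
  have hn : K.card = k - 1 := by rw [hK, card_closed_erase hz, hdx]
  have hzK : z ∉ K := by simp [hK]
  have hsplit : ∀ w ∈ K, dg G U w = (k - 2) + (nb G (U \ K) w).card := by
    intro w hw
    have h1 : nb G U w = K.erase w ∪ nb G (U \ K) w := by
      ext u; simp only [mem_union, mem_erase, mem_nb, mem_sdiff]
      constructor
      · rintro ⟨h1, h2⟩
        by_cases h : u ∈ K
        · exact Or.inl ⟨h2.ne', h⟩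
        · exact Or.inr ⟨⟨h1, h⟩, h2⟩
      · rintro (⟨h1, h2⟩ | h)
        · exact ⟨hKU h2, hc w hw u h2 (Ne.symm h1)⟩
        · exact ⟨h.1.1, h.2⟩
    unfold dg
    rw [h1, card_union_of_disjoint, card_erase_of_mem hw, hn]
    · omega
    · rw [Finset.disjoint_left]
      intro u h1 h2
      exact (mem_sdiff.1 (mem_nb.1 h2).1).2 (mem_of_mem_erase h1)
  have B : BS k G U K x z := by
    refine ⟨M, hKU, hc, hn, hxK, ?_, ?_⟩
    · ext u
      rw [mem_nb, mem_sdiff, mem_singleton]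
      constructor
      · rintro ⟨⟨h1, h2⟩, h3⟩
        by_contra hne
        exact h2 (mem_erase.2 ⟨hne, mem_insert_of_mem (mem_nb.2 ⟨h1, h3⟩)⟩)
      · rintro rfl
        exact ⟨⟨(mem_nb.1 hz).1, hzK⟩, hxz⟩
    · intro w hw hwx
      have := hsplit w hw
      have := hall w hw hwx
      omega
  obtain ⟨w1, hw1, h1x, hz1⟩ : ∃ w ∈ K, w ≠ x ∧ z ∉ nb G (U \ K) w := by
    by_contra hno
    push Not at hno
    refine M.noKk (S := insert z K) (insert_subset (mem_nb.1 hz).1 hKU) ?_ (by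
      rw [card_insert_of_notMem hzK, hn]; omega)
    have hza : ∀ w ∈ K, G.Adj w z := by
      intro w hw
      by_cases h : w = x
      · rw [h]; exact hxz
      · exact (mem_nb.1 (hno w hw h)).2
    intro u hu v hv huv
    rcases mem_insert.1 hu with hu' | hu' <;> rcases mem_insert.1 hv with hv' | hv'
    · exact absurd (hu'.trans hv'.symm) huv
    · rw [hu']; exact (hza v hv').symm
    · rw [hv']; exact hza u hu'
    · exact hc u hu' v hv' huv
  by_cases hE : ∀ w ∈ K, w ≠ x → nb G (U \ K) w = nb G (U \ K) w1
  · obtain ⟨p, q, hpq, hpqe⟩ := card_eq_two.1 (B.ho w1 hw1 h1x)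
    rw [hpqe, mem_insert, mem_singleton, not_or] at hz1
    exact B.eq hpq hz1.1 hz1.2 (fun w hw hwx => (hE w hw hwx).trans hpqe)
  · push Not at hE
    obtain ⟨w2, hw2, h2x, hne⟩ := hE
    exact B.ne hw1 hw2 h1x h2x hz1 hne.symm

end KY


open SimpleGraph
set_option linter.unusedSectionVars false
set_option linter.unusedVariables false
set_option linter.style.longLine false
namespace KY
open scoped Classical
open Finset
variable {V : Type*} [Fintype V]

variable {k : ℕ} {G : SimpleGraph V} {U : Finset V}

/-- weight of a pair -/
noncomputable def fw (k d : ℕ) : ℚ := ((k : ℚ) - 1) - ((k : ℚ) + 1) * ((k : ℚ) - 2) / d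

lemma fw_mul {k d : ℕ} (hd : 0 < d) : (d : ℚ) * fw k d = ((k : ℚ) - 1) * d - ((k : ℚ) + 1) * ((k : ℚ) - 2) := by
  unfold fw
  have : (d : ℚ) ≠ 0 := by positivity
  field_simp

lemma fw_one {k d : ℕ} (hk : 4 ≤ k) (hd : k + 1 ≤ d) : 1 ≤ fw k d := by
  have hk' : (4 : ℚ) ≤ k := by exact_mod_cast hk
  have hd' : (k : ℚ) + 1 ≤ d := by exact_mod_cast hd
  have h := fw_mul (k := k) (show 0 < d by omega)
  have hd0 : (0 : ℚ) < d := by linarith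
  by_contra hlt
  push Not at hlt
  have h1 : (d : ℚ) * fw k d < d * 1 := mul_lt_mul_of_pos_left hlt hd0
  nlinarith

lemma fw_s {k d s : ℕ} (hk : 4 ≤ k) (hs : 2 ≤ s) (hs2 : s ≤ k - 3) (hd : k - 1 + s ≤ d) :
    (k : ℚ) - 3 ≤ ((k : ℚ) - 1 - s) * fw k d := by
  obtain ⟨a, rfl⟩ : ∃ a, k = s + 3 + a := ⟨k - 3 - s, by omega⟩
  obtain ⟨b, rfl⟩ : ∃ b, s = b + 2 := ⟨s - 2, by omega⟩
  obtain ⟨e, rfl⟩ : ∃ e, d = (2 * b + a + 6) + e := ⟨d - (2 * b + a + 6), by omega⟩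
  have h := fw_mul (k := b + 2 + 3 + a) (show 0 < (2 * b + a + 6) + e by omega)
  have hd0 : (0 : ℚ) < ((2 * b + a + 6 + e : ℕ) : ℚ) := by positivity
  refine le_of_mul_le_mul_left ?_ hd0
  rw [mul_left_comm, h]
  push_cast
  have ha : (0 : ℚ) ≤ a := by positivity
  have hb : (0 : ℚ) ≤ b := by positivity
  have he : (0 : ℚ) ≤ e := by positivity
  have h1 : (0 : ℚ) ≤ a * b := by positivity
  have h2 : (0 : ℚ) ≤ a * a * b := by positivity
  have h3 : (0 : ℚ) ≤ a * b * b := by positivity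
  have h4 : (0 : ℚ) ≤ a * e := by positivity
  have h5 : (0 : ℚ) ≤ a * a * e := by positivity
  have h6 : (0 : ℚ) ≤ a * b * e := by positivity
  have h7 : (0 : ℚ) ≤ b * e := by positivity
  nlinarith

set_option maxHeartbeats 1000000 in
lemma MinCE.final (M : MinCE k G U) : False := by
  have hk := M.hk
  have hkq : (4 : ℚ) ≤ k := by exact_mod_cast hk
  set L := U.filter (fun v => dg G U v = k - 1) with hL
  set B := U.filter (fun v => dg G U v = k) with hB
  set H := U.filter (fun v => k + 1 ≤ dg G U v) with hH
  have mL : ∀ {v}, v ∈ L ↔ v ∈ U ∧ dg G U v = k - 1 := by intro v; rw [hL, mem_filter]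
  have mB : ∀ {v}, v ∈ B ↔ v ∈ U ∧ dg G U v = k := by intro v; rw [hB, mem_filter]
  have mH : ∀ {v}, v ∈ H ↔ v ∈ U ∧ k + 1 ≤ dg G U v := by intro v; rw [hH, mem_filter]
  set F : V → ℚ := fun w => fw k (dg G U w) with hF
  have F1 : ∀ w ∈ H, 1 ≤ F w := fun w hw => fw_one hk (mH.1 hw).2
  have cl1 : ∀ x ∈ L, (cl G U x).card = 1 → ∀ w, w ≠ x → w ∉ cl G U x := by
    intro x hx h1 w hwx hw
    obtain ⟨y, hy⟩ := card_eq_one.1 h1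
    have h2 := self_mem_cl (G := G) (mL.1 hx).1
    rw [hy, mem_singleton] at h2 hw
    exact hwx (hw.trans h2.symm)
  have clpos : ∀ x ∈ L, 1 ≤ (cl G U x).card := fun x hx =>
    card_pos.2 ⟨x, self_mem_cl (mL.1 hx).1⟩
  -- type Q
  set Q : V → Prop := fun x => (cl G U x).card = 1 ∧
    ∃ z ∈ nb G U x, Clq G ((insert x (nb G U x)).erase z) with hQ
  have hKhigh : ∀ x ∈ L, (cl G U x).card = 1 → ∀ z ∈ nb G U x,
      Clq G ((insert x (nb G U x)).erase z) → ∀ w ∈ (insert x (nb G U x)).erase z, w ≠ x →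
      k ≤ dg G U w := by
    intro x hx h1 z hz hc w hw hwx
    have h2 := M.lemC (mL.1 hx).1 (mL.1 hx).2 hz hc hw (cl1 x hx h1 w hwx)
    omega
  have hch : ∀ x, ∃ z w, x ∈ L → Q x → z ∈ nb G U x ∧ Clq G ((insert x (nb G U x)).erase z) ∧
      w ∈ (insert x (nb G U x)).erase z ∧ w ∈ H := by
    intro x
    by_cases h : x ∈ L ∧ Q x
    · obtain ⟨hxL, h1, z, hz, hc⟩ := h
      refine ⟨z, ?_⟩
      by_contra hno
      push Not at hno
      refine M.bk (mL.1 hxL).1 (mL.1 hxL).2 hz hc fun w hw hwx => ?_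
      have h2 := hKhigh x hxL h1 z hz hc w hw hwx
      have h3 := hno w
      have h4 := h3.2.2 hz hc hw
      have hwU : w ∈ U := closed_sub (mL.1 hxL).1 (mem_of_mem_erase hw)
      by_contra hne
      exact h4 (mH.2 ⟨hwU, by omega⟩)
    · exact ⟨x, x, fun h1 h2 => absurd ⟨h1, h2⟩ h⟩
  choose zf wf hzw using hch
  set KK : V → Finset V := fun x => (insert x (nb G U x)).erase (zf x) with hKK
  have hKK1 : ∀ x ∈ L, Q x → ∀ u ∈ KK x, u ≠ x → k ≤ dg G U u := fun x hx hq u hu hux =>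
    hKhigh x hx hq.1 (zf x) (hzw x hx hq).1 (hzw x hx hq).2.1 u hu hux
  have hKKU : ∀ x ∈ L, KK x ⊆ U := fun x hx => (erase_subset _ _).trans (closed_sub (mL.1 hx).1)
  have hKKc : ∀ x ∈ L, Q x → (KK x).card = k - 1 := fun x hx hq => by
    simp only [hKK]; rw [card_closed_erase (hzw x hx hq).1, (mL.1 hx).2]
  have hKKx : ∀ x ∈ L, Q x → x ∈ KK x := fun x hx hq => by
    have := (mem_nb.1 (hzw x hx hq).1).2.ne
    simp [hKK, this]
  set A : V → Finset (V × V) := fun x => if Q x then ((KK x).erase (wf x)).image (fun u => (wf x, u))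
    else (nb G H x).image (fun w => (w, x)) with hA
  set P := (H ×ˢ U).filter (fun p => G.Adj p.1 p.2) with hP
  have hAP : ∀ x ∈ L, A x ⊆ P := by
    intro x hx p hp
    simp only [hA] at hp
    by_cases hq : Q x
    · rw [if_pos hq] at hp
      obtain ⟨u, hu, rfl⟩ := mem_image.1 hp
      obtain ⟨h1, h2, h3, h4⟩ := hzw x hx hq
      rw [hP, mem_filter, mem_product]
      exact ⟨⟨h4, hKKU x hx (mem_of_mem_erase hu)⟩,
        h2 _ h3 u (mem_of_mem_erase hu) (ne_of_mem_erase hu).symm⟩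
    · rw [if_neg hq] at hp
      obtain ⟨w, hw, rfl⟩ := mem_image.1 hp
      rw [hP, mem_filter, mem_product]
      exact ⟨⟨(mem_nb.1 hw).1, (mL.1 hx).1⟩, (mem_nb.1 hw).2.symm⟩
  have hmix : ∀ x ∈ L, ∀ y ∈ L, x ≠ y → Q x → ¬ Q y → ∀ p, p ∈ A x → p ∈ A y → False := by
    intro x hx y hy hxy hqx hqy p h1 h2
    simp only [hA] at h1 h2
    rw [if_pos hqx] at h1
    rw [if_neg hqy] at h2
    obtain ⟨u, hu, rfl⟩ := mem_image.1 h1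
    obtain ⟨w, hw, e⟩ := mem_image.1 h2
    have e2 : y = u := congrArg Prod.snd e
    subst e2
    have := hKK1 x hx hqx y (mem_of_mem_erase hu) (Ne.symm hxy)
    have := (mL.1 hy).2
    omega
  have hdisj : ∀ x ∈ L, ∀ y ∈ L, x ≠ y → Disjoint (A x) (A y) := by
    intro x hx y hy hxy
    rw [Finset.disjoint_left]
    intro p h1 h2
    by_cases hqx : Q x <;> by_cases hqy : Q y
    · simp only [hA] at h1 h2
      rw [if_pos hqx] at h1
      rw [if_pos hqy] at h2
      obtain ⟨u, hu, rfl⟩ := mem_image.1 h1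
      obtain ⟨v, hv, e⟩ := mem_image.1 h2
      have e1 : wf y = wf x := congrArg Prod.fst e
      have e2 : v = u := congrArg Prod.snd e
      subst e2
      have hX := hzw x hx hqx
      have hY := hzw y hy hqy
      refine M.il (hKKU x hx) (hKKU y hy) hX.2.1 hY.2.1 (hKKc x hx hqx) (hKKc y hy hqy) ?_ ?_
      · intro e3
        have h3 : y ∈ KK x := by rw [e3]; exact hKKx y hy hqy
        have := hKK1 x hx hqx y h3 (Ne.symm hxy)
        have := (mL.1 hy).2
        omega
      · have : ({wf x, v} : Finset V) ⊆ KK x ∩ KK y := by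
          intro t ht
          simp only [mem_insert, mem_singleton] at ht
          rcases ht with h | h
          · rw [h]; exact mem_inter.2 ⟨hX.2.2.1, e1 ▸ hY.2.2.1⟩
          · rw [h]; exact mem_inter.2 ⟨mem_of_mem_erase hu, mem_of_mem_erase hv⟩
        rw [← card_pair (ne_of_mem_erase hu).symm]
        exact card_le_card this
    · exact hmix x hx y hy hxy hqx hqy p h1 h2
    · exact hmix y hy x hx hxy.symm hqy hqx p h2 h1
    · simp only [hA] at h1 h2
      rw [if_neg hqx] at h1
      rw [if_neg hqy] at h2
      obtain ⟨u, hu, rfl⟩ := mem_image.1 h1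
      obtain ⟨v, hv, e⟩ := mem_image.1 h2
      exact hxy (congrArg Prod.snd e).symm
  set N := L.filter (fun x => ¬ Q x ∧ (cl G U x).card = 1) with hN
  have hNno : ∀ x ∈ N, ∀ v ∈ nb G U x, k ≤ dg G U v := by
    intro x hx v hv
    obtain ⟨hxL, hq, h1⟩ := mem_filter.1 hx
    have hno : ∀ z ∈ nb G U x, ¬ Clq G ((insert x (nb G U x)).erase z) := fun z hz hc =>
      hq ⟨h1, z, hz, hc⟩
    have := M.lemD (mL.1 hxL).1 (mL.1 hxL).2 hno hv (cl1 x hxL h1 v (mem_nb.1 hv).2.ne')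
    omega
  have hsumA : ∀ x ∈ L, (k : ℚ) - 3 - ∑ p ∈ A x, F p.1 ≤
      if x ∈ N then ((nb G B x).card : ℚ) - 2 else 0 := by
    intro x hx
    by_cases hq : Q x
    · have hxN : x ∉ N := fun h => (mem_filter.1 h).2.1 hq
      rw [if_neg hxN]
      simp only [hA]
      rw [if_pos hq, sum_image (by intro a _ b _ e; exact congrArg Prod.snd e)]
      obtain ⟨h1, h2, h3, h4⟩ := hzw x hx hq
      show (k : ℚ) - 3 - ∑ u ∈ (KK x).erase (wf x), F (wf x) ≤ 0
      rw [sum_const, card_erase_of_mem h3, hKKc x hx hq, nsmul_eq_mul]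
      have h5 := F1 _ h4
      have h6 : ((k - 1 - 1 : ℕ) : ℚ) = k - 2 := by
        rw [Nat.cast_sub (by omega), Nat.cast_sub (by omega)]; push_cast; ring
      rw [h6]
      nlinarith
    · simp only [hA]
      rw [if_neg hq, sum_image (by intro a _ b _ e; exact congrArg Prod.fst e)]
      by_cases h1 : (cl G U x).card = 1
      · have hxN : x ∈ N := mem_filter.2 ⟨hx, hq, h1⟩
        rw [if_pos hxN]
        have h2 : ((nb G H x).card : ℚ) ≤ ∑ w ∈ nb G H x, F w := by
          have : ∑ w ∈ nb G H x, (1 : ℚ) ≤ ∑ w ∈ nb G H x, F w :=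
            sum_le_sum fun w hw => F1 w (mem_nb.1 hw).1
          simpa using this
        have h3 : nb G U x ⊆ nb G H x ∪ nb G B x := by
          intro v hv
          have h4 := hNno x hxN v hv
          have h5 := mem_nb.1 hv
          rw [mem_union, mem_nb, mem_nb, mH, mB]
          by_cases h6 : dg G U v = k
          · exact Or.inr ⟨⟨h5.1, h6⟩, h5.2⟩
          · exact Or.inl ⟨⟨h5.1, by omega⟩, h5.2⟩
        have h4 := (card_le_card h3).trans (card_union_le _ _)
        have h5 : (nb G U x).card = k - 1 := (mL.1 hx).2
        have h6 : k ≤ (nb G H x).card + (nb G B x).card + 1 := by omega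
        have h7 : (k : ℚ) ≤ (nb G H x).card + (nb G B x).card + 1 := by exact_mod_cast h6
        linarith
      · have hxN : x ∉ N := fun h => h1 (mem_filter.1 h).2.2
        rw [if_neg hxN]
        have hs2 : 2 ≤ (cl G U x).card := by have := clpos x hx; omega
        have hs3 := M.sle (mL.1 hx).1 (mL.1 hx).2
        set s := (cl G U x).card with hs
        obtain ⟨Y, hY1, hY2, hY3⟩ : ∃ Y ⊆ nb G U x, k - 1 - s ≤ Y.card ∧
            ∀ w ∈ Y, k - 1 + s ≤ dg G U w := by
          by_cases hcq : ∃ z ∈ nb G U x, Clq G ((insert x (nb G U x)).erase z)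
          · obtain ⟨z, hz, hc⟩ := hcq
            refine ⟨(insert x (nb G U x)).erase z \ cl G U x, ?_, ?_, ?_⟩
            · intro w hw
              have hw' := mem_sdiff.1 hw
              refine (mem_insert.1 (mem_of_mem_erase hw'.1)).resolve_left ?_
              rintro rfl
              exact hw'.2 (self_mem_cl (mL.1 hx).1)
            · have := le_card_sdiff (cl G U x) ((insert x (nb G U x)).erase z)
              rw [card_closed_erase hz, (mL.1 hx).2] at this
              exact this
            · intro w hw
              have hw' := mem_sdiff.1 hw
              exact M.lemC (mL.1 hx).1 (mL.1 hx).2 hz hc hw'.1 hw'.2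
          · refine ⟨nb G U x \ cl G U x, sdiff_subset, ?_, ?_⟩
            · have := le_card_sdiff (cl G U x) (nb G U x)
              have h5 : (nb G U x).card = k - 1 := (mL.1 hx).2
              rw [h5] at this
              exact this
            · intro w hw
              have hw' := mem_sdiff.1 hw
              exact M.lemD (mL.1 hx).1 (mL.1 hx).2 (fun z hz hc => hcq ⟨z, hz, hc⟩) hw'.1 hw'.2
        have hYH : Y ⊆ nb G H x := by
          intro w hw
          have h5 := mem_nb.1 (hY1 hw)
          have h6 := hY3 w hw
          exact mem_nb.2 ⟨mH.2 ⟨h5.1, by omega⟩, h5.2⟩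
        have h5 : ∑ w ∈ Y, F w ≤ ∑ w ∈ nb G H x, F w :=
          sum_le_sum_of_subset_of_nonneg hYH fun w hw _ => by
            have := F1 w (mem_nb.1 hw).1; linarith
        have hpos : (0 : ℚ) < (k : ℚ) - 1 - s := by
          have : s + 3 ≤ k := by omega
          have : (s : ℚ) + 3 ≤ k := by exact_mod_cast this
          linarith
        have h6 : ∀ w ∈ Y, ((k : ℚ) - 3) / ((k : ℚ) - 1 - s) ≤ F w := by
          intro w hw
          rw [div_le_iff₀ hpos, mul_comm]
          exact fw_s hk hs2 hs3 (hY3 w hw)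
        have h7 : (Y.card : ℚ) * (((k : ℚ) - 3) / ((k : ℚ) - 1 - s)) ≤ ∑ w ∈ Y, F w := by
          have := sum_le_sum h6
          rwa [sum_const, nsmul_eq_mul] at this
        have h8 : (k : ℚ) - 1 - s ≤ Y.card := by
          have : k ≤ Y.card + s + 1 := by omega
          have : (k : ℚ) ≤ Y.card + s + 1 := by exact_mod_cast this
          linarith
        have h9 : ((k : ℚ) - 1 - s) * (((k : ℚ) - 3) / ((k : ℚ) - 1 - s)) = k - 3 :=
          mul_div_cancel₀ _ hpos.ne'
        have h10 : (0 : ℚ) ≤ ((k : ℚ) - 3) / ((k : ℚ) - 1 - s) :=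
          div_nonneg (by linarith) hpos.le
        have h11 := mul_le_mul_of_nonneg_right h8 h10
        linarith
  -- total
  have hPsum : ∑ p ∈ P, F p.1 = ∑ w ∈ H, (dg G U w : ℚ) * F w := by
    rw [hP, sum_filter, sum_product]
    refine sum_congr rfl fun w hw => ?_
    rw [← sum_filter]
    show ∑ a ∈ U.filter (fun a => G.Adj w a), F w = _
    rw [sum_const, nsmul_eq_mul]
    rfl
  have hAsum : ∑ x ∈ L, ∑ p ∈ A x, F p.1 ≤ ∑ p ∈ P, F p.1 := by
    rw [← sum_biUnion (fun x hx y hy hxy => hdisj x hx y hy hxy)]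
    refine sum_le_sum_of_subset_of_nonneg (biUnion_subset.2 hAP) fun p hp _ => ?_
    have h1 := (mem_product.1 (mem_filter.1 hp).1).1
    have := F1 _ h1
    linarith
  have hUsum : ∀ g : V → ℚ, ∑ v ∈ U, g v = ∑ v ∈ L, g v + ∑ v ∈ B, g v + ∑ v ∈ H, g v := by
    intro g
    have d1 : Disjoint L B := by
      rw [Finset.disjoint_left]; intro v h1 h2
      have := (mL.1 h1).2; have := (mB.1 h2).2; omega
    have d2 : Disjoint (L ∪ B) H := by
      rw [Finset.disjoint_left]; intro v h1 h2
      have h3 := (mH.1 h2).2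
      rcases mem_union.1 h1 with h | h
      · have := (mL.1 h).2; omega
      · have := (mB.1 h).2; omega
    rw [← sum_union d1, ← sum_union d2]
    congr 1
    ext v
    rw [mem_union, mem_union, mL, mB, mH]
    constructor
    · intro hv
      have := M.deg hv
      by_cases h1 : dg G U v = k - 1
      · exact Or.inl (Or.inl ⟨hv, h1⟩)
      by_cases h2 : dg G U v = k
      · exact Or.inl (Or.inr ⟨hv, h2⟩)
      · exact Or.inr ⟨hv, by omega⟩
    · tauto
  have hrho : ((rho k G U : ℤ) : ℚ) = ∑ v ∈ U, (((k : ℚ) + 1) * ((k : ℚ) - 2) - ((k : ℚ) - 1) * dg G U v) := by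
    unfold rho
    rw [ee_eq_sum, sum_sub_distrib, sum_const, ← mul_sum, nsmul_eq_mul]
    push_cast
    unfold dg
    ring
  rw [hUsum] at hrho
  have s1 : ∑ v ∈ L, (((k : ℚ) + 1) * ((k : ℚ) - 2) - ((k : ℚ) - 1) * dg G U v) = ∑ v ∈ L, ((k : ℚ) - 3) := by
    refine sum_congr rfl fun v hv => ?_
    rw [(mL.1 hv).2, Nat.cast_sub (by omega)]
    push_cast; ring
  have s2 : ∑ v ∈ B, (((k : ℚ) + 1) * ((k : ℚ) - 2) - ((k : ℚ) - 1) * dg G U v) = -2 * B.card := by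
    rw [sum_congr rfl (g := fun _ => (-2 : ℚ)) (fun v hv => by rw [(mB.1 hv).2]; ring), sum_const,
      nsmul_eq_mul]; ring
  have s3 : ∑ v ∈ H, (((k : ℚ) + 1) * ((k : ℚ) - 2) - ((k : ℚ) - 1) * dg G U v) =
      - ∑ w ∈ H, (dg G U w : ℚ) * F w := by
    rw [← sum_neg_distrib]
    refine sum_congr rfl fun v hv => ?_
    simp only [hF]
    rw [fw_mul (by have := (mH.1 hv).2; omega)]; ring
  rw [s1, s2, s3, ← hPsum] at hrho
  have s4 := sum_le_sum hsumA
  have s4b : ∑ x ∈ L, ((k : ℚ) - 3 - ∑ p ∈ A x, F p.1) =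
      ∑ x ∈ L, ((k : ℚ) - 3) - ∑ x ∈ L, ∑ p ∈ A x, F p.1 := sum_sub_distrib ..
  have hNL : N ⊆ L := filter_subset _ _
  have s4c : ∑ x ∈ L, (if x ∈ N then ((nb G B x).card : ℚ) - 2 else 0) =
      ∑ x ∈ N, ((nb G B x).card : ℚ) - 2 * N.card := by
    have e1 : L.filter (fun x => x ∈ N) = N := by
      ext x
      exact ⟨fun h => (mem_filter.1 h).2, fun h => mem_filter.2 ⟨hNL h, h⟩⟩
    rw [← sum_filter, e1, sum_sub_distrib, sum_const, nsmul_eq_mul]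
    ring
  rw [s4b, s4c] at s4
  have s5 := M.kernel (A := N) (B := B) (((filter_subset _ _).trans (filter_subset _ _)))
    (filter_subset _ _) (by
      rw [Finset.disjoint_left]; intro v h1 h2
      have := (mL.1 (mem_filter.1 h1).1).2; have := (mB.1 h2).2; omega) (by
      intro u hu v hv huv
      have h1 := mL.1 (mem_filter.1 hv).1
      have := hNno u hu v (mem_nb.2 ⟨h1.1, huv⟩)
      omega) (fun a ha => (mL.1 (mem_filter.1 ha).1).2) (fun b hb => (mB.1 hb).2)
  rw [ee_eq_sum] at s5
  have s5' : ∑ v ∈ N, ((nb G B v).card : ℚ) ≤ N.card + 2 * B.card := by exact_mod_cast s5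
  have s6 : (0 : ℚ) ≤ N.card := by positivity
  have s7 : ((rho k G U : ℤ) : ℚ) ≤ 0 := by linarith
  have s8 : rho k G U ≤ 0 := by exact_mod_cast s7
  have hkz := M.kz
  refine M.good' (Finset.Subset.refl U) M.ne ?_
  nlinarith

theorem main (k : ℕ) (hk : 4 ≤ k) (G : SimpleGraph V) (U : Finset V) (hg : Good k G U) : Col k G U := by
  by_contra hc
  obtain ⟨G', U', M⟩ := exists_minCE k hk G U hg hc
  exact M.final

end KY


end KYmain

namespace KY

lemma two_edges {W : Type*} [Fintype W] [DecidableEq W] (G : SimpleGraph W) [DecidableRel G.Adj] (S : Finset W) :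
    2 * ((G.induce (S : Set W)).edgeFinset.card : ℤ) = ee G S S := by
  classical
  have h := (G.induce (S : Set W)).sum_degrees_eq_twice_card_edges
  have h' : ((∑ v : (S : Set W), (G.induce (S : Set W)).degree v : ℕ) : ℤ) =
      2 * ((G.induce (S : Set W)).edgeFinset.card : ℤ) := by exact_mod_cast h
  rw [← h', ee_eq_sum, Nat.cast_sum]
  rw [← Finset.sum_coe_sort S]
  refine Finset.sum_congr rfl fun v _ => ?_
  congr 1
  rw [← SimpleGraph.card_neighborFinset_eq_degree]
  refine Finset.card_bij (fun a _ => a.1) ?_ ?_ ?_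
  · intro a ha
    rw [SimpleGraph.mem_neighborFinset] at ha
    exact mem_nb.2 ⟨a.2, ha⟩
  · intro a _ b _ e
    exact Subtype.ext e
  · intro b hb
    obtain ⟨h1, h2⟩ := mem_nb.1 hb
    refine ⟨⟨b, h1⟩, ?_, rfl⟩
    rw [SimpleGraph.mem_neighborFinset]
    exact h2

lemma potential_eq_rho {W : Type*} [Fintype W] [DecidableEq W] (k : ℕ) (G : SimpleGraph W) [DecidableRel G.Adj]
    (S : Finset W) : potential k G S = rho k G S := by
  unfold potential rho
  rw [← two_edges]
  ring

end KY


/-- **Corollary.** Let `k ≥ 4` and let `G` be a graph with `ρ_{k,G}(S) > k(k-3)` for all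
nonempty `S ⊆ V(G)`. Then `G` is `(k-1)`-colorable. -/
theorem colorable_of_high_potential {V : Type*} [Fintype V] [DecidableEq V] (k : ℕ)
    (hk : 4 ≤ k) (G : SimpleGraph V) [DecidableRel G.Adj]
    (hpot : ∀ S : Finset V, S.Nonempty → (k : ℤ) * ((k : ℤ) - 3) < potential k G S) :
    G.Colorable (k - 1) := by
  have hg : KY.Good k G Finset.univ := fun S _ hS => by
    rw [← KY.potential_eq_rho]
    exact hpot S hS
  obtain ⟨c, hc⟩ := KY.main k hk G Finset.univ hg
  exact ⟨SimpleGraph.Coloring.mk c (fun {u v} h => hc u (Finset.mem_univ _) v (Finset.mem_univ _) h)⟩
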